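/- arXiv:2302.00708 — 3 statements merged into one kernel-verified Lean document; each statement's English description precedes it below -/
import Mathlib

section
/- For every natural number n and every B in {3, 9, 18, 39}, the number of 400-regular partitions satisfies b_400(1125n + 25B − 26) ≡ p_9(45n + B) (mod 2). -/
/-- The number of `m`-regular partitions of `n`, i.e. partitions of `n`
in which no part is divisible by `m`. -/
noncomputable def numRegularPartitions (m n : ℕ) : ℕ :=
  Nat.card {π : n.Partition // ∀ j ∈ π.parts, ¬ m ∣ j}

/-- The number of `t`-multipartitions of `n`, i.e. `t`-tuples of partitions
whose sizes sum to `n`. -/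
noncomputable def numMultipartitions (t n : ℕ) : ℕ :=
  Nat.card {f : Fin t → Σ k : ℕ, k.Partition // (∑ i, (f i).1) = n}

open PowerSeries Filter

/-- Coefficientwise eventual convergence of a sequence of power series. -/
def Lim {R : Type*} [CommRing R] (u : ℕ → PowerSeries R) (f : PowerSeries R) : Prop :=
  ∀ n, ∀ᶠ m in atTop, coeff n (u m) = coeff n f

section limits
variable {R : Type*} [CommRing R]

theorem Lim.unique {u : ℕ → PowerSeries R} {f g : PowerSeries R} (hf : Lim u f) (hg : Lim u g) :
    f = g := by
  ext n
  obtain ⟨m, h1, h2⟩ := ((hf n).and (hg n)).exists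
  rw [← h1, h2]

theorem Lim.mul {u v : ℕ → PowerSeries R} {f g : PowerSeries R} (hf : Lim u f) (hg : Lim v g) :
    Lim (fun m => u m * v m) (f * g) := by
  intro n
  have h1 : ∀ᶠ m in atTop, ∀ i ∈ Finset.range (n + 1), coeff i (u m) = coeff i f :=
    (Filter.eventually_all_finset _).2 fun i _ => hf i
  have h2 : ∀ᶠ m in atTop, ∀ i ∈ Finset.range (n + 1), coeff i (v m) = coeff i g :=
    (Filter.eventually_all_finset _).2 fun i _ => hg i
  filter_upwards [h1, h2] with m h1 h2
  rw [coeff_mul, coeff_mul]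
  refine Finset.sum_congr rfl fun p hp => ?_
  have := Finset.HasAntidiagonal.mem_antidiagonal.1 hp
  rw [h1 _ (by simp; omega), h2 _ (by simp; omega)]

theorem Lim.add {u v : ℕ → PowerSeries R} {f g : PowerSeries R} (hf : Lim u f) (hg : Lim v g) :
    Lim (fun m => u m + v m) (f + g) := by
  intro n
  filter_upwards [hf n, hg n] with m h1 h2
  simp [h1, h2]

theorem Lim.one : Lim (fun _ => (1 : PowerSeries R)) 1 := fun n => by simp

theorem Lim.pow {u : ℕ → PowerSeries R} {f : PowerSeries R} (hf : Lim u f) (k : ℕ) :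
    Lim (fun m => u m ^ k) (f ^ k) := by
  induction k with
  | zero => simpa using Lim.one
  | succ k ih => simpa only [pow_succ] using ih.mul hf

theorem Lim.comp {u : ℕ → PowerSeries R} {f : PowerSeries R} (hf : Lim u f) {φ : ℕ → ℕ}
    (hφ : Tendsto φ atTop atTop) : Lim (fun m => u (φ m)) f := fun n => hφ.eventually (hf n)

theorem Lim.expand {u : ℕ → PowerSeries R} {f : PowerSeries R} (hf : Lim u f) (p : ℕ)
    (hp : p ≠ 0) : Lim (fun m => PowerSeries.expand p hp (u m)) (PowerSeries.expand p hp f) := by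
  intro n
  filter_upwards [hf (n / p)] with m h
  simp [coeff_expand, h]

theorem Lim.rescale {u : ℕ → PowerSeries R} {f : PowerSeries R} (hf : Lim u f) (a : R) :
    Lim (fun m => PowerSeries.rescale a (u m)) (PowerSeries.rescale a f) := by
  intro n
  filter_upwards [hf n] with m h
  simp [coeff_rescale, h]

/-- finite Euler product -/
noncomputable def eul (R : Type*) [CommRing R] (m : ℕ) : PowerSeries R :=
  ∏ n ∈ Finset.range m, (1 - X ^ (n + 1))

theorem lim_eul : Lim (eul R) (pentagonalSeries R) := fun n =>
  Filter.tendsto_finset_range.eventually (coeff_prod_one_sub_X_pow_eventually_eq R n)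

theorem shanks (x : R) (n : ℕ) :
    (∏ k ∈ Finset.range n, (1 - x ^ (2 * k + 1))) *
      ∑ s ∈ Finset.range (2 * n), x ^ (s * (s + 1) / 2) =
    ∑ s ∈ Finset.range n, (∏ k ∈ Finset.Ico s n, (1 - x ^ (2 * k + 2))) *
      (∏ k ∈ Finset.range s, (1 - x ^ (2 * k + 1))) * x ^ (s * (2 * n + 1)) := by
  induction n with
  | zero => simp
  | succ n ih =>
    have tel : ∀ m ≤ n, (1 - x ^ (2 * n + 1)) * ∑ s ∈ Finset.range m,
        (∏ k ∈ Finset.Ico s n, (1 - x ^ (2 * k + 2))) *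
          (∏ k ∈ Finset.range s, (1 - x ^ (2 * k + 1))) * x ^ (s * (2 * n + 1)) +
        (∏ k ∈ Finset.Ico m n, (1 - x ^ (2 * k + 2))) *
          (∏ k ∈ Finset.range m, (1 - x ^ (2 * k + 1))) * x ^ (m * (2 * n + 1)) * (1 - x ^ (2 * m))
        = ∑ s ∈ Finset.range m, (∏ k ∈ Finset.Ico s (n + 1), (1 - x ^ (2 * k + 2))) *
      (∏ k ∈ Finset.range s, (1 - x ^ (2 * k + 1))) * x ^ (s * (2 * (n + 1) + 1)) := by
      intro m hm
      induction m with
      | zero => simp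
      | succ m ihm =>
        rw [Finset.sum_range_succ, Finset.sum_range_succ, ← ihm (by omega),
          Finset.prod_range_succ, Finset.prod_Ico_succ_top (by omega : m ≤ n),
          Finset.prod_eq_prod_Ico_succ_bot (by omega : m < n)]
        ring
    rw [Finset.sum_range_succ, ← tel n le_rfl, ← ih, Finset.prod_range_succ,
      show 2 * (n + 1) = 2 * n + 1 + 1 by ring, Finset.sum_range_succ, Finset.sum_range_succ]
    have e1 : 2 * n * (2 * n + 1) / 2 = n * (2 * n + 1) := by
      rw [mul_assoc]; exact Nat.mul_div_cancel_left _ (by norm_num)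
    have e2 : (2 * n + 1) * (2 * n + 1 + 1) / 2 = (2 * n + 1) * (n + 1) := by
      rw [show (2 * n + 1) * (2 * n + 1 + 1) = 2 * ((2 * n + 1) * (n + 1)) by ring]
      exact Nat.mul_div_cancel_left _ (by norm_num)
    rw [e1, e2]
    simp
    ring

theorem eul_two_mul (n : ℕ) : eul R (2 * n) =
    (∏ k ∈ Finset.range n, (1 - X ^ (2 * k + 1))) * ∏ k ∈ Finset.range n, (1 - X ^ (2 * k + 2)) := by
  unfold eul
  induction n with
  | zero => simp
  | succ n ih =>
    rw [show 2 * (n + 1) = 2 * n + 1 + 1 by ring, Finset.prod_range_succ, Finset.prod_range_succ,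
      ih, Finset.prod_range_succ, Finset.prod_range_succ]
    ring

/-- sum of `X` to triangular exponents -/
noncomputable def tri (R : Type*) [CommRing R] : PowerSeries R :=
  PowerSeries.mk fun m => ∑ s ∈ Finset.range (m + 1), if m = s * (s + 1) / 2 then 1 else 0

theorem lim_tri : Lim (fun m => ∑ s ∈ Finset.range m, (X : PowerSeries R) ^ (s * (s + 1) / 2))
    (tri R) := by
  intro n
  filter_upwards [eventually_ge_atTop (n + 1)] with m hm
  simp only [map_sum, coeff_X_pow, tri, coeff_mk]
  symm
  apply Finset.sum_subset
  · intro i; simp; omega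
  · intro i _ hi
    rw [if_neg]
    simp at hi
    have : i ≤ i * (i + 1) / 2 := by
      rw [Nat.le_div_iff_mul_le (by norm_num)]
      exact Nat.mul_le_mul_left _ (by omega)
    omega

end limits

instance : CharP (PowerSeries (ZMod 2)) 2 := by
  refine charP_of_injective_ringHom (f := (C : ZMod 2 →+* PowerSeries (ZMod 2))) C_injective 2

theorem two_eq_zero' : (2 : PowerSeries (ZMod 2)) = 0 := by
  exact_mod_cast CharP.cast_eq_zero (PowerSeries (ZMod 2)) 2

/-- Euler product over `ZMod 2` -/
noncomputable def F : PowerSeries (ZMod 2) := pentagonalSeries (ZMod 2)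

theorem F_ne : F ≠ 0 := by
  intro h
  have := coeff_pentagonalSeries_pentagonal (ZMod 2) 0
  rw [show pentagonalSeries (ZMod 2) = F from rfl, h] at this
  simp at this

theorem F_cube : F ^ 3 = tri (ZMod 2) := by
  have h1 : Lim (fun n => eul (ZMod 2) (2 * n) *
      ∑ s ∈ Finset.range (2 * n), X ^ (s * (s + 1) / 2)) (F * tri (ZMod 2)) :=
    (lim_eul.mul lim_tri).comp (φ := fun n => 2 * n)
      (tendsto_id.const_mul_atTop' (by norm_num))
  have h2 : Lim (fun n => eul (ZMod 2) n ^ 4) (F ^ 4) := lim_eul.pow 4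
  have h3 : Lim (fun n => eul (ZMod 2) (2 * n) *
      ∑ s ∈ Finset.range (2 * n), X ^ (s * (s + 1) / 2)) (F ^ 4) := by
    intro m
    filter_upwards [h2 m, eventually_ge_atTop (m + 1)] with n hn hm
    rw [← hn, eul_two_mul, mul_right_comm, shanks]
    obtain ⟨n, rfl⟩ : ∃ k, n = k + 1 := ⟨n - 1, by omega⟩
    have hD : ∏ k ∈ Finset.range (n + 1), (1 - X ^ (2 * k + 2)) = eul (ZMod 2) (n + 1) ^ 2 := by
      rw [eul, ← Finset.prod_pow]
      refine Finset.prod_congr rfl fun k _ => ?_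
      linear_combination (X ^ (k + 1) - X ^ (2 * k + 2)) * two_eq_zero'
    rw [Finset.sum_range_succ', hD, ← Finset.range_eq_Ico, hD]
    have : X ^ (m + 1) ∣ (∑ s ∈ Finset.range n, (∏ k ∈ Finset.Ico (s + 1) (n + 1),
        (1 - (X : PowerSeries (ZMod 2)) ^ (2 * k + 2))) *
      (∏ k ∈ Finset.range (s + 1), (1 - X ^ (2 * k + 1))) * X ^ ((s + 1) * (2 * (n + 1) + 1))) := by
      refine Finset.dvd_sum fun s _ => Dvd.dvd.mul_left (pow_dvd_pow _ ?_) _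
      nlinarith
    obtain ⟨J, hJ⟩ := this
    rw [hJ]
    have e : (X ^ (m + 1) * J + eul (ZMod 2) (n + 1) ^ 2 * (∏ k ∈ Finset.range 0, (1 - X ^ (2 * k + 1)))
      * X ^ (0 * (2 * (n + 1) + 1))) * eul (ZMod 2) (n + 1) ^ 2
      = X ^ (m + 1) * (J * eul (ZMod 2) (n + 1) ^ 2) + eul (ZMod 2) (n + 1) ^ 4 := by
      simp; ring
    rw [e, map_add, X_pow_dvd_iff.1 (Dvd.intro _ rfl) m (by omega), zero_add]
  have := h1.unique h3
  apply mul_left_cancel₀ F_ne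
  rw [this]; ring

theorem sq_eq_expand (g : PowerSeries (ZMod 2)) : g ^ 2 = PowerSeries.expand 2 two_ne_zero g := by
  have h := MvPowerSeries.map_frobenius_expand (R := ZMod 2) 2 two_ne_zero (f := g)
  rw [ZMod.frobenius_zmod] at h
  rw [← h]
  ext n
  simp [PowerSeries.expand]

theorem coeff_F3 {n : ℕ} (h : coeff n (F ^ 3) ≠ 0) : ∃ s, 2 * n = s * (s + 1) := by
  rw [F_cube, tri, coeff_mk] at h
  obtain ⟨s, _, hs⟩ := Finset.exists_ne_zero_of_sum_ne_zero h
  refine ⟨s, ?_⟩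
  have : n = s * (s + 1) / 2 := by
    by_contra hne
    exact hs (if_neg hne)
  rw [this]
  exact Nat.mul_div_cancel' (Nat.even_mul_succ_self s).two_dvd

/-- extraction of coefficients in residue class `r` mod 5 -/
noncomputable def U (r : ℕ) (g : PowerSeries (ZMod 2)) : PowerSeries (ZMod 2) :=
  PowerSeries.mk fun n => coeff (5 * n + r) g

/-- the substitution `X ↦ X^5` -/
noncomputable def E : PowerSeries (ZMod 2) →ₐ[ZMod 2] PowerSeries (ZMod 2) :=
  PowerSeries.expand 5 (by norm_num)

theorem coeff_E_mul (g : PowerSeries (ZMod 2)) (n : ℕ) : coeff (5 * n) (E g) = coeff n g :=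
  coeff_expand_mul _ _ _ _

theorem coeff_E_ne (g : PowerSeries (ZMod 2)) {n : ℕ} (h : ¬ 5 ∣ n) : coeff n (E g) = 0 :=
  coeff_expand_of_not_dvd _ _ _ h

theorem E_X : E X = X ^ 5 := expand_X _ _

theorem E_inj : Function.Injective E := by
  intro f g h
  ext n
  rw [← coeff_E_mul, h, coeff_E_mul]

theorem U_add (r : ℕ) (f g) : U r (f + g) = U r f + U r g := by
  ext n; simp [U]

theorem U_X_E {i r : ℕ} (hi : i < 5) (hr : r < 5) (g) :
    U r (X ^ i * E g) = if i = r then g else 0 := by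
  ext n
  simp only [U, coeff_mk, coeff_X_pow_mul']
  split_ifs with h1 h2 h2
  · subst h2; simp [coeff_E_mul]
  · rw [coeff_E_ne _ (by omega)]; simp
  · omega
  · simp

theorem U_of {r : ℕ} (hr : r < 5) (g0 g1 g2 g3 g4 : PowerSeries (ZMod 2)) :
    U r (E g0 + X * E g1 + X ^ 2 * E g2 + X ^ 3 * E g3 + X ^ 4 * E g4) =
      if r = 0 then g0 else if r = 1 then g1 else if r = 2 then g2 else if r = 3 then g3 else g4 := by
  have h0 := U_X_E (i := 0) (by norm_num) hr g0
  have h1 := U_X_E (i := 1) (by norm_num) hr g1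
  rw [pow_zero, one_mul] at h0
  rw [pow_one] at h1
  simp only [U_add, h0, h1, U_X_E (i := 2) (by norm_num) hr, U_X_E (i := 3) (by norm_num) hr,
    U_X_E (i := 4) (by norm_num) hr]
  interval_cases r <;> simp

theorem eq_U (g : PowerSeries (ZMod 2)) :
    g = E (U 0 g) + X * E (U 1 g) + X ^ 2 * E (U 2 g) + X ^ 3 * E (U 3 g) + X ^ 4 * E (U 4 g) := by
  set h := E (U 0 g) + X * E (U 1 g) + X ^ 2 * E (U 2 g) + X ^ 3 * E (U 3 g) + X ^ 4 * E (U 4 g)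
    with hh
  have key : ∀ r < 5, U r h = U r g := by
    intro r hr
    rw [hh, U_of hr]
    interval_cases r <;> simp
  ext n
  have := congrArg (coeff (n / 5)) (key (n % 5) (Nat.mod_lt _ (by norm_num)))
  simp only [U, coeff_mk, Nat.div_add_mod] at this
  exact this.symm

theorem U_E_mul {r : ℕ} (hr : r < 5) (f g : PowerSeries (ZMod 2)) :
    U r (E f * g) = f * U r g := by
  conv_lhs => rw [eq_U g]
  have : E f * (E (U 0 g) + X * E (U 1 g) + X ^ 2 * E (U 2 g) + X ^ 3 * E (U 3 g)
      + X ^ 4 * E (U 4 g)) = E (f * U 0 g) + X * E (f * U 1 g) + X ^ 2 * E (f * U 2 g)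
      + X ^ 3 * E (f * U 3 g) + X ^ 4 * E (f * U 4 g) := by
    simp only [map_mul]; ring
  rw [this, U_of hr]
  interval_cases r <;> simp

theorem U_zero_X_mul (g : PowerSeries (ZMod 2)) : U 0 (X * g) = X * U 4 g := by
  conv_lhs => rw [eq_U g]
  have : X * (E (U 0 g) + X * E (U 1 g) + X ^ 2 * E (U 2 g) + X ^ 3 * E (U 3 g)
      + X ^ 4 * E (U 4 g)) = E (X * U 4 g) + X * E (U 0 g) + X ^ 2 * E (U 1 g)
      + X ^ 3 * E (U 2 g) + X ^ 4 * E (U 3 g) := by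
    simp only [map_mul, E_X]; ring
  rw [this, U_of (by norm_num)]
  simp

theorem coeff_F (n : ℕ) [Decidable (∃ k : ℤ, 2 * (n : ℤ) = k * (3 * k - 1))] :
    coeff n F = if ∃ k : ℤ, 2 * (n : ℤ) = k * (3 * k - 1) then 1 else 0 := by
  split_ifs with h
  · obtain ⟨k, hk⟩ := h
    have : n = pentagonal k := by
      have := two_mul_natCast_pentagonal k
      omega
    rw [this, F, coeff_pentagonalSeries_pentagonal]
    rcases Int.even_or_odd k with h | h
    · simp [Int.negOnePow_even k h]
    · simp [Int.negOnePow_odd k h]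
  · apply coeff_pentagonalSeries_eq_zero
    rintro ⟨k, rfl⟩
    exact h ⟨k, two_mul_natCast_pentagonal k⟩

theorem F_const : constantCoeff F = 1 := by
  classical
  rw [← coeff_zero_eq_constantCoeff_apply, coeff_F, if_pos ⟨0, by simp⟩]

theorem mod5 (k : ℤ) : ∃ j : ℤ, k = 5 * j ∨ k = 5 * j + 1 ∨ k = 5 * j + 2 ∨ k = 5 * j + 3 ∨
    k = 5 * j + 4 := ⟨k / 5, by omega⟩

theorem U3F : U 3 F = 0 := by
  classical
  ext n
  simp only [U, coeff_mk, map_zero]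
  rw [coeff_F, if_neg]
  rintro ⟨k, hk⟩
  push_cast at hk
  obtain ⟨j, rfl | rfl | rfl | rfl | rfl⟩ := mod5 k <;> ring_nf at hk <;> omega

theorem U4F : U 4 F = 0 := by
  classical
  ext n
  simp only [U, coeff_mk, map_zero]
  rw [coeff_F, if_neg]
  rintro ⟨k, hk⟩
  push_cast at hk
  obtain ⟨j, rfl | rfl | rfl | rfl | rfl⟩ := mod5 k <;> ring_nf at hk <;> omega

theorem U1F : U 1 F = E F := by
  classical
  ext n
  simp only [U, coeff_mk]
  rw [coeff_F]
  split_ifs with h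
  · obtain ⟨k, hk⟩ := h
    push_cast at hk
    obtain ⟨j, rfl | rfl | rfl | rfl | rfl⟩ := mod5 k
    · ring_nf at hk; omega
    · obtain ⟨m, rfl⟩ : 5 ∣ n := by ring_nf at hk; omega
      rw [coeff_E_mul, coeff_F, if_pos]
      refine ⟨-j, ?_⟩
      push_cast at hk
      linarith
    · ring_nf at hk; omega
    · ring_nf at hk; omega
    · ring_nf at hk; omega
  · by_cases h5 : 5 ∣ n
    · obtain ⟨m, rfl⟩ := h5
      rw [coeff_E_mul, coeff_F, if_neg]
      rintro ⟨k, hk⟩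
      refine h ⟨5 * (-k) + 1, ?_⟩
      push_cast
      linarith
    · rw [coeff_E_ne _ h5]

/-- the even-index components of `F` -/
noncomputable def A : PowerSeries (ZMod 2) := U 0 F
/-- second component -/
noncomputable def B2 : PowerSeries (ZMod 2) := U 2 F

theorem F_dissect : F = E A + X * E (E F) + X ^ 2 * E B2 := by
  conv_lhs => rw [eq_U F, U3F, U4F, U1F]
  simp [A, B2]

theorem A_ne : A ≠ 0 := by
  intro h
  have := congrArg constantCoeff F_dissect
  rw [h, F_const] at this
  simp at this

theorem AB : A * B2 = (E F) ^ 2 := by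
  have h : U 2 (F ^ 3) = 0 := by
    ext n
    simp only [U, coeff_mk, map_zero]
    by_contra hne
    obtain ⟨s, hs⟩ := coeff_F3 hne
    obtain ⟨j, hj⟩ : ∃ j, s = 5 * j ∨ s = 5 * j + 1 ∨ s = 5 * j + 2 ∨ s = 5 * j + 3 ∨
      s = 5 * j + 4 := ⟨s / 5, by omega⟩
    rcases hj with rfl | rfl | rfl | rfl | rfl <;> ring_nf at hs <;> omega
  have e : F ^ 3 = E (A ^ 3 + 3 * X * E F * B2 ^ 2) + X * E (3 * A ^ 2 * E F + X * B2 ^ 3)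
      + X ^ 2 * E (3 * A ^ 2 * B2 + 3 * A * (E F) ^ 2) + X ^ 3 * E ((E F) ^ 3 + 6 * A * B2 * E F)
      + X ^ 4 * E (3 * A * B2 ^ 2 + 3 * (E F) ^ 2 * B2) := by
    conv_lhs => rw [F_dissect]
    simp only [map_add, map_mul, map_pow, E_X, map_ofNat]
    ring
  rw [e, U_of (by norm_num)] at h
  simp only [if_pos, OfNat.ofNat_ne_zero, OfNat.ofNat_ne_one, if_false] at h
  apply mul_left_cancel₀ A_ne
  linear_combination h - (A ^ 2 * B2 + 2 * A * E F ^ 2) * two_eq_zero'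

theorem norm_alg {S : Type*} [CommRing S] (z a b c : S) (hz : z ^ 4 + z ^ 3 + z ^ 2 + z + 1 = 0)
    (hab : a * b = c ^ 2) :
    (a + c + b) * (a + z * c + z ^ 2 * b) * (a + z ^ 2 * c + z ^ 4 * b) *
      (a + z ^ 3 * c + z ^ 6 * b) * (a + z ^ 4 * c + z ^ 8 * b) = a ^ 5 + c ^ 5 + b ^ 5 := by
  have h5 : z ^ 5 = 1 := by linear_combination (z - 1) * hz
  obtain ⟨w, hw⟩ : ∃ w, w = z + z ^ 4 := ⟨_, rfl⟩
  obtain ⟨v, hv⟩ : ∃ v, v = z ^ 2 + z ^ 3 := ⟨_, rfl⟩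
  have e1 : (a + z * c + z ^ 2 * b) * (a + z ^ 4 * c + z ^ 8 * b) =
      a ^ 2 + c ^ 2 + b ^ 2 + w * (c * (a + b)) + v * (a * b) := by
    rw [hw, hv]
    linear_combination (a * b * z ^ 3 + c ^ 2 + z ^ 4 * c * b + z * b * c + (z ^ 5 + 1) * b ^ 2) * h5
  have e2 : (a + z ^ 2 * c + z ^ 4 * b) * (a + z ^ 3 * c + z ^ 6 * b) =
      a ^ 2 + c ^ 2 + b ^ 2 + v * (c * (a + b)) + w * (a * b) := by
    rw [hw, hv]
    linear_combination (a * b * z + c ^ 2 + z ^ 3 * c * b + z ^ 2 * b * c + (z ^ 5 + 1) * b ^ 2) * h5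
  have hs : v = -1 - w := by rw [hw, hv]; linear_combination hz
  have hp : w ^ 2 = 1 - w := by rw [hw]; linear_combination (z ^ 3 + 2) * h5 + hz
  have e3 : (a ^ 2 + c ^ 2 + b ^ 2 + w * (c * (a + b)) + v * (a * b)) *
      (a ^ 2 + c ^ 2 + b ^ 2 + v * (c * (a + b)) + w * (a * b)) =
      (a ^ 2 + c ^ 2 + b ^ 2) ^ 2 - (a ^ 2 + c ^ 2 + b ^ 2) * (c * (a + b) + a * b) -
      (c * (a + b)) ^ 2 - (a * b) ^ 2 + 3 * (c * (a + b)) * (a * b) := by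
    rw [hs]
    linear_combination (2 * (c * (a + b)) * (a * b) - (c * (a + b)) ^ 2 - (a * b) ^ 2) * hp
  calc _ = (a + c + b) * (((a + z * c + z ^ 2 * b) * (a + z ^ 4 * c + z ^ 8 * b)) *
      ((a + z ^ 2 * c + z ^ 4 * b) * (a + z ^ 3 * c + z ^ 6 * b))) := by ring
    _ = _ := by
      rw [e1, e2, e3]
      linear_combination (5 * a * b * c) * hab

theorem fac_alg {S : Type*} [CommRing S] (z x : S) (hz : z ^ 4 + z ^ 3 + z ^ 2 + z + 1 = 0) :
    (1 - x) * (1 - z * x) * (1 - z ^ 2 * x) * (1 - z ^ 3 * x) * (1 - z ^ 4 * x) = 1 - x ^ 5 := by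
  have h5 : z ^ 5 = 1 := by linear_combination (z - 1) * hz
  have e1 : (1 - z * x) * (1 - z ^ 4 * x) = 1 - (z + z ^ 4) * x + x ^ 2 := by
    linear_combination x ^ 2 * h5
  have e2 : (1 - z ^ 2 * x) * (1 - z ^ 3 * x) = 1 + (1 + z + z ^ 4) * x + x ^ 2 := by
    linear_combination x ^ 2 * h5 - x * hz
  have hp : (z + z ^ 4) ^ 2 = 1 - (z + z ^ 4) := by linear_combination (z ^ 3 + 2) * h5 + hz
  calc _ = (1 - x) * (((1 - z * x) * (1 - z ^ 4 * x)) * ((1 - z ^ 2 * x) * (1 - z ^ 3 * x))) := by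
        ring
    _ = _ := by
      rw [e1, e2]
      linear_combination (-(1 - x) * x ^ 2) * hp

section
variable {K : Type*} [CommRing K]

theorem phi_pow {z : K} (hz : z ^ 4 + z ^ 3 + z ^ 2 + z + 1 = 0) {r : ℕ} (hr : r < 5)
    (hr0 : r ≠ 0) :
    (z ^ r) ^ 4 + (z ^ r) ^ 3 + (z ^ r) ^ 2 + z ^ r + 1 = 0 := by
  have h5 : z ^ 5 = 1 := by linear_combination (z - 1) * hz
  interval_cases r
  · exact absurd rfl hr0
  · linear_combination hz
  · linear_combination (z ^ 3 + z) * h5 + hz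
  · linear_combination (z ^ 7 + z ^ 2 + z ^ 4 + z) * h5 + hz
  · linear_combination (z ^ 11 + z ^ 6 + z + z ^ 7 + z ^ 2 + z ^ 3) * h5 + hz

/-- product of the five conjugates -/
noncomputable def conj5 (z : K) (g : PowerSeries K) : PowerSeries K :=
  g * rescale z g * rescale (z ^ 2) g * rescale (z ^ 3) g * rescale (z ^ 4) g

theorem conj5_mul (z : K) (f g : PowerSeries K) : conj5 z (f * g) = conj5 z f * conj5 z g := by
  simp only [conj5, map_mul]; ring

theorem conj5_fac (z : K) (n : ℕ) : conj5 z (1 - X ^ n) =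
    (1 - X ^ n) * (1 - (C z) ^ n * X ^ n) * (1 - ((C z) ^ n) ^ 2 * X ^ n) *
      (1 - ((C z) ^ n) ^ 3 * X ^ n) * (1 - ((C z) ^ n) ^ 4 * X ^ n) := by
  simp only [conj5, map_sub, map_one, map_pow, rescale_X, mul_pow]
  ring

theorem conj5_fac_ne {z : K} (hz : z ^ 4 + z ^ 3 + z ^ 2 + z + 1 = 0) {n : ℕ} (hn : ¬ 5 ∣ n) :
    conj5 z (1 - X ^ n) = 1 - X ^ (5 * n) := by
  have h5 : z ^ 5 = 1 := by linear_combination (z - 1) * hz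
  have e : z ^ n = z ^ (n % 5) := by
    conv_lhs => rw [← Nat.div_add_mod n 5, pow_add, pow_mul, h5, one_pow, one_mul]
  have h := phi_pow hz (r := n % 5) (Nat.mod_lt _ (by norm_num)) (by omega)
  rw [← e] at h
  have h' := congrArg (C : K →+* PowerSeries K) h
  simp only [map_add, map_pow, map_one, map_zero] at h'
  rw [conj5_fac, fac_alg _ _ h', ← pow_mul, mul_comm]

theorem conj5_fac_eq {z : K} (hz : z ^ 4 + z ^ 3 + z ^ 2 + z + 1 = 0) {n : ℕ} (hn : 5 ∣ n) :
    conj5 z (1 - X ^ n) = (1 - X ^ n) ^ 5 := by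
  have h5 : z ^ 5 = 1 := by linear_combination (z - 1) * hz
  obtain ⟨m, rfl⟩ := hn
  have e : (C z : PowerSeries K) ^ (5 * m) = 1 := by
    rw [← map_pow, pow_mul, h5, one_pow, map_one]
  rw [conj5_fac, e]
  ring

theorem conj5_eul {z : K} (hz : z ^ 4 + z ^ 3 + z ^ 2 + z + 1 = 0) (N : ℕ) :
    conj5 z (eul K (5 * N)) * (PowerSeries.expand 5 (by norm_num)
      (PowerSeries.expand 5 (by norm_num) (eul K N))) =
    PowerSeries.expand 5 (by norm_num) (eul K (5 * N)) *
      (PowerSeries.expand 5 (by norm_num) (eul K N)) ^ 5 := by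
  unfold eul
  induction N with
  | zero => simp [conj5]
  | succ N ih =>
    rw [show 5 * (N + 1) = 5 * N + 1 + 1 + 1 + 1 + 1 by ring]
    simp only [Finset.prod_range_succ]
    simp only [conj5_mul, map_mul]
    rw [conj5_fac_ne hz (by omega), conj5_fac_ne hz (by omega), conj5_fac_ne hz (by omega),
      conj5_fac_ne hz (by omega), conj5_fac_eq hz (by omega)]
    simp only [map_sub, map_one, map_pow, expand_X]
    linear_combination (1 - X ^ (5 * (5 * N + 1))) * (1 - X ^ (5 * (5 * N + 1 + 1))) *
      (1 - X ^ (5 * (5 * N + 1 + 1 + 1))) * (1 - X ^ (5 * (5 * N + 1 + 1 + 1 + 1))) *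
      (1 - X ^ (5 * (N + 1))) ^ 5 * (1 - X ^ (25 * (N + 1))) * ih

theorem conj5_lim {z : K} (hz : z ^ 4 + z ^ 3 + z ^ 2 + z + 1 = 0) :
    conj5 z (pentagonalSeries K) * (PowerSeries.expand 5 (by norm_num)
      (PowerSeries.expand 5 (by norm_num) (pentagonalSeries K))) =
    (PowerSeries.expand 5 (by norm_num) (pentagonalSeries K)) ^ 6 := by
  have h0 : Lim (fun N => eul K (5 * N)) (pentagonalSeries K) :=
    lim_eul.comp (φ := fun n => 5 * n) (tendsto_id.const_mul_atTop' (by norm_num))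
  have h1 := ((((h0.mul (h0.rescale z)).mul (h0.rescale (z ^ 2))).mul (h0.rescale (z ^ 3))).mul
    (h0.rescale (z ^ 4))).mul ((lim_eul (R := K).expand 5 (by norm_num)).expand 5 (by norm_num))
  have h2 := (h0.expand 5 (by norm_num)).mul ((lim_eul (R := K).expand 5 (by norm_num)).pow 5)
  have h3 : Lim (fun N => conj5 z (eul K (5 * N)) * (PowerSeries.expand 5 (by norm_num)
      (PowerSeries.expand 5 (by norm_num) (eul K N)))) (conj5 z (pentagonalSeries K) *
      (PowerSeries.expand 5 (by norm_num)
      (PowerSeries.expand 5 (by norm_num) (pentagonalSeries K)))) := h1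
  rw [funext (conj5_eul hz)] at h3
  have := h3.unique h2
  rw [this]
  ring
end

theorem rescale_E {K : Type*} [CommRing K] (f : ZMod 2 →+* K) {z : K} (h5 : z ^ 5 = 1)
    (g : PowerSeries (ZMod 2)) :
    rescale z (PowerSeries.map f (E g)) = PowerSeries.map f (E g) := by
  ext n
  rw [coeff_rescale, coeff_map]
  by_cases h : 5 ∣ n
  · obtain ⟨m, rfl⟩ := h
    rw [pow_mul, h5, one_pow, one_mul]
  · rw [coeff_E_ne _ h]; simp

theorem map_pent {K : Type*} [CommRing K] (f : ZMod 2 →+* K) :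
    PowerSeries.map f F = pentagonalSeries K := by
  have h1 := lim_eul (R := K)
  have h2 : Lim (eul K) (PowerSeries.map f F) := by
    intro n
    filter_upwards [lim_eul (R := ZMod 2) n] with m hm
    rw [coeff_map, F, ← hm, ← coeff_map]
    simp [eul, map_prod]
  exact h2.unique h1

/-- the norm -/
noncomputable def N : PowerSeries (ZMod 2) := A ^ 5 + X * (E F) ^ 5 + X ^ 2 * B2 ^ 5

theorem E_AB : E A * (X ^ 2 * E B2) = (X * E (E F)) ^ 2 := by
  have := congrArg E AB
  rw [map_mul, map_pow] at this
  linear_combination X ^ 2 * this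

theorem E_N : E N = E A ^ 5 + (X * E (E F)) ^ 5 + (X ^ 2 * E B2) ^ 5 := by
  simp only [N, map_add, map_mul, map_pow, E_X]; ring

theorem N_mul : N * E F = F ^ 6 := by
  apply E_inj
  rw [map_mul, map_pow]
  let K := AlgebraicClosure (ZMod 2)
  let f : ZMod 2 →+* K := algebraMap _ _
  obtain ⟨z, hz⟩ : ∃ z : K, z ^ 4 + z ^ 3 + z ^ 2 + z + 1 = 0 := by
    obtain ⟨z, hz⟩ := IsAlgClosed.exists_root
      (Polynomial.X ^ 4 + Polynomial.X ^ 3 + Polynomial.X ^ 2 + Polynomial.X + 1 : Polynomial K)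
      (by
        have : (Polynomial.X ^ 4 + Polynomial.X ^ 3 + Polynomial.X ^ 2 + Polynomial.X + 1 :
          Polynomial K).degree = 4 := by compute_degree!
        rw [this]; norm_num)
    exact ⟨z, by simpa using hz⟩
  have h5 : z ^ 5 = 1 := by linear_combination (z - 1) * hz
  have hinj : Function.Injective (PowerSeries.map f) := PowerSeries.map_injective f f.injective
  apply hinj
  have key := conj5_lim hz
  rw [← map_pent f, ← map_expand, ← map_expand] at key
  change conj5 z (PowerSeries.map f F) * PowerSeries.map f (E (E F)) =
    PowerSeries.map f (E F) ^ 6 at key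
  rw [map_mul, map_pow, ← key]
  congr 1
  have hz' := congrArg (C : K →+* PowerSeries K) hz
  simp only [map_add, map_pow, map_one, map_zero] at hz'
  have hab := congrArg (PowerSeries.map f) E_AB
  simp only [map_mul, map_pow, map_X] at hab
  have := norm_alg (C z) _ _ _ hz' hab
  rw [E_N]
  simp only [map_add, map_mul, map_pow, map_X]
  have hF := congrArg (PowerSeries.map f) F_dissect
  rw [← this, hF]
  have p2 : (z ^ 2) ^ 5 = 1 := by rw [← pow_mul, mul_comm, pow_mul, h5, one_pow]
  have p3 : (z ^ 3) ^ 5 = 1 := by rw [← pow_mul, mul_comm, pow_mul, h5, one_pow]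
  have p4 : (z ^ 4) ^ 5 = 1 := by rw [← pow_mul, mul_comm, pow_mul, h5, one_pow]
  simp only [conj5, map_add, map_mul, map_pow, map_X, rescale_X, rescale_E f h5,
    rescale_E f p2, rescale_E f p3, rescale_E f p4]
  ring

/-- partition generating function mod 2 -/
noncomputable def P : PowerSeries (ZMod 2) :=
  PowerSeries.mk fun n => (Fintype.card n.Partition : ZMod 2)

open scoped PowerSeries.WithPiTopology in
theorem P_mul_F : P * F = 1 := by
  let _ : TopologicalSpace (ZMod 2) := ⊥
  have _ : DiscreteTopology (ZMod 2) := ⟨rfl⟩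
  have h1 := Nat.Partition.hasProd_powerSeriesMk_card_restricted (ZMod 2) (fun _ => True)
  have h2 := PowerSeries.WithPiTopology.hasProd_one_sub_X_pow (ZMod 2)
  have h3 := h1.mul h2
  have e : ∀ i : ℕ, ((if True then ∑' j : ℕ, (X : PowerSeries (ZMod 2)) ^ ((i + 1) * j) else 1) *
      (1 - X ^ (i + 1))) = 1 := by
    intro i
    rw [if_pos trivial]
    simp_rw [pow_mul]
    exact PowerSeries.WithPiTopology.tsum_pow_mul_one_sub_of_constantCoeff_eq_zero (by simp)
  simp only [e] at h3
  have h4 := h3.unique hasProd_one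
  rw [← h4]
  congr 1
  ext n
  simp [P, Nat.Partition.restricted]

theorem F_mul_P : F * P = 1 := by rw [mul_comm, P_mul_F]

theorem EF_ne : E F ≠ 0 := by
  intro h
  exact F_ne (E_inj (by rw [h, map_zero]))

theorem EF_mul_EP : E F * E P = 1 := by rw [← map_mul, F_mul_P, map_one]

theorem six_alg {S : Type*} [CommRing S] (a b c : S) (h2 : (2 : S) = 0) (hab : a * b = c ^ 2) :
    (a + c + b) ^ 6 = (a + b) * (a ^ 5 + c ^ 5 + b ^ 5) + c ^ 5 * (a + c + b) := by
  have hsq : (a + c + b) ^ 2 = a ^ 2 + c ^ 2 + b ^ 2 := by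
    linear_combination (a * b + a * c + b * c) * h2
  have h4 : (a + c + b) ^ 4 = a ^ 4 + c ^ 4 + b ^ 4 := by
    rw [show (a + c + b) ^ 4 = ((a + c + b) ^ 2) ^ 2 by ring, hsq]
    linear_combination (a ^ 2 * b ^ 2 + a ^ 2 * c ^ 2 + b ^ 2 * c ^ 2) * h2
  rw [show (a + c + b) ^ 6 = (a + c + b) ^ 4 * (a + c + b) ^ 2 by ring, hsq, h4]
  linear_combination ((a ^ 2 + b ^ 2) * (a * b + c ^ 2) - (a ^ 4 + b ^ 4)) * hab +
    (c ^ 4 * (a ^ 2 + b ^ 2) - c ^ 5 * (a + b)) * h2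

theorem modular : X * (E F) ^ 6 = F ^ 6 + F * E F := by
  set e := F ^ 6 + X * (E F) ^ 6 + F * E F with he
  have hn : E N * E (E F) = (E F) ^ 6 := by rw [← map_mul, N_mul, map_pow]
  have key : e * E (E F) = E e * F := by
    have h6 := six_alg _ _ _ two_eq_zero' E_AB
    rw [← F_dissect, ← E_N] at h6
    have hF := F_dissect
    simp only [he, map_add, map_mul, map_pow, E_X]
    linear_combination E (E F) * h6 + (F - X * E (E F)) * hn - (E N * E (E F)) * hF
  have hconst : constantCoeff e = 0 := by
    have h1 : constantCoeff (E F) = 1 := by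
      rw [E, constantCoeff_expand, F_const]
    simp only [he, map_add, map_mul, map_pow, F_const, h1, constantCoeff_X]
    decide
  have hdvd : ∀ n : ℕ, X ^ (n + 1) ∣ e := by
    intro n
    induction n with
    | zero => simpa [X_dvd_iff] using hconst
    | succ n ih =>
      have h1 : E (X ^ (n + 1)) ∣ E e := map_dvd E ih
      rw [map_pow, E_X, ← pow_mul] at h1
      have h2 : X ^ (5 * (n + 1)) ∣ e := by
        have h3 : E (E F) * E (E P) = 1 := by rw [← map_mul, EF_mul_EP, map_one]
        have : e = E e * F * E (E P) := by
          rw [← key, mul_assoc, h3, mul_one]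
        rw [this]
        exact (h1.mul_right _).mul_right _
      exact (pow_dvd_pow X (by omega)).trans h2
  have h0 : e = 0 := by
    ext n
    exact X_pow_dvd_iff.1 (hdvd n) n (by omega)
  linear_combination h0 - (F ^ 6 + F * E F) * two_eq_zero'

/-- complementary factor -/
noncomputable def G : PowerSeries (ZMod 2) :=
  E (A ^ 4 + X * (E F) ^ 3 * B2) + X * E (A ^ 3 * E F) + X ^ 2 * E (X * B2 ^ 3 * E F) +
    X ^ 3 * E (A * (E F) ^ 3 + X * B2 ^ 4) + X ^ 4 * E ((E F) ^ 4)

theorem G_alg {S : Type*} [CommRing S] (a b c : S) (h2 : (2 : S) = 0) (hab : a * b = c ^ 2) :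
    (a + c + b) * (a ^ 4 + a ^ 3 * c + a * c ^ 3 + c ^ 4 + b * c ^ 3 + b ^ 3 * c + b ^ 4) =
      a ^ 5 + c ^ 5 + b ^ 5 := by
  linear_combination (a ^ 2 * c + b ^ 2 * c + b ^ 3 + a ^ 3) * hab +
    (a ^ 4 * c + a * c ^ 4 + a * b * c ^ 3 + b * c ^ 4 + b ^ 4 * c + a ^ 2 * c ^ 3 + b ^ 2 * c ^ 3 +
      b ^ 3 * c ^ 2 + a ^ 3 * c ^ 2) * h2

theorem F_mul_G : F * G = E N := by
  have h := G_alg _ _ _ two_eq_zero' E_AB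
  rw [← E_N, ← F_dissect] at h
  rw [← h, G]
  simp only [map_add, map_mul, map_pow, E_X]
  ring

theorem EN_mul_P : E N * P = G := by
  rw [← F_mul_G]
  linear_combination G * P_mul_F

theorem N_U4P : N * U 4 P = (E F) ^ 4 := by
  rw [← U_E_mul (by norm_num), EN_mul_P, G, U_of (by norm_num)]
  simp

theorem X_U4P : X * U 4 P = P ^ 5 + E P := by
  apply mul_left_cancel₀ (pow_ne_zero 6 F_ne)
  have hN := N_mul
  have h4 := N_U4P
  have hm := modular
  have h5 := EF_mul_EP
  have hp := F_mul_P
  have e1 : F ^ 6 * (X * U 4 P) = X * (E F) ^ 5 := by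
    linear_combination (X * E F) * h4 - (X * U 4 P) * hN
  have e2 : X * (E F) ^ 5 = F ^ 6 * E P + F := by
    linear_combination E P * hm - (X * (E F) ^ 5 - F) * h5
  have e3 : F ^ 5 * P ^ 5 = 1 := by rw [← mul_pow, hp, one_pow]
  rw [e1, e2]
  linear_combination -F * e3

theorem U_zero_pow5 (g : PowerSeries (ZMod 2)) : U 0 (g ^ 5) =
    (U 0 g) ^ 5 + X * (U 1 g) ^ 5 + X ^ 2 * (U 2 g) ^ 5 + X ^ 3 * (U 3 g) ^ 5 +
      X ^ 4 * (U 4 g) ^ 5 := by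
  have h4 : ∀ x y : PowerSeries (ZMod 2), (x + y) ^ 4 = x ^ 4 + y ^ 4 := by
    intro x y
    linear_combination (2 * x ^ 3 * y + 3 * x ^ 2 * y ^ 2 + 2 * x * y ^ 3) * two_eq_zero'
  have hg := eq_U g
  obtain ⟨a, ha⟩ : ∃ a, a = U 0 g := ⟨_, rfl⟩
  obtain ⟨b, hb⟩ : ∃ a, a = U 1 g := ⟨_, rfl⟩
  obtain ⟨c, hc⟩ : ∃ a, a = U 2 g := ⟨_, rfl⟩
  obtain ⟨d, hd⟩ : ∃ a, a = U 3 g := ⟨_, rfl⟩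
  obtain ⟨f, hf⟩ : ∃ a, a = U 4 g := ⟨_, rfl⟩
  rw [← ha, ← hb, ← hc, ← hd, ← hf] at hg ⊢
  have e : g ^ 5 = E (a ^ 5 + X * b ^ 5 + X ^ 2 * c ^ 5 + X ^ 3 * d ^ 5 + X ^ 4 * f ^ 5)
      + X * E (a ^ 4 * b + X * b ^ 4 * c + X ^ 2 * c ^ 4 * d + X ^ 3 * d ^ 4 * f + X ^ 3 * f ^ 4 * a)
      + X ^ 2 * E (a ^ 4 * c + X * b ^ 4 * d + X ^ 2 * c ^ 4 * f + X ^ 2 * d ^ 4 * a +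
        X ^ 3 * f ^ 4 * b)
      + X ^ 3 * E (a ^ 4 * d + X * b ^ 4 * f + X * c ^ 4 * a + X ^ 2 * d ^ 4 * b +
        X ^ 3 * f ^ 4 * c)
      + X ^ 4 * E (a ^ 4 * f + b ^ 4 * a + X * c ^ 4 * b + X ^ 2 * d ^ 4 * c +
        X ^ 3 * f ^ 4 * d) := by
    rw [show g ^ 5 = g ^ 4 * g by ring, hg]
    simp only [h4, map_add, map_mul, map_pow, E_X]
    ring
  rw [e, U_of (by norm_num)]
  simp

theorem pow5_alg {S : Type*} [CommRing S] (A B C X : S) (h2 : (2 : S) = 0) (hab : A * B = C ^ 2) :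
    (A ^ 4 + X * C ^ 3 * B) ^ 5 + X * (A ^ 3 * C) ^ 5 + X ^ 2 * (X * B ^ 3 * C) ^ 5 +
      X ^ 3 * (A * C ^ 3 + X * B ^ 4) ^ 5 + X ^ 4 * (C ^ 4) ^ 5 =
    (A ^ 5 + X * C ^ 5 + X ^ 2 * B ^ 5) ^ 4 +
      (X * C ^ 5) ^ 3 * (A ^ 5 + X * C ^ 5 + X ^ 2 * B ^ 5) + (X * C ^ 5) ^ 4 := by
  have h4 : ∀ x y : S, (x + y) ^ 4 = x ^ 4 + y ^ 4 := by
    intro x y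
    linear_combination (2 * x ^ 3 * y + 3 * x ^ 2 * y ^ 2 + 2 * x * y ^ 3) * h2
  have h5 : ∀ x y : S, (x + y) ^ 5 = x ^ 5 + x ^ 4 * y + x * y ^ 4 + y ^ 5 := by
    intro x y
    rw [show (x + y) ^ 5 = (x + y) ^ 4 * (x + y) by ring, h4]
    ring
  have a1 : A ^ 16 * B = A ^ 15 * C ^ 2 := by linear_combination A ^ 15 * hab
  have a2 : A ^ 4 * B ^ 4 = C ^ 8 := by rw [← mul_pow, hab]; ring
  have a3 : A * B ^ 16 = C ^ 2 * B ^ 15 := by linear_combination B ^ 15 * hab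
  rw [h5, h5, h4, h4]
  linear_combination X * C ^ 3 * a1 + 2 * X ^ 4 * C ^ 12 * a2 + X ^ 7 * C ^ 3 * a3 +
    (X * A ^ 15 * C ^ 5 + X ^ 7 * C ^ 5 * B ^ 15) * h2

theorem N_ne : N ≠ 0 := by
  intro h
  have := N_mul
  rw [h, zero_mul] at this
  exact pow_ne_zero 6 F_ne this.symm

theorem N_U0P5 : N ^ 5 * U 0 (P ^ 5) = N ^ 4 + (X * (E F) ^ 5) ^ 3 * N + (X * (E F) ^ 5) ^ 4 := by
  rw [← U_E_mul (by norm_num), map_pow, ← mul_pow, EN_mul_P, U_zero_pow5]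
  have hG : ∀ r < 5, U r G = _ := fun r hr => U_of hr _ _ _ _ _
  rw [hG 0 (by norm_num), hG 1 (by norm_num), hG 2 (by norm_num), hG 3 (by norm_num),
    hG 4 (by norm_num)]
  have := pow5_alg A B2 (E F) X two_eq_zero' AB
  rw [← N] at this
  simpa using this

theorem X_U0P5 : X * U 0 (P ^ 5) = P ^ 25 + (E P) ^ 5 := by
  apply mul_left_cancel₀ (pow_ne_zero 5 N_ne)
  have h5 := EF_mul_EP
  have hy : X * (E F) ^ 5 = N + F := by
    apply mul_right_cancel₀ EF_ne
    linear_combination modular - N_mul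
  have hN : N = F ^ 6 * E P := by
    linear_combination E P * N_mul - N * h5
  have h55 : (E F) ^ 5 * (E P) ^ 5 = 1 := by rw [← mul_pow, h5, one_pow]
  have hX : X = (N + F) * (E P) ^ 5 := by
    rw [← hy, mul_assoc, h55, mul_one]
  have hP : N ^ 5 * P ^ 25 = F ^ 5 * (E P) ^ 5 := by
    have : F ^ 25 * P ^ 25 = 1 := by rw [← mul_pow, F_mul_P, one_pow]
    rw [hN]
    linear_combination F ^ 5 * (E P) ^ 5 * this
  have h4 : (N + F) ^ 4 = N ^ 4 + F ^ 4 := by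
    linear_combination (2 * N ^ 3 * F + 3 * N ^ 2 * F ^ 2 + 2 * N * F ^ 3) * two_eq_zero'
  have e1 : N ^ 5 * (X * U 0 (P ^ 5)) = X * (N ^ 5 * U 0 (P ^ 5)) := by ring
  have e2 : (N + F) * (N ^ 4 + (N + F) ^ 3 * N + (N + F) ^ 4) =
      (N + F) * N ^ 4 + (N + F) ^ 4 * N + (N + F) ^ 4 * (N + F) := by ring
  have e3 : (N + F) * (N ^ 4 + (N + F) ^ 3 * N + (N + F) ^ 4) = N ^ 5 + F ^ 5 := by
    rw [e2, h4]
    linear_combination (N ^ 5 + F * N ^ 4 + F ^ 4 * N) * two_eq_zero'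
  rw [e1, N_U0P5, hy, mul_add (N ^ 5), hP]
  calc X * (N ^ 4 + (N + F) ^ 3 * N + (N + F) ^ 4)
      = (E P) ^ 5 * ((N + F) * (N ^ 4 + (N + F) ^ 3 * N + (N + F) ^ 4)) := by
        rw [hX]; ring
    _ = _ := by rw [e3]; ring

theorem U_zero_E (g : PowerSeries (ZMod 2)) : U 0 (E g) = g := by
  have := U_X_E (i := 0) (r := 0) (by norm_num) (by norm_num) g
  simpa using this

theorem main25 : X ^ 2 * U 4 (U 4 P) = P ^ 25 + (E P) ^ 5 + X * P := by
  have h : X * U 4 (U 4 P) = U 0 (P ^ 5) + P := by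
    rw [← U_zero_X_mul, X_U4P, U_add, U_zero_E]
  linear_combination X * h + X_U0P5

open scoped PowerSeries.WithPiTopology in
theorem lim_of_hasProd {R : Type*} [CommRing R] [TopologicalSpace R] [DiscreteTopology R]
    {f : ℕ → PowerSeries R} {g : PowerSeries R} (h : HasProd f g) :
    Lim (fun m => ∏ n ∈ Finset.range m, f n) g := by
  intro n
  have h1 := (PowerSeries.WithPiTopology.tendsto_iff_coeff_tendsto _ _ _ _).1 h.tendsto_prod_nat n
  simpa using h1

/-- generating function of 400-regular partitions mod 2 -/
noncomputable def Reg : PowerSeries (ZMod 2) :=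
  PowerSeries.mk fun n => (numRegularPartitions 400 n : ZMod 2)

theorem numReg_eq (n : ℕ) :
    numRegularPartitions 400 n = (Nat.Partition.countRestricted n 400).card := by
  rw [← Nat.Partition.card_restricted_eq_card_countRestricted n (by norm_num), numRegularPartitions,
    Nat.card_eq_fintype_card, Fintype.card_subtype, Nat.Partition.restricted]

theorem Reg_mul_F : Reg * F = E (E F) ^ 16 := by
  let _ : TopologicalSpace (ZMod 2) := ⊥
  have _ : DiscreteTopology (ZMod 2) := ⟨rfl⟩
  have h1 := lim_of_hasProd (Nat.Partition.hasProd_powerSeriesMk_card_countRestricted (ZMod 2)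
    (m := 400) (by norm_num))
  have h2 := h1.mul (lim_eul (R := ZMod 2))
  have h3 := ((lim_eul (R := ZMod 2).expand 5 (by norm_num)).expand 5 (by norm_num)).pow 16
  have e : (fun m => (∏ n ∈ Finset.range m, ∑ j ∈ Finset.range 400,
      (X : PowerSeries (ZMod 2)) ^ ((n + 1) * j)) * eul (ZMod 2) m) =
      fun m => (PowerSeries.expand 5 (by norm_num) (PowerSeries.expand 5 (by norm_num)
        (eul (ZMod 2) m))) ^ 16 := by
    funext m
    rw [eul, ← Finset.prod_mul_distrib, map_prod, map_prod, ← Finset.prod_pow]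
    refine Finset.prod_congr rfl fun i _ => ?_
    simp_rw [pow_mul]
    rw [geom_sum_mul_neg]
    simp only [map_sub, map_one, map_pow, expand_X]
    have := sub_pow_char_pow (R := PowerSeries (ZMod 2)) (p := 2) (n := 4) 1 (X ^ (25 * (i + 1)))
    norm_num at this
    rw [← pow_mul X 5, ← pow_mul]
    norm_num
    rw [← pow_mul X 25, this]
    ring_nf
  rw [e] at h2
  have h4 := h2.unique h3
  rw [show E (E F) = PowerSeries.expand 5 (by norm_num) (PowerSeries.expand 5 (by norm_num)
        (pentagonalSeries (ZMod 2))) from rfl, ← h4]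
  congr 1
  ext n
  simp [Reg, numReg_eq]

theorem Reg_eq : Reg = E (E (F ^ 16)) * P := by
  rw [map_pow, map_pow, ← Reg_mul_F]
  linear_combination -Reg * F_mul_P

/-- multipartitions grouped by sizes -/
def multiEquiv (t n : ℕ) : {f : Fin t → Σ k : ℕ, k.Partition // (∑ i, (f i).1) = n} ≃
    Σ l : {l : Fin t → ℕ // l ∈ Finset.piAntidiag Finset.univ n}, ∀ i, (l.1 i).Partition where
  toFun f := ⟨⟨fun i => (f.1 i).1, by simp [f.2]⟩, fun i => (f.1 i).2⟩
  invFun l := ⟨fun i => ⟨l.1.1 i, l.2 i⟩, (Finset.mem_piAntidiag.1 l.1.2).1⟩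
  left_inv _ := rfl
  right_inv _ := rfl

theorem numMulti_eq (t n : ℕ) : (numMultipartitions t n : ZMod 2) = coeff n (P ^ t) := by
  have h : P ^ t = ∏ _i : Fin t, P := by simp
  rw [h, coeff_prod, numMultipartitions, Nat.card_congr (multiEquiv t n), Nat.card_eq_fintype_card,
    Fintype.card_sigma]
  simp only [Fintype.card_pi]
  push_cast
  rw [Finset.sum_coe_sort (Finset.piAntidiag Finset.univ n)
    (fun l : Fin t → ℕ => ∏ i, (Fintype.card (l i).Partition : ZMod 2))]
  refine Finset.sum_bij' (fun l _ => Finsupp.equivFunOnFinite.symm l) (fun l _ => l) ?_ ?_ ?_ ?_ ?_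
  · intro l hl
    simp at hl
    simp [Finset.mem_finsuppAntidiag, hl]
  · intro l hl
    simp [Finset.mem_finsuppAntidiag] at hl
    simp [hl]
  · intro l hl; rfl
  · intro l hl; ext; rfl
  · intro l hl
    simp [P]

theorem pow16 : F ^ 16 = E (A ^ 16) + X * E (X ^ 3 * (E F) ^ 16) + X ^ 2 * E (X ^ 6 * B2 ^ 16) +
    X ^ 3 * E 0 + X ^ 4 * E 0 := by
  have h : ∀ x y : PowerSeries (ZMod 2), (x + y) ^ 16 = x ^ 16 + y ^ 16 := by
    intro x y
    have := add_pow_char_pow (R := PowerSeries (ZMod 2)) (p := 2) (n := 4) x y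
    norm_num at this
    exact this
  conv_lhs => rw [F_dissect]
  simp only [h, map_mul, map_pow, E_X, map_zero]
  ring

theorem coeff_term2 {m r : ℕ} (h : r = 3 ∨ r = 4) : coeff (5 * m + r) (F ^ 16 * (E P) ^ 5) = 0 := by
  have h1 : U r (F ^ 16 * (E P) ^ 5) = 0 := by
    rw [mul_comm, ← map_pow, U_E_mul (by omega), pow16, U_of (by omega)]
    rcases h with rfl | rfl <;> simp
  have := congrArg (coeff m) h1
  simpa [U] using this

theorem coeff_term3 {m : ℕ} (h : (m + 1) % 9 = 0 ∨ (m + 1) % 9 = 3) : coeff m (F ^ 15) = 0 := by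
  have e : F ^ 15 = F ^ 3 * PowerSeries.expand 2 two_ne_zero
      (PowerSeries.expand 2 two_ne_zero (F ^ 3)) := by
    rw [← sq_eq_expand, ← sq_eq_expand]; ring
  rw [e, coeff_mul]
  refine Finset.sum_eq_zero fun p hp => ?_
  have hp := Finset.HasAntidiagonal.mem_antidiagonal.1 hp
  by_contra hne
  have h1 := left_ne_zero_of_mul hne
  have h2 := right_ne_zero_of_mul hne
  rw [coeff_expand] at h2
  split_ifs at h2 with h3
  · rw [coeff_expand] at h2
    split_ifs at h2 with h4
    · obtain ⟨s, hs⟩ := coeff_F3 h1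
      obtain ⟨t, ht⟩ := coeff_F3 h2
      have hm : 2 * m = s * (s + 1) + 4 * (t * (t + 1)) := by omega
      have hmod : ∀ x : ℕ, ∃ j, x = 9 * j + x % 9 ∧ x % 9 < 9 := fun x => ⟨x / 9, by omega⟩
      have k1 : (s * (s + 1)) % 9 = ((s % 9) * (s % 9 + 1)) % 9 := by
        simp [Nat.mul_mod, Nat.add_mod]
      have k2 : (t * (t + 1)) % 9 = ((t % 9) * (t % 9 + 1)) % 9 := by
        simp [Nat.mul_mod, Nat.add_mod]
      have l1 : s % 9 < 9 := Nat.mod_lt _ (by norm_num)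
      have l2 : t % 9 < 9 := Nat.mod_lt _ (by norm_num)
      generalize s * (s + 1) = S at *
      generalize t * (t + 1) = T at *
      generalize s % 9 = x at *
      generalize t % 9 = y at *
      interval_cases x <;> norm_num at k1 <;> interval_cases y <;> norm_num at k2 <;> omega
    · exact h2 rfl
  · exact h2 rfl

theorem main_series : X ^ 2 * U 4 (U 4 Reg) = P ^ 9 + F ^ 16 * (E P) ^ 5 + X * F ^ 15 := by
  rw [Reg_eq, U_E_mul (by norm_num), U_E_mul (by norm_num)]
  have h1 : F ^ 16 * P ^ 16 = 1 := by rw [← mul_pow, F_mul_P, one_pow]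
  linear_combination F ^ 16 * main25 + P ^ 9 * h1 + X * F ^ 15 * F_mul_P

theorem stmt_10 (n : ℕ) :
    (∀ B ∈ ({3, 9, 18, 39} : Finset ℕ),
      numRegularPartitions 400 (1125 * n + 25 * B - 26) ≡
        numMultipartitions 9 (45 * n + B) [MOD 2]) := by
  intro B hB
  rw [← ZMod.natCast_eq_natCast_iff, numMulti_eq]
  have hB' : B = 3 ∨ B = 9 ∨ B = 18 ∨ B = 39 := by simpa using hB
  obtain ⟨M, hM⟩ : ∃ M, 45 * n + B = M + 2 := ⟨45 * n + B - 2, by omega⟩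
  have e1 : 1125 * n + 25 * B - 26 = 5 * (5 * M + 4) + 4 := by omega
  have h := congrArg (coeff (M + 2)) main_series
  rw [map_add, map_add, coeff_X_pow_mul, coeff_succ_X_mul, coeff_term3 (by omega)] at h
  have h2 : coeff (M + 2) (F ^ 16 * (E P) ^ 5) = 0 := by
    have : M + 2 = 5 * ((M + 2) / 5) + (M + 2) % 5 := by omega
    rw [this]
    exact coeff_term2 (by omega)
  rw [h2, add_zero, add_zero] at h
  rw [hM, ← h, e1]
  simp [U, Reg]
end

section
/- For every natural number n and every B in {3, 6, 10, 12, 13, 14, 15, 18, 20, 23, 24, 25, 26, 28}, the number of 232-regular partitions satisfies b_232(841n + 29B − 35) ≡ p_21(29n + B) (mod 2). -/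
open PowerSeries PowerSeries.WithPiTopology in
theorem s11_part_aux (R : Type*) [CommRing R] [Nontrivial R] [TopologicalSpace R] [T2Space R] [IsTopologicalRing R] 
    (p : ℕ → Prop) [DecidablePred p] :
    HasProd (fun i => if p (i+1) then (1 : R⟦X⟧) else 1 - X ^ (i+1)) 
      ((PowerSeries.mk fun n ↦ ((Nat.Partition.restricted n p).card : R)) * pentagonalSeries R) := by
  have h := (Nat.Partition.hasProd_powerSeriesMk_card_restricted R p).mul (hasProd_one_sub_X_pow R)
  suffices e : (fun i => if p (i+1) then (1 : R⟦X⟧) else 1 - X ^ (i+1)) =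
    fun i => (if p (i + 1) then ∑' j : ℕ, (X : R⟦X⟧) ^ ((i + 1) * j) else 1) * (1 - X ^ (i + 1)) by
    rw [e]; exact h
  funext i
  split_ifs
  · have := tsum_pow_mul_one_sub_of_constantCoeff_eq_zero (f := (X : R⟦X⟧) ^ (i+1)) (by simp)
    simp_rw [pow_mul]
    rw [this]
  · simp

/-- the partition generating series -/
noncomputable def s11part (R : Type*) [CommRing R] : PowerSeries R :=
  PowerSeries.mk fun n => (Fintype.card n.Partition : R)

open PowerSeries PowerSeries.WithPiTopology in
theorem s11_part_mul_pent (R : Type*) [CommRing R] [Nontrivial R] :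
    s11part R * pentagonalSeries R = 1 := by
  let _ : TopologicalSpace R := ⊥
  have _ : DiscreteTopology R := ⟨rfl⟩
  have h := s11_part_aux R (fun _ => True)
  simp only [if_true] at h
  have := h.unique hasProd_one
  simpa [Nat.Partition.restricted, s11part, Finset.filter_true] using this

open PowerSeries PowerSeries.WithPiTopology in
theorem s11_continuous_expand (R : Type*) [CommRing R] [TopologicalSpace R] (m : ℕ) (hm : m ≠ 0) :
    Continuous (PowerSeries.expand m hm : R⟦X⟧ → R⟦X⟧) := by
  rw [continuous_iff_continuousAt]
  intro x
  unfold ContinuousAt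
  rw [tendsto_iff_coeff_tendsto]
  intro d
  simp_rw [coeff_expand]
  split_ifs
  · exact (continuous_coeff R _).tendsto x
  · exact tendsto_const_nhds

open PowerSeries PowerSeries.WithPiTopology in
theorem s11_reg (R : Type*) [CommRing R] [Nontrivial R] (m : ℕ) (hm : m ≠ 0) :
    (PowerSeries.mk fun n => (numRegularPartitions m n : R)) * pentagonalSeries R
      = PowerSeries.expand m hm (pentagonalSeries R) := by
  let _ : TopologicalSpace R := ⊥
  have _ : DiscreteTopology R := ⟨rfl⟩
  have h := s11_part_aux R (fun j => ¬ m ∣ j)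
  have h2 := (hasProd_one_sub_X_pow R).map (PowerSeries.expand m hm : R⟦X⟧ →ₐ[R] R⟦X⟧) 
    (s11_continuous_expand R m hm)
  have e : (PowerSeries.mk fun n => (numRegularPartitions m n : R)) = 
      (PowerSeries.mk fun n ↦ ((Nat.Partition.restricted n (fun j => ¬ m ∣ j)).card : R)) := by
    ext n
    simp only [coeff_mk, numRegularPartitions]
    congr 1
    rw [Nat.card_eq_fintype_card, Fintype.card_subtype]
    rfl
  rw [e]
  refine h.unique ?_
  have hinj : Function.Injective (fun i : ℕ => (i + 1) * m - 1) := by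
    intro a b hab
    have h1 : 0 < m := Nat.pos_of_ne_zero hm
    have h2 : (a+1)*m - 1 = (b+1)*m - 1 := hab
    have h3 : 0 < (a+1)*m := by positivity
    have h4 : 0 < (b+1)*m := by positivity
    have h5 : (a+1)*m = (b+1)*m := by omega
    have := Nat.eq_of_mul_eq_mul_right h1 h5
    omega
  rw [← hinj.hasProd_iff]
  · suffices e : ((fun i => if ¬ m ∣ (i+1) then (1 : R⟦X⟧) else 1 - X ^ (i+1)) ∘
        fun i => (i + 1) * m - 1) = ⇑(expand m hm) ∘ fun n => (1 : R⟦X⟧) - X ^ (n + 1) by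
      rw [e]; exact h2
    funext i
    have h1 : 0 < m := Nat.pos_of_ne_zero hm
    have : (i + 1) * m - 1 + 1 = (i + 1) * m := Nat.sub_add_cancel (by nlinarith)
    simp [this, ← pow_mul, mul_comm m]
  · intro i hi
    rw [if_pos]
    rintro ⟨j, hj⟩
    apply hi
    have : j ≠ 0 := by rintro rfl; simp at hj
    refine ⟨j - 1, ?_⟩
    have : j - 1 + 1 = j := by omega
    simp only [this]
    rw [mul_comm, ← hj]; simp

theorem s11_multi (R : Type*) [CommRing R] (t : ℕ) :
    (PowerSeries.mk fun n => (numMultipartitions t n : R)) = s11part R ^ t := by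
  ext n
  rw [PowerSeries.coeff_mk]
  have h := PowerSeries.coeff_prod (fun _ : Fin t => s11part R) n Finset.univ
  rw [Finset.prod_const, Finset.card_univ, Fintype.card_fin] at h
  rw [h]
  simp only [s11part, PowerSeries.coeff_mk]
  rw [numMultipartitions]
  let e : {f : Fin t → Σ k : ℕ, k.Partition // (∑ i, (f i).1) = n} ≃ 
     Σ l : (Finset.finsuppAntidiag (Finset.univ : Finset (Fin t)) n), (∀ i, (l.1 i).Partition) :=
   { toFun := fun f => ⟨⟨Finsupp.equivFunOnFinite.symm (fun i => (f.1 i).1), by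
        rw [Finset.mem_finsuppAntidiag]
        exact ⟨f.2, by simp⟩⟩, fun i => (f.1 i).2⟩
     invFun := fun g => ⟨fun i => ⟨g.1.1 i, g.2 i⟩, by
        have := g.1.2
        rw [Finset.mem_finsuppAntidiag] at this
        exact this.1⟩
     left_inv := fun f => rfl
     right_inv := by
        rintro ⟨⟨l, hl⟩, g⟩
        obtain ⟨l', rfl⟩ := Finsupp.equivFunOnFinite.symm.surjective l
        rfl }
  rw [Nat.card_congr e, Nat.card_eq_fintype_card, Fintype.card_sigma]
  push_cast
  simp_rw [Fintype.card_pi]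
  push_cast
  rw [← Finset.sum_coe_sort (Finset.finsuppAntidiag (Finset.univ : Finset (Fin t)) n) ]

open PowerSeries in
theorem s11_pow8 (g : PowerSeries (ZMod 2)) : g ^ 8 = PowerSeries.expand 8 (by norm_num) g := by
  have key : ∀ h : PowerSeries (ZMod 2), h ^ 2 = PowerSeries.expand 2 (by norm_num) h := by
    intro h
    have := MvPowerSeries.map_frobenius_expand (p := 2) (hp := by norm_num) (f := h)
    rw [ZMod.frobenius_zmod] at this
    rw [← this]
    rw [MvPowerSeries.map_id]
    rfl
  have : g ^ 8 = ((g ^ 2) ^ 2) ^ 2 := by ring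
  rw [this, key, key, key, ← PowerSeries.expand_mul, ← PowerSeries.expand_mul]

open PowerSeries in
theorem s11_triang (n : ℕ) (c : ℕ → ZMod 2) (u : ℕ → PowerSeries (ZMod 2))
    (hu : ∀ i, constantCoeff (u i) = 1)
    (h : X ^ n ∣ ∑ i ∈ Finset.range n, C (c i) * (X ^ i * u i)) : ∀ i < n, c i = 0 := by
  induction n with
  | zero => intro i hi; omega
  | succ n ih =>
    rw [Finset.sum_range_succ] at h
    have h1 : X ^ n ∣ ∑ i ∈ Finset.range n, C (c i) * (X ^ i * u i) := by
      have h2 : X ^ n ∣ C (c n) * (X ^ n * u n) := (Dvd.intro _ rfl : X ^ n ∣ X ^ n * u n).mul_left _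
      exact (dvd_add_left h2).1 ((pow_dvd_pow _ (Nat.le_succ n)).trans h)
    have h3 := ih h1
    have h4 : ∑ i ∈ Finset.range n, C (c i) * (X ^ i * u i) = 0 :=
      Finset.sum_eq_zero fun i hi => by simp [h3 i (Finset.mem_range.1 hi)]
    rw [h4, zero_add] at h
    have h5 := X_pow_dvd_iff.1 h n (Nat.lt_succ_self n)
    rw [coeff_C_mul, coeff_X_pow_mul', if_pos le_rfl] at h5
    simp [hu] at h5
    intro i hi
    rcases Nat.lt_succ_iff_lt_or_eq.1 hi with h | h
    · exact h3 i h
    · rw [h]; exact h5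

open PowerSeries in
theorem s11_pent_mod : (X : PowerSeries (ZMod 2)) ^ 2 ∣ pentagonalSeries (ZMod 2) - (1 + X) := by
  rw [X_pow_dvd_iff]
  intro m hm
  have h0 := coeff_pentagonalSeries_pentagonal (ZMod 2) 0
  have h1 := coeff_pentagonalSeries_pentagonal (ZMod 2) 1
  have e0 : pentagonal 0 = 0 := by decide
  have e1 : pentagonal 1 = 1 := by decide
  rw [e0] at h0
  rw [e1] at h1
  interval_cases m
  · simp at h0; simp [h0]
  · simp only [map_sub, map_add, h1]
    simp [coeff_one]

open PowerSeries in
theorem s11_identity (a : ℕ → ZMod 2)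
    (h : pentagonalSeries (ZMod 2) ^ 232 * (expand 29 (by norm_num) (s11part (ZMod 2))) ^ 8
      + X ^ 10 * pentagonalSeries (ZMod 2) ^ 232 *
        (PowerSeries.mk fun m => coeff (29 * m + 10) (s11part (ZMod 2) ^ 8))
      = ∑ i ∈ Finset.range 10, C (a i) * (X * pentagonalSeries (ZMod 2) ^ 24) ^ i) :
    pentagonalSeries (ZMod 2) ^ 29 * (expand 29 (by norm_num) (s11part (ZMod 2)))
      + X ^ 2 * pentagonalSeries (ZMod 2) ^ 29 *
        (PowerSeries.mk fun m => coeff (29 * m + 23) (s11part (ZMod 2)))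
      = 1 + X * pentagonalSeries (ZMod 2) ^ 24 := by
  set f := pentagonalSeries (ZMod 2) with hf
  set P := s11part (ZMod 2) with hP
  set e := expand 29 (by norm_num) P with he
  set S : PowerSeries (ZMod 2) := PowerSeries.mk fun m => coeff (29 * m + 23) P with hS
  have hPf : P * f = 1 := s11_part_mul_pent _
  have hmod := s11_pent_mod
  rw [← hf] at hmod
  have hS8 : (PowerSeries.mk fun m => coeff (29 * m + 10) (P ^ 8)) = X ^ 6 * S ^ 8 := by
    rw [s11_pow8, s11_pow8]
    ext m
    rw [coeff_mk, coeff_X_pow_mul', coeff_expand]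
    by_cases h1 : 8 ∣ 29 * m + 10
    · have : ∃ l, m = 8 * l + 6 := ⟨m / 8, by omega⟩
      obtain ⟨l, rfl⟩ := this
      rw [if_pos h1, if_pos (by omega), show 8 * l + 6 - 6 = 8 * l by omega,
        coeff_expand_mul, hS, coeff_mk]
      congr 2
      omega
    · rw [if_neg h1]
      split_ifs with h2
      · rw [coeff_expand_of_not_dvd]
        omega
      · rfl
  rw [hS8] at h
  have h2 : (2 : PowerSeries (ZMod 2)) = 0 := by
    rw [show (2 : PowerSeries (ZMod 2)) = C (2 : ZMod 2) by rw [map_ofNat], show (2 : ZMod 2) = 0 by decide, map_zero]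
  have hcf : constantCoeff f = 1 := by
    have := X_pow_dvd_iff.1 hmod 0 (by norm_num)
    simp at this
    linear_combination this
  -- the first factor
  have hK : X ^ 2 ∣ f ^ 29 * e - (1 + X) := by
    have a1 : X ^ 2 ∣ f ^ 29 - (1 + X) ^ 29 := hmod.trans (sub_dvd_pow_sub_pow _ _ _)
    have a2 : X ^ 2 ∣ ((1 + X : PowerSeries (ZMod 2)) ^ 2) ^ 14 - 1 ^ 14 := by
      refine Dvd.dvd.trans ?_ (sub_dvd_pow_sub_pow _ _ _)
      refine ⟨1, ?_⟩
      linear_combination X * h2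
    have a3 : X ^ 2 ∣ e - 1 := by
      rw [X_pow_dvd_iff]
      intro m hm
      have hp0 : constantCoeff P = 1 := by
        have := congrArg constantCoeff hPf
        simpa [hcf] using this
      interval_cases m
      · simp [he, hp0]
      · rw [he, map_sub, coeff_expand_of_not_dvd _ _ _ (by norm_num)]
        simp [coeff_one]
    have : f ^ 29 * e - (1 + X) = f ^ 29 * (e - 1) + (f ^ 29 - (1 + X) ^ 29)
      + (1 + X) * (((1 + X) ^ 2) ^ 14 - 1 ^ 14) := by ring
    rw [this]
    exact dvd_add (dvd_add (a3.mul_left _) a1) (a2.mul_left _)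
  have hK8 : X ^ 10 ∣ (f ^ 29 * e) ^ 8 - (1 + X ^ 8) := by
    have : (f ^ 29 * e) ^ 8 - (1 + X ^ 8) = (f ^ 29 * e - (1 + X)) ^ 8 := by
      rw [s11_pow8 (f ^ 29 * e - (1 + X)), map_sub, map_add, ← s11_pow8, ← s11_pow8, ← s11_pow8]
      ring
    rw [this]
    exact (pow_dvd_pow _ (by norm_num : 10 ≤ 2 * 8)).trans (by rw [pow_mul]; exact pow_dvd_pow_of_dvd hK 8)
  have hD8 : X ^ 10 ∣ (X * f ^ 24) ^ 8 - X ^ 8 := by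
    have a1 : X ∣ f - 1 := by rw [X_dvd_iff]; simp [hcf]
    have a2 : X ^ 2 ∣ f ^ 2 - 1 := by
      have : f ^ 2 - 1 = (f - 1) ^ 2 := by linear_combination (f - 1) * h2
      rw [this]; exact pow_dvd_pow_of_dvd a1 2
    have a3 : X ^ 2 ∣ (f ^ 2) ^ 96 - 1 ^ 96 := a2.trans (by simpa using sub_dvd_pow_sub_pow (f ^ 2) 1 96)
    have : (X * f ^ 24) ^ 8 - X ^ 8 = X ^ 8 * ((f ^ 2) ^ 96 - 1 ^ 96) := by ring
    rw [this, show (10 : ℕ) = 8 + 2 by norm_num, pow_add]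
    exact mul_dvd_mul_left _ a3
  have hsum : ∑ i ∈ Finset.range 10, C (a i) * (X * f ^ 24) ^ i = 1 + (X * f ^ 24) ^ 8 := by
    let c : ℕ → ZMod 2 := fun i => a i - (if i = 0 then 1 else 0) - (if i = 8 then 1 else 0)
    have e1 : ∑ i ∈ Finset.range 10, C (c i) * (X ^ i * (f ^ 24) ^ i)
        = ∑ i ∈ Finset.range 10, C (a i) * (X * f ^ 24) ^ i - (1 + (X * f ^ 24) ^ 8) := by
      simp only [c, map_sub, sub_mul, Finset.sum_sub_distrib, ← mul_pow]
      have : ∀ j : ℕ, j < 10 → ∑ i ∈ Finset.range 10, C (if i = j then (1 : ZMod 2) else 0) * (X * f ^ 24) ^ i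
          = (X * f ^ 24) ^ j := by
        intro j hj
        rw [Finset.sum_eq_single j]
        · simp
        · intro b _ hb; simp [hb]
        · intro hh; exact absurd (Finset.mem_range.2 hj) hh
      rw [this 0 (by norm_num), this 8 (by norm_num)]
      ring
    have hc := s11_triang 10 c (fun i => (f ^ 24) ^ i) (by intro i; simp [hcf]) (by
      rw [e1, ← h]
      have : f ^ 232 * e ^ 8 + X ^ 10 * f ^ 232 * (X ^ 6 * S ^ 8) - (1 + (X * f ^ 24) ^ 8)
        = ((f ^ 29 * e) ^ 8 - (1 + X ^ 8)) + X ^ 10 * (f ^ 232 * (X ^ 6 * S ^ 8))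
          - ((X * f ^ 24) ^ 8 - X ^ 8) := by ring
      rw [this]
      exact dvd_sub (dvd_add hK8 (Dvd.intro _ rfl)) hD8)
    rw [← sub_eq_zero, ← e1]
    exact Finset.sum_eq_zero fun i hi => by simp [hc i (Finset.mem_range.1 hi)]
  rw [hsum] at h
  have h8 : (f ^ 29 * e + X ^ 2 * f ^ 29 * S - (1 + X * f ^ 24)) ^ 8 = 0 := by
    rw [s11_pow8, map_sub, map_add, map_add, ← s11_pow8, ← s11_pow8, ← s11_pow8, ← s11_pow8]
    linear_combination h
  exact sub_eq_zero.1 (pow_eq_zero_iff (by norm_num) |>.1 h8)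

open PowerSeries in
theorem s11_final (a : ℕ → ZMod 2)
    (h : pentagonalSeries (ZMod 2) ^ 232 * (expand 29 (by norm_num) (s11part (ZMod 2))) ^ 8
      + X ^ 10 * pentagonalSeries (ZMod 2) ^ 232 *
        (PowerSeries.mk fun m => coeff (29 * m + 10) (s11part (ZMod 2) ^ 8))
      = ∑ i ∈ Finset.range 10, C (a i) * (X * pentagonalSeries (ZMod 2) ^ 24) ^ i)
    (hD : ∀ n : ℕ, Odd n → ¬ IsSquare n → coeff n (X * pentagonalSeries (ZMod 2) ^ 24) = 0)
    (n B : ℕ) (hB : B ∈ ({3, 6, 10, 12, 13, 14, 15, 18, 20, 23, 24, 25, 26, 28} : Finset ℕ)) :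
      numRegularPartitions 232 (841 * n + 29 * B - 35) ≡
        numMultipartitions 21 (29 * n + B) [MOD 2] := by
  have hid := s11_identity a h
  set f := pentagonalSeries (ZMod 2) with hf
  set P := s11part (ZMod 2) with hP
  set e := expand 29 (by norm_num) P with he
  set S : PowerSeries (ZMod 2) := PowerSeries.mk fun m => coeff (29 * m + 23) P with hS
  have hPf : P * f = 1 := s11_part_mul_pent _
  have hfP : ∀ k, f ^ k * P ^ k = 1 := fun k => by rw [← mul_pow, mul_comm, hPf, one_pow]
  have h3 : f ^ 8 * e + X ^ 2 * (f ^ 8 * S) = P ^ 21 + X * f ^ 3 := by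
    have h21 := hfP 21
    linear_combination P ^ 21 * hid - (f ^ 8 * e + X ^ 2 * (f ^ 8 * S) - X * f ^ 3) * h21
  set N := 29 * n + B with hN
  have hB3 : 3 ≤ B := by
    have : ∀ B ∈ ({3, 6, 10, 12, 13, 14, 15, 18, 20, 23, 24, 25, 26, 28} : Finset ℕ), 3 ≤ B := by decide
    exact this B hB
  -- regular series
  have hreg := s11_reg (ZMod 2) 232 (by norm_num)
  set G : PowerSeries (ZMod 2) := PowerSeries.mk fun n => (numRegularPartitions 232 n : ZMod 2) with hG
  have hGe : G = expand 29 (by norm_num) (f ^ 8) * P := by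
    have : expand 232 (by norm_num) f = expand 29 (by norm_num) (f ^ 8) := by
      rw [s11_pow8, ← PowerSeries.expand_mul]
    rw [← this, ← hreg]
    linear_combination -G * hPf
  have hGc : ∀ m, coeff (29 * m + 23) G = coeff m (f ^ 8 * S) := by
    intro m
    rw [hGe, coeff_mul, coeff_mul]
    symm
    refine Finset.sum_of_injOn (fun x => (29 * x.1, 29 * x.2 + 23)) ?_ ?_ ?_ ?_
    · rintro ⟨x1, x2⟩ _ ⟨y1, y2⟩ _ hxy
      simp at hxy
      ext <;> simp <;> omega
    · rintro ⟨x1, x2⟩ hx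
      simp at hx ⊢
      omega
    · rintro ⟨x1, x2⟩ hx hx'
      simp at hx
      by_cases hd : 29 ∣ x1
      · exfalso
        apply hx'
        obtain ⟨y, rfl⟩ := hd
        refine ⟨(y, m - y), ?_, ?_⟩
        · simp; omega
        · simp; omega
      · rw [coeff_expand_of_not_dvd _ _ _ hd, zero_mul]
    · rintro ⟨x1, x2⟩ hx
      simp only [coeff_expand_mul, hS, coeff_mk]
  have hmulti := s11_multi (ZMod 2) 21
  rw [← hP] at hmulti
  have c1 : coeff N (P ^ 21) = (numMultipartitions 21 N : ZMod 2) := by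
    rw [← hmulti, coeff_mk]
  have c2 : coeff N (X ^ 2 * (f ^ 8 * S)) = (numRegularPartitions 232 (841 * n + 29 * B - 35) : ZMod 2) := by
    rw [coeff_X_pow_mul', if_pos (by omega), ← hGc, hG, coeff_mk]
    congr 2
    omega
  have c3 : coeff N (f ^ 8 * e) = 0 := by
    rw [coeff_mul]
    refine Finset.sum_eq_zero ?_
    rintro ⟨x1, x2⟩ hx
    rw [Finset.HasAntidiagonal.mem_antidiagonal] at hx
    simp only at hx
    by_contra hne
    have hd2 : 29 ∣ x2 := by
      by_contra hh
      exact hne (by simp only [he]; rw [coeff_expand_of_not_dvd _ _ _ hh, mul_zero])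
    obtain ⟨y, rfl⟩ := hd2
    have hd1 : 8 ∣ x1 := by
      by_contra hh
      exact hne (by simp only [s11_pow8]; rw [coeff_expand_of_not_dvd _ _ _ hh, zero_mul])
    obtain ⟨z, rfl⟩ := hd1
    have hz : z ∈ Set.range pentagonal := by
      by_contra hh
      refine hne ?_
      simp only [s11_pow8]
      rw [coeff_expand_mul, hf, coeff_pentagonalSeries_eq_zero _ hh, zero_mul]
    obtain ⟨k, rfl⟩ := hz
    have hk := two_mul_natCast_pentagonal k
    have hx' : (8 * (pentagonal k : ℤ) + 29 * y) = 29 * n + B := by exact_mod_cast hx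
    have hk29 : (2 * 4 * ((pentagonal k : ℤ) : ZMod 29)) = 4 * ((k : ZMod 29) * (3 * k - 1)) := by
      have := congrArg (fun t : ℤ => (4 * t : ZMod 29)) hk
      push_cast at this ⊢
      linear_combination this
    have hx29 : (8 * ((pentagonal k : ℤ) : ZMod 29)) = B := by
      have := congrArg (fun t : ℤ => (t : ZMod 29)) hx'
      push_cast at this ⊢
      have h29 : (29 : ZMod 29) = 0 := by decide
      linear_combination this + (n - y) * h29
    have hfin : (B : ZMod 29) = 4 * ((k : ZMod 29) * (3 * k - 1)) := by
      rw [← hk29, ← hx29]; ring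
    have : ∀ B ∈ ({3, 6, 10, 12, 13, 14, 15, 18, 20, 23, 24, 25, 26, 28} : Finset ℕ), 
        ∀ k : ZMod 29, (B : ZMod 29) ≠ 4 * (k * (3 * k - 1)) := by decide
    exact this B hB k hfin
  have c4 : coeff N (X * f ^ 3) = 0 := by
    have e8 : coeff (8 * N) (X ^ 7 * (X * f ^ 24)) = coeff N (X * f ^ 3) := by
      rw [show X ^ 7 * (X * f ^ 24) = (X * f ^ 3) ^ 8 by ring, s11_pow8, coeff_expand_mul]
    rw [← e8, coeff_X_pow_mul', if_pos (by omega)]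
    apply hD
    · exact ⟨4 * N - 4, by omega⟩
    · rintro ⟨r, hr⟩
      have hr' : 8 * (29 * n + B) = r * r + 7 := by omega
      have := congrArg (fun t : ℕ => (t : ZMod 29)) hr'
      push_cast at this
      have h29 : (29 : ZMod 29) = 0 := by decide
      have hfin : 8 * (B : ZMod 29) = (r : ZMod 29) * r + 7 := by
        linear_combination this - 8 * n * h29
      have hdec : ∀ B ∈ ({3, 6, 10, 12, 13, 14, 15, 18, 20, 23, 24, 25, 26, 28} : Finset ℕ), 
        ∀ r : ZMod 29, 8 * (B : ZMod 29) ≠ r * r + 7 := by decide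
      exact hdec B hB r hfin
  have := congrArg (coeff N) h3
  rw [map_add, map_add, c1, c2, c3, c4, zero_add, add_zero] at this
  exact (ZMod.natCast_eq_natCast_iff _ _ 2).1 this

/-- `F`, evaluated at `q`, converges to `v`. -/
def s11Ev (F : PowerSeries ℂ) (q v : ℂ) : Prop :=
  HasSum (fun n => PowerSeries.coeff n F * q ^ n) v

open PowerSeries in
theorem s11Ev_add {F G : PowerSeries ℂ} {q v w : ℂ} (hF : s11Ev F q v) (hG : s11Ev G q w) :
    s11Ev (F + G) q (v + w) := by
  unfold s11Ev at *
  simpa [add_mul] using hF.add hG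

open PowerSeries in
theorem s11Ev_mul {F G : PowerSeries ℂ} {q v w : ℂ} (hF : s11Ev F q v) (hG : s11Ev G q w) :
    s11Ev (F * G) q (v * w) := by
  unfold s11Ev at *
  have e : (fun n => coeff n (F * G) * q ^ n) = fun n => ∑ kl ∈ Finset.HasAntidiagonal.antidiagonal n,
      (coeff kl.1 F * q ^ kl.1) * (coeff kl.2 G * q ^ kl.2) := by
    funext n
    rw [coeff_mul, Finset.sum_mul]
    refine Finset.sum_congr rfl fun x hx => ?_
    rw [← Finset.HasAntidiagonal.mem_antidiagonal.1 hx, pow_add]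
    ring
  rw [e]
  have hs := (summable_norm_sum_mul_antidiagonal_of_summable_norm hF.summable.norm hG.summable.norm).of_norm
  have ht := tsum_mul_tsum_eq_tsum_sum_antidiagonal_of_summable_norm hF.summable.norm hG.summable.norm
  rw [hF.tsum_eq, hG.tsum_eq] at ht
  rw [ht]
  exact hs.hasSum

open PowerSeries in
theorem s11Ev_C (a q : ℂ) : s11Ev (C a) q a := by
  unfold s11Ev
  convert hasSum_single (f := fun n => coeff n (C a) * q ^ n) 0 ?_ using 1
  · simp
  · intro n hn
    simp [coeff_C, hn]

open PowerSeries in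
theorem s11Ev_one (q : ℂ) : s11Ev 1 q 1 := by
  simpa using s11Ev_C 1 q

open PowerSeries in
theorem s11Ev_pow {F : PowerSeries ℂ} {q v : ℂ} (hF : s11Ev F q v) (n : ℕ) :
    s11Ev (F ^ n) q (v ^ n) := by
  induction n with
  | zero => simpa using s11Ev_one q
  | succ n ih => rw [pow_succ, pow_succ]; exact s11Ev_mul ih hF

open PowerSeries in
theorem s11Ev_X (q : ℂ) : s11Ev X q q := by
  unfold s11Ev
  convert hasSum_single (f := fun n => coeff n (X : PowerSeries ℂ) * q ^ n) 1 ?_ using 1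
  · simp
  · intro n hn
    simp [coeff_X, hn]

open PowerSeries in
theorem s11Ev_expand {F : PowerSeries ℂ} {q v : ℂ} (m : ℕ) (hm : m ≠ 0) (hF : s11Ev F (q ^ m) v) :
    s11Ev (expand m hm F) q v := by
  unfold s11Ev at *
  have hinj : Function.Injective (fun n : ℕ => m * n) := fun a b h => Nat.eq_of_mul_eq_mul_left (Nat.pos_of_ne_zero hm) h
  rw [← hinj.hasSum_iff]
  · convert hF using 2 with n
    simp only [Function.comp, coeff_expand_mul, pow_mul]
  · intro x hx
    rw [coeff_expand_of_not_dvd, zero_mul]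
    rintro ⟨y, rfl⟩
    exact hx ⟨y, rfl⟩

open PowerSeries in
theorem s11Ev_unique {F G : PowerSeries ℂ} {v : ℂ → ℂ} (hF : ∀ q, ‖q‖ < 1 → s11Ev F q (v q))
    (hG : ∀ q, ‖q‖ < 1 → s11Ev G q (v q)) : F = G := by
  have key : ∀ F : PowerSeries ℂ, (∀ q, ‖q‖ < 1 → s11Ev F q (v q)) →
      HasFPowerSeriesOnBall v (.ofScalars ℂ (fun n => coeff n F)) 0 1 := by
    intro F hF
    constructor
    · refine le_of_forall_lt_imp_le_of_dense fun r hr ↦ ?_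
      lift r to NNReal using hr.ne_top
      apply FormalMultilinearSeries.le_radius_of_summable
      have := (hF (r : ℂ) (by simpa using hr)).summable.norm
      simpa [norm_mul] using this
    · simp
    · intro y hy
      rw [← ENNReal.coe_one, Metric.eball_coe, NNReal.coe_one, mem_ball_zero_iff] at hy
      have := hF y hy
      unfold s11Ev at this
      simpa [mul_comm] using this
  have := (key F hF).hasFPowerSeriesAt.eq_formalMultilinearSeries (key G hG).hasFPowerSeriesAt
  ext n
  simpa using congr_arg (FormalMultilinearSeries.coeff · n) this

/-- The Euler product at a complex number. -/
noncomputable def s11phi (q : ℂ) : ℂ := ∏' n : ℕ, (1 - q ^ (n + 1))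

theorem s11_phi_ne_zero {q : ℂ} (hq : ‖q‖ < 1) : s11phi q ≠ 0 := by
  refine tprod_one_add_ne_zero_of_summable (f := fun n ↦ -q ^ (n + 1)) ?_ ?_
  · intro i h
    have h1 : q ^ (i + 1) = 1 := by linear_combination -h
    have h2 : ‖q ^ (i + 1)‖ < 1 := by
      rw [norm_pow]; exact pow_lt_one₀ (norm_nonneg _) hq (by omega)
    rw [h1] at h2
    simp at h2
  · simpa using (summable_nat_add_iff 1).mpr (summable_geometric_of_lt_one (norm_nonneg _) hq)

open Filter Topology in
theorem s11_tprod_pent {q : ℂ} (hq : ‖q‖ < 1) :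
    s11phi q = ∑' (k : ℕ), (-1) ^ k * (q ^ pentagonal (-k) - q ^ pentagonal (k + 1)) ∧
    Summable fun k : ℕ ↦ (-1) ^ k * (q ^ pentagonal (-k) - q ^ pentagonal (k + 1)) := by
  set r := ‖q‖ with hr
  have hr0 : 0 ≤ r := norm_nonneg _
  have hgeo := summable_geometric_of_lt_one hr0 hq
  set M := Real.exp (∑' n : ℕ, r ^ n) with hM
  have hprod : ∀ k n : ℕ, ‖∏ i ∈ Finset.range (n + 1), (1 - q ^ (k + i + 1))‖ ≤ M := by
    intro k n
    calc ‖∏ i ∈ Finset.range (n + 1), (1 - q ^ (k + i + 1))‖ 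
        ≤ ∏ i ∈ Finset.range (n + 1), ‖1 - q ^ (k + i + 1)‖ := Finset.norm_prod_le _ _
      _ ≤ ∏ i ∈ Finset.range (n + 1), Real.exp (r ^ i) := by
        refine Finset.prod_le_prod (fun _ _ => norm_nonneg _) fun i _ => ?_
        calc ‖1 - q ^ (k + i + 1)‖ ≤ ‖(1 : ℂ)‖ + ‖q ^ (k + i + 1)‖ := norm_sub_le _ _
          _ = r ^ (k + i + 1) + 1 := by rw [norm_one, norm_pow, add_comm]
          _ ≤ r ^ i + 1 := by gcongr 1; exact pow_le_pow_of_le_one hr0 hq.le (by omega)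
          _ ≤ _ := Real.add_one_le_exp _
      _ = Real.exp (∑ i ∈ Finset.range (n + 1), r ^ i) := (Real.exp_sum _ _).symm
      _ ≤ M := Real.exp_le_exp.2 (hgeo.sum_le_tsum _ fun i _ => pow_nonneg hr0 i)
  have hterm : ∀ k n : ℕ, ‖q ^ ((k + 1) * n) * ∏ i ∈ Finset.range (n + 1), (1 - q ^ (k + i + 1))‖ ≤ r ^ n * M := by
    intro k n
    rw [norm_mul, norm_pow]
    gcongr ?_ * ?_
    · exact pow_le_pow_of_le_one hr0 hq.le (Nat.le_mul_of_pos_left _ (by omega))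
    · exact hprod k n
  have hrhs : Summable fun k : ℕ ↦ (-1) ^ k * (q ^ pentagonal (-k) - q ^ pentagonal (k + 1)) := by
    refine Summable.of_norm_bounded (g := fun k => r ^ k * 2) (hgeo.mul_right 2) fun k => ?_
    have h1 := two_mul_natCast_pentagonal_neg k
    have h2 := two_mul_natCast_pentagonal (k + 1)
    have l1 : k ≤ pentagonal (-k) := by zify; nlinarith
    have l2 : k ≤ pentagonal (k + 1) := by zify; nlinarith
    calc _ = ‖q ^ pentagonal (-k) - q ^ pentagonal (k + 1)‖ := by simp
      _ ≤ ‖q ^ pentagonal (-k)‖ + ‖q ^ pentagonal (k + 1)‖ := norm_sub_le _ _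
      _ = r ^ pentagonal (-k) + r ^ pentagonal (k + 1) := by rw [norm_pow, norm_pow]
      _ ≤ r ^ k + r ^ k := by
        gcongr ?_ + ?_
        · exact pow_le_pow_of_le_one hr0 hq.le l1
        · exact pow_le_pow_of_le_one hr0 hq.le l2
      _ = _ := by ring
  refine ⟨Pentagonal.tprod_one_sub_pow ?_ ?_ ?_ hrhs ?_, hrhs⟩
  · exact tendsto_pow_atTop_nhds_zero_of_norm_lt_one hq
  · intro k
    exact Summable.of_norm_bounded (hgeo.mul_right M) (hterm k)
  · intro k
    apply multipliable_one_add_of_summable (f := fun n ↦ -q ^ (n + k + 1))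
    simpa [add_assoc] using (summable_nat_add_iff (k + 1)).mpr hgeo
  · refine squeeze_zero_norm (a := fun k => r ^ k * (∑' n, r ^ n * M)) (fun k => ?_) ?_
    · rw [norm_mul, norm_mul, norm_pow, norm_neg, norm_one, one_pow, one_mul, norm_pow]
      gcongr ?_ * ?_
      · refine pow_le_pow_of_le_one hr0 hq.le ?_
        rw [Nat.le_div_iff_mul_le (by norm_num)]
        nlinarith
      · exact tsum_of_norm_bounded (hgeo.mul_right M).hasSum (hterm k)
    · simpa using (tendsto_pow_atTop_nhds_zero_of_lt_one hr0 hq).mul_const (∑' n, r ^ n * M)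

open PowerSeries in
theorem s11Ev_pent {q : ℂ} (hq : ‖q‖ < 1) : s11Ev (pentagonalSeries ℂ) q (s11phi q) := by
  obtain ⟨h1, h2⟩ := s11_tprod_pent hq
  have hsum : Summable fun n => coeff n (pentagonalSeries ℂ) * q ^ n := by
    refine Summable.of_norm_bounded (summable_geometric_of_lt_one (norm_nonneg q) hq) fun n => ?_
    rw [norm_mul, norm_pow]
    refine mul_le_of_le_one_left (by positivity) ?_
    by_cases hn : n ∈ Set.range pentagonal
    · obtain ⟨k, rfl⟩ := hn
      rw [coeff_pentagonalSeries_pentagonal]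
      rcases Int.even_or_odd k with h | h
      · simp [Int.negOnePow_even _ h]
      · simp [Int.negOnePow_odd _ h]
    · simp [coeff_pentagonalSeries_eq_zero ℂ hn]
  have h3 := hsum.hasSum
  rw [← pentagonal_injective.hasSum_iff fun n hn ↦ by simp [coeff_pentagonalSeries_eq_zero ℂ hn]] at h3
  rw [← neg_injective.hasSum_iff (fun x hx ↦ by absurd hx; use -x; simp)] at h3
  have h4 := h3.nat_add_neg_add_one
  have h5 := h2.hasSum
  rw [← h1] at h5
  have h6 := h5.unique (by
    convert h4 using 2 with k
    simp only [Function.comp_apply, neg_neg, coeff_pentagonalSeries_pentagonal]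
    have e : ((k : ℤ) + 1).natAbs = k + 1 := by omega
    simp [e]
    ring)
  unfold s11Ev
  rw [h6]
  exact hsum.hasSum

open PowerSeries in
theorem s11Ev_part {q : ℂ} (hq : ‖q‖ < 1) : s11Ev (s11part ℂ) q (s11phi q)⁻¹ := by
  have hd : DifferentiableOn ℂ (fun q => (s11phi q)⁻¹) (Metric.ball (0 : ℂ) 1) :=
    ModularForm.differentiableOn_tprod_one_sub_pow.inv fun q hq => s11_phi_ne_zero (by simpa using hq)
  let c : PowerSeries ℂ := PowerSeries.mk fun n => (n.factorial : ℂ)⁻¹ * iteratedDeriv n (fun q => (s11phi q)⁻¹) 0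
  have hc : ∀ q : ℂ, ‖q‖ < 1 → s11Ev c q (s11phi q)⁻¹ := by
    intro q hq
    have := Complex.hasSum_taylorSeries_on_ball hd (z := q) (by simpa using hq)
    unfold s11Ev
    have e : (fun n => coeff n c * q ^ n) = fun n : ℕ =>
        (n.factorial : ℂ)⁻¹ • (q - 0) ^ n • iteratedDeriv n (fun q => (s11phi q)⁻¹) 0 := by
      funext n
      simp [c]
      ring
    rw [e]
    exact this
  have h1 : c * pentagonalSeries ℂ = 1 := by
    refine s11Ev_unique (v := fun _ => 1) (fun q hq => ?_) (fun q hq => s11Ev_one q)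
    have := s11Ev_mul (hc q hq) (s11Ev_pent hq)
    rwa [inv_mul_cancel₀ (s11_phi_ne_zero hq)] at this
  have h2 := s11_part_mul_pent ℂ
  have : s11part ℂ = c := by
    linear_combination c * h2 - s11part ℂ * h1
  rw [this]
  exact hc q hq

section s11G
open UpperHalfPlane hiding I
open ModularForm Complex PowerSeries MatrixGroups CongruenceSubgroup Function

theorem s11_norm_q (τ : ℍ) : ‖Periodic.qParam 1 τ‖ < 1 := by
  simpa using UpperHalfPlane.norm_qParam_lt_one 1 τ

theorem s11_qExp_eq {k : ℤ} (f : ModularForm 𝒮ℒ k) (F : PowerSeries ℂ)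
    (h : ∀ τ : ℍ, s11Ev F (Periodic.qParam 1 τ) (f τ)) : qExpansion 1 f = F := by
  ext m
  refine (ModularFormClass.qExpansion_coeff_unique (c := fun m => coeff m F) one_pos
    one_mem_strictPeriods_SL (f := f) ?_ m).symm
  intro τ
  simpa [s11Ev] using h τ

theorem s11_map_pent (S : Type*) [CommRing S] :
    PowerSeries.map (Int.castRingHom S) (pentagonalSeries ℤ) = pentagonalSeries S := by
  ext n
  rw [coeff_map]
  by_cases h : n ∈ Set.range pentagonal
  · obtain ⟨k, rfl⟩ := h
    simp
  · rw [coeff_pentagonalSeries_eq_zero _ h, coeff_pentagonalSeries_eq_zero _ h]; simp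

theorem s11_map_part (S : Type*) [CommRing S] :
    PowerSeries.map (Int.castRingHom S) (s11part ℤ) = s11part S := by
  ext n
  simp [s11part]

theorem s11_eta_eq (z : ℍ) : ModularForm.eta z = Periodic.qParam 24 z * s11phi (Periodic.qParam 1 z) := by
  rw [ModularForm.eta, s11phi]

theorem s11_qExp_disc : qExpansion 1 ModularForm.discriminant = X * pentagonalSeries ℂ ^ 24 := by
  ext m
  have := (ModularFormClass.qExpansion_coeff_unique (c := fun m => coeff m (X * pentagonalSeries ℂ ^ 24)) one_pos
    one_mem_strictPeriods_SL (f := CuspForm.discriminant) ?_ m).symm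
  · exact this
  intro τ
  have := s11Ev_mul (s11Ev_X (Periodic.qParam 1 τ)) (s11Ev_pow (s11Ev_pent (s11_norm_q τ)) 24)
  have h2 : CuspForm.discriminant τ = Periodic.qParam 1 τ * s11phi (Periodic.qParam 1 τ) ^ 24 := by
    change ModularForm.discriminant τ = _
    rw [ModularForm.discriminant, s11_eta_eq, mul_pow]
    congr 1
    simp [Periodic.qParam, ← exp_nat_mul]
    ring_nf
  rw [h2]
  simpa [s11Ev] using this

end s11G

section s11C
open UpperHalfPlane hiding I
open ModularForm Complex PowerSeries MatrixGroups CongruenceSubgroup Function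

/-- the series with coefficients `σ_k(n)` -/
noncomputable def s11sig (k : ℕ) : PowerSeries ℤ :=
  PowerSeries.mk fun n => (ArithmeticFunction.sigma k n : ℤ)

theorem s11_qExp_E4 : qExpansion 1 E₄ =
    PowerSeries.map (Int.castRingHom ℂ) (1 + C 240 * s11sig 3) := by
  ext n
  rw [EisensteinSeries.E_qExpansion_coeff _ ⟨2, rfl⟩, coeff_map, map_add, coeff_C_mul]
  by_cases h : n = 0
  · simp [h, s11sig]
  · norm_num [h, s11sig, show bernoulli 4 = -1 / 30 by decide +kernel, coeff_one]

theorem s11_qExp_E6 : qExpansion 1 E₆ =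
    PowerSeries.map (Int.castRingHom ℂ) (1 - C 504 * s11sig 5) := by
  ext n
  rw [EisensteinSeries.E_qExpansion_coeff _ ⟨3, rfl⟩, coeff_map, map_sub, coeff_C_mul]
  by_cases h : n = 0
  · simp [h, s11sig]
  · norm_num [h, s11sig, show bernoulli 6 = 1 / 42 by decide +kernel, coeff_one]

theorem s11_map_inj {F G : PowerSeries ℤ}
    (h : PowerSeries.map (Int.castRingHom ℂ) F = PowerSeries.map (Int.castRingHom ℂ) G) : F = G :=
  PowerSeries.map_injective _ Int.cast_injective h

theorem s11_E4_mod : PowerSeries.map (Int.castRingHom (ZMod 2)) (1 + C 240 * s11sig 3) = 1 := by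
  rw [map_add, map_mul, PowerSeries.map_C]
  rw [show (Int.castRingHom (ZMod 2)) 240 = 0 by decide]
  simp

theorem s11_C_red (m : ℕ) (k : ℤ) (hk : k = 12 * m + 4) (f : ModularForm 𝒮ℒ k)
    (F : PowerSeries ℤ) (hF : qExpansion 1 f = PowerSeries.map (Int.castRingHom ℂ) F) :
    ∃ (g : ModularForm 𝒮ℒ k) (G : PowerSeries ℤ),
      qExpansion 1 g = PowerSeries.map (Int.castRingHom ℂ) (X * G) ∧
      F = C (coeff 0 F) * (1 + C 240 * s11sig 3) ^ (3 * m + 1) + X * G := by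
  let e : ModularForm 𝒮ℒ k := ModularForm.mcast (a := ((3 * m + 1 : ℕ) : ℤ) * 4)
    (by rw [hk]; push_cast; ring) (E₄.pow (3 * m + 1))
  have he : qExpansion 1 e =
      PowerSeries.map (Int.castRingHom ℂ) ((1 + C 240 * s11sig 3) ^ (3 * m + 1)) := by
    rw [map_pow, ← s11_qExp_E4]
    exact ModularForm.qExpansion_pow one_pos one_mem_strictPeriods_SL _ _
  have hg : qExpansion 1 (f - ((coeff 0 F : ℤ) : ℂ) • e : ModularForm 𝒮ℒ k) = PowerSeries.map (Int.castRingHom ℂ)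
      (F - C (coeff 0 F) * (1 + C 240 * s11sig 3) ^ (3 * m + 1)) := by
    rw [FunLike.coe_sub, ModularForm.qExpansion_sub one_pos one_mem_strictPeriods_SL, hF,
      FunLike.coe_smul, ModularForm.qExpansion_smul one_pos one_mem_strictPeriods_SL, he]
    rw [map_sub, map_mul, PowerSeries.map_C, PowerSeries.smul_eq_C_mul]
    simp
  have h0 : X ∣ F - C (coeff 0 F) * (1 + C 240 * s11sig 3) ^ (3 * m + 1) := by
    rw [X_dvd_iff]
    simp [s11sig]
  obtain ⟨G, hG⟩ := h0
  refine ⟨f - ((coeff 0 F : ℤ) : ℂ) • e, G, by rw [hg, hG], by rw [← hG]; ring⟩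

theorem s11_C (m : ℕ) : ∀ (k : ℤ) (_ : k = 12 * m + 4) (f : ModularForm 𝒮ℒ k) (F : PowerSeries ℤ)
    (_ : qExpansion 1 f = PowerSeries.map (Int.castRingHom ℂ) F),
    ∃ a : ℕ → ZMod 2, PowerSeries.map (Int.castRingHom (ZMod 2)) F =
      ∑ i ∈ Finset.range (m + 1), C (a i) * (X * pentagonalSeries (ZMod 2) ^ 24) ^ i := by
  induction m with
  | zero =>
    intro k hk f F hF
    obtain ⟨g, G, hg, hFG⟩ := s11_C_red 0 k hk f F hF
    have hcusp : (qExpansion 1 g).coeff 0 = 0 := by simp [hg]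
    have hr := rank_zero_iff_forall_zero.mp
      (CuspForm.rank_eq_zero_of_weight_lt_twelve (k := k) (by rw [hk]; norm_num))
      (toCuspForm g hcusp)
    have hg0 : (g : ℍ → ℂ) = 0 := by
      ext z
      have := DFunLike.congr_fun hr z
      simpa using this
    have h0 : X * G = 0 := by
      apply s11_map_inj
      rw [← hg, hg0, qExpansion_zero, map_zero]
    refine ⟨fun _ => ((coeff 0 F : ℤ) : ZMod 2), ?_⟩
    rw [h0, add_zero] at hFG
    rw [hFG, map_mul, map_pow, s11_E4_mod, PowerSeries.map_C]
    simp [s11sig]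
  | succ m ih =>
    intro k hk f F hF
    obtain ⟨g, G, hg, hFG⟩ := s11_C_red (m + 1) k hk f F hF
    have hcusp : (qExpansion 1 g).coeff 0 = 0 := by simp [hg]
    have hq := ModularForm.qExpansion_eq_qExpansion_discriminant_mul g hcusp
    rw [s11_qExp_disc, hg, map_mul, PowerSeries.map_X, mul_assoc] at hq
    have hq2 := mul_left_cancel₀ PowerSeries.X_ne_zero hq
    have hP : ∀ R : Type, ∀ [CommRing R] [Nontrivial R],
        s11part R ^ 24 * pentagonalSeries R ^ 24 = 1 := by
      intro R _ _
      rw [← mul_pow, s11_part_mul_pent, one_pow]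
    obtain ⟨a, ha⟩ := ih (k - 12) (by rw [hk]; push_cast; ring) _ (s11part ℤ ^ 24 * G) (by
      rw [map_mul, map_pow, s11_map_part, hq2, ← mul_assoc, hP, one_mul])
    have hG : PowerSeries.map (Int.castRingHom (ZMod 2)) G = pentagonalSeries (ZMod 2) ^ 24 *
        ∑ i ∈ Finset.range (m + 1), C (a i) * (X * pentagonalSeries (ZMod 2) ^ 24) ^ i := by
      rw [← ha, map_mul, map_pow, s11_map_part, ← mul_assoc, mul_comm (_ ^ 24) (_ ^ 24), hP,
        one_mul]
    refine ⟨fun i => if i = 0 then ((coeff 0 F : ℤ) : ZMod 2) else a (i - 1), ?_⟩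
    rw [Finset.sum_range_succ']
    rw [hFG, map_add, map_mul, map_mul, hG, map_pow, s11_E4_mod, PowerSeries.map_C,
      PowerSeries.map_X, ← mul_assoc, Finset.mul_sum, add_comm]
    congr 1
    · refine Finset.sum_congr rfl fun i _ => ?_
      simp only [Nat.add_eq_zero_iff, one_ne_zero, and_false, if_false, Nat.add_sub_cancel]
      ring
    · simp [s11sig]

end s11C

section s11E
open UpperHalfPlane hiding I
open ModularForm Complex PowerSeries MatrixGroups CongruenceSubgroup Function

theorem s11_D_int : C 12 * (X * pentagonalSeries ℤ ^ 24) = C 5 * s11sig 3 + C 7 * s11sig 5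
    + C 12 * (C 100 * s11sig 3 ^ 2 + C 8000 * s11sig 3 ^ 3 - C 147 * s11sig 5 ^ 2) := by
  have h1 : (1728 : ℂ) • (CuspForm.discriminant : ℍ → ℂ) = ⇑(E₄.pow 3) - ⇑(E₆.pow 2) := by
    ext z
    have := discriminant_eq_E₄_cube_sub_E₆_sq z
    change (1728 : ℂ) * ModularForm.discriminant z = _
    rw [this, Pi.sub_apply, ModularForm.coe_pow, ModularForm.coe_pow, Pi.pow_apply, Pi.pow_apply]
    ring
  have h2 : C 1728 * (X * pentagonalSeries ℤ ^ 24) =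
      (1 + C 240 * s11sig 3) ^ 3 - (1 - C 504 * s11sig 5) ^ 2 := by
    apply s11_map_inj
    rw [map_sub, map_pow, map_pow, ← s11_qExp_E4, ← s11_qExp_E6,
      ← ModularForm.qExpansion_pow one_pos one_mem_strictPeriods_SL,
      ← ModularForm.qExpansion_pow one_pos one_mem_strictPeriods_SL,
      ← ModularForm.qExpansion_sub one_pos one_mem_strictPeriods_SL, ← h1,
      ModularForm.qExpansion_smul one_pos one_mem_strictPeriods_SL, CuspForm.coe_discriminant,
      s11_qExp_disc, PowerSeries.smul_eq_C_mul, map_mul, map_mul, map_pow, s11_map_pent,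
      PowerSeries.map_C, PowerSeries.map_X]
    rfl
  have h3 : (C 144 : PowerSeries ℤ) ≠ 0 := by
    rw [Ne, map_eq_zero_iff _ PowerSeries.C_injective]; norm_num
  apply mul_left_cancel₀ h3
  have e : ∀ a : ℕ, (C (a : ℤ) : PowerSeries ℤ) = (a : PowerSeries ℤ) := fun a => by simp
  have e5 := e 5; have e7 := e 7; have e12 := e 12; have e100 := e 100; have e8 := e 8000
  have e147 := e 147; have e144 := e 144; have e1728 := e 1728; have e240 := e 240
  have e504 := e 504
  push_cast at e5 e7 e12 e100 e8 e147 e144 e1728 e240 e504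
  rw [e1728, e240, e504] at h2
  rw [e5, e7, e12, e100, e8, e147, e144]
  linear_combination h2

theorem s11_sq_odd (F : PowerSeries ℤ) (n : ℕ) (hn : Odd n) : (2 : ℤ) ∣ coeff n (F ^ 2) := by
  refine (ZMod.intCast_zmod_eq_zero_iff_dvd _ 2).1 ?_
  rw [sq, coeff_mul]
  push_cast
  refine Finset.sum_involution (fun x _ => (x.2, x.1)) ?_ ?_ ?_ ?_
  · intro x _
    rw [mul_comm]
    exact CharTwo.add_self_eq_zero _
  · intro x hx _ h
    rw [Finset.HasAntidiagonal.mem_antidiagonal] at hx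
    have := congrArg Prod.fst h
    simp only at this
    obtain ⟨k, hk⟩ := hn
    omega
  · intro x hx
    rw [Finset.HasAntidiagonal.mem_antidiagonal] at hx ⊢
    simp only
    omega
  · intro x _; rfl

theorem s11_div_even (n : ℕ) (hn : 0 < n) (hs : ¬ IsSquare n) : 2 ∣ n.divisors.card := by
  rw [← ZMod.natCast_eq_zero_iff, ← mul_one (Finset.card _ : ZMod 2), ← nsmul_eq_mul,
    ← Finset.sum_const]
  refine Finset.sum_involution (fun d _ => n / d) ?_ ?_ ?_ ?_
  · intro x _
    decide
  · intro d hd _ h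
    apply hs
    refine ⟨d, ?_⟩
    have := Nat.div_mul_cancel (Nat.dvd_of_mem_divisors hd)
    rw [h] at this
    exact this.symm
  · intro d hd
    exact Nat.mem_divisors.2 ⟨Nat.div_dvd_of_dvd (Nat.dvd_of_mem_divisors hd), hn.ne'⟩
  · intro d hd
    exact Nat.div_div_self (Nat.dvd_of_mem_divisors hd) hn.ne'

theorem s11_hD (n : ℕ) (ho : Odd n) (hs : ¬ IsSquare n) :
    coeff n (X * pentagonalSeries (ZMod 2) ^ 24) = 0 := by
  have h1 := congrArg (coeff n) s11_D_int
  obtain ⟨u, hu⟩ := s11_sq_odd (s11sig 5) n ho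
  obtain ⟨v, hv⟩ := s11_div_even n ho.pos hs
  have h2 : (24 : ℤ) ∣ 5 * coeff n (s11sig 3) + 7 * coeff n (s11sig 5) := by
    refine (ZMod.intCast_zmod_eq_zero_iff_dvd _ 24).1 ?_
    simp only [s11sig, coeff_mk, ArithmeticFunction.sigma_apply]
    push_cast
    rw [Finset.mul_sum, Finset.mul_sum, ← Finset.sum_add_distrib]
    have : ∀ d ∈ n.divisors, (5 * (d : ZMod 24) ^ 3 + 7 * (d : ZMod 24) ^ 5) = 12 := by
      intro d hd
      have hod : Odd d := ho.of_dvd_nat (Nat.dvd_of_mem_divisors hd)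
      obtain ⟨w, rfl⟩ := hod
      push_cast
      generalize (w : ZMod 24) = w
      revert w
      decide
    rw [Finset.sum_congr rfl this, Finset.sum_const, hv, nsmul_eq_mul]
    push_cast
    rw [mul_right_comm]
    rw [show (2 * 12 : ZMod 24) = 0 by decide, zero_mul]
  obtain ⟨w, hw⟩ := h2
  simp only [coeff_C_mul, map_add, map_sub] at h1
  rw [hw, hu] at h1
  have h3 : (2 : ℤ) ∣ coeff n (X * pentagonalSeries ℤ ^ 24) := by omega
  have h4 : X * pentagonalSeries (ZMod 2) ^ 24 =
      PowerSeries.map (Int.castRingHom (ZMod 2)) (X * pentagonalSeries ℤ ^ 24) := by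
    rw [map_mul, map_pow, s11_map_pent, PowerSeries.map_X]
  rw [h4, coeff_map]
  exact (ZMod.intCast_zmod_eq_zero_iff_dvd _ 2).2 h3

end s11E

section s11B1
open UpperHalfPlane hiding I
open ModularForm Complex MatrixGroups CongruenceSubgroup Function

/-- the eighth power of the Dedekind eta function -/
noncomputable def s11E (z : ℂ) : ℂ := ModularForm.eta z ^ 8

theorem s11E_eq {z : ℂ} (hz : 0 < z.im) :
    s11E z = exp (2 * Real.pi * I * z / 3) * s11phi (exp (2 * Real.pi * I * z)) ^ 8 := by
  have := s11_eta_eq ⟨z, hz⟩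
  simp only at this
  rw [s11E, this, mul_pow]
  congr 1
  · rw [Periodic.qParam, ← exp_nat_mul]
    congr 1
    push_cast
    ring
  · simp [Periodic.qParam]

theorem s11E_ne {z : ℂ} (hz : 0 < z.im) : s11E z ≠ 0 := pow_ne_zero _ (eta_ne_zero hz)

/-- the additive character on `ZMod 3` -/
noncomputable def s11w : AddChar (ZMod 3) ℂ := ZMod.stdAddChar

theorem s11E_T {z : ℂ} (hz : 0 < z.im) : s11E (z + 1) = s11w 1 * s11E z := by
  rw [s11E_eq hz, s11E_eq (by simpa using hz)]
  have h1 : exp (2 * Real.pi * I * (z + 1)) = exp (2 * Real.pi * I * z) := by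
    rw [mul_add, mul_one]
    exact exp_periodic _
  have h2 : s11w 1 = exp (2 * Real.pi * I / 3) := by
    have := ZMod.stdAddChar_coe (N := 3) 1
    rw [s11w]
    simpa using this
  rw [h1, h2, ← mul_assoc, ← exp_add]
  congr 3
  ring

theorem s11E_S {z : ℂ} (hz : 0 < z.im) : s11E (-1 / z) = z ^ 4 * s11E z := by
  have hz0 : z ≠ 0 := by rintro rfl; simp at hz
  have he : ModularForm.eta (-1 / z) = (sqrt I)⁻¹ * (sqrt z * ModularForm.eta z) := by
    simpa using eta_comp_eq_csqrt_I_inv hz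
  have hs : ∀ {w : ℂ}, w ≠ 0 → sqrt w ^ 8 = w ^ 4 := by
    intro w hw
    rw [sqrt, ← Complex.cpow_nat_mul]
    norm_num
  rw [s11E, he, mul_pow, mul_pow, inv_pow, hs hz0, hs I_ne_zero, I_pow_four, s11E]
  simp

/-- the transformation law of `s11E` under an integer matrix -/
def s11P (a b c d : ℤ) : Prop := ∀ z : ℂ, 0 < z.im →
  s11E ((a * z + b) / (c * z + d)) =
    s11w ((b : ZMod 3) * d * (1 - c ^ 2) + c * (a + d)) * (c * z + d) ^ 4 * s11E z

theorem s11_mod3 {a b c d : ℤ} (h : a * d - b * c = 1) :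
    (a : ZMod 3) * d - b * c = 1 := by
  have := congrArg (Int.cast : ℤ → ZMod 3) h
  push_cast at this
  exact this

theorem s11P_S {a b c d : ℤ} (hd : a * d - b * c = 1) (h : s11P a b c d) :
    s11P b (-a) d (-c) := by
  intro z hz
  have hz0 : z ≠ 0 := by rintro rfl; simp at hz
  have hi : 0 < (-1 / z).im := by
    have := im_inv_neg_coe_pos ⟨z, hz⟩
    rw [show -1 / z = (-z)⁻¹ by rw [neg_div, one_div, inv_neg]]
    exact this
  have h1 := h (-1 / z) hi
  rw [s11E_S hz] at h1
  have e1 : ((a : ℂ) * (-1 / z) + b) / (c * (-1 / z) + d) = (b * z + (-a : ℤ)) / (d * z + (-c : ℤ)) := by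
    rw [show (a : ℂ) * (-1 / z) + b = (b * z + (-a : ℤ)) / z by push_cast; field_simp; ring,
      show (c : ℂ) * (-1 / z) + d = (d * z + (-c : ℤ)) / z by push_cast; field_simp; ring,
      div_div_div_cancel_right₀ hz0]
  rw [e1] at h1
  rw [h1]
  have e2 : ((c : ℂ) * (-1 / z) + d) ^ 4 * z ^ 4 = (d * z + (-c : ℤ)) ^ 4 := by
    rw [← mul_pow]
    congr 1
    push_cast
    field_simp
    ring
  have e3 : ((-a : ℤ) : ZMod 3) * ((-c : ℤ) : ZMod 3) * (1 - (d : ZMod 3) ^ 2)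
      + d * (b + ((-c : ℤ) : ZMod 3)) = (b : ZMod 3) * d * (1 - c ^ 2) + c * (a + d) := by
    have := s11_mod3 hd
    push_cast
    generalize (a : ZMod 3) = a, (b : ZMod 3) = b, (c : ZMod 3) = c, (d : ZMod 3) = d at this ⊢
    revert a b c d
    decide
  rw [e3, ← e2]
  ring

theorem s11P_neg {a b c d : ℤ} (h : s11P a b c d) : s11P (-a) (-b) (-c) (-d) := by
  intro z hz
  have h1 := h z hz
  push_cast
  rw [show (-(a : ℂ) * z + -b) / (-c * z + -d) = (a * z + b) / (c * z + d) by
    rw [← neg_div_neg_eq]; congr 1 <;> ring, h1]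
  congr 1
  congr 1
  · congr 1; ring
  · ring

theorem s11P_T {a b c d : ℤ} (hd : a * d - b * c = 1) (h : s11P a b c d) :
    s11P a (a + b) c (c + d) := by
  intro z hz
  have h1 := h (z + 1) (by simpa using hz)
  rw [s11E_T hz] at h1
  have e3 : ((a + b : ℤ) : ZMod 3) * ((c + d : ℤ) : ZMod 3) * (1 - (c : ZMod 3) ^ 2)
      + c * (a + ((c + d : ℤ) : ZMod 3)) = ((b : ZMod 3) * d * (1 - c ^ 2) + c * (a + d)) + 1 := by
    have := s11_mod3 hd
    push_cast
    generalize (a : ZMod 3) = a, (b : ZMod 3) = b, (c : ZMod 3) = c, (d : ZMod 3) = d at this ⊢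
    revert a b c d
    decide
  rw [e3, AddChar.map_add_eq_mul]
  push_cast
  rw [show (a : ℂ) * z + (a + b) = a * (z + 1) + b by ring,
    show (c : ℂ) * z + (c + d) = c * (z + 1) + d by ring, h1]
  ring

theorem s11P_Tinv {a b c d : ℤ} (hd : a * d - b * c = 1) (h : s11P a b c d) :
    s11P a (b - a) c (d - c) := by
  intro z hz
  have h1 := h (z - 1) (by simpa using hz)
  have h2 := s11E_T (z := z - 1) (by simpa using hz)
  rw [sub_add_cancel] at h2
  have e3 : (b : ZMod 3) * d * (1 - c ^ 2) + c * (a + d) = 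
      ((b - a : ℤ) : ZMod 3) * ((d - c : ℤ) : ZMod 3) * (1 - (c : ZMod 3) ^ 2)
      + c * (a + ((d - c : ℤ) : ZMod 3)) + 1 := by
    have := s11_mod3 hd
    push_cast
    generalize (a : ZMod 3) = a, (b : ZMod 3) = b, (c : ZMod 3) = c, (d : ZMod 3) = d at this ⊢
    revert a b c d
    decide
  rw [e3, AddChar.map_add_eq_mul] at h1
  push_cast at h1 ⊢
  rw [show (a : ℂ) * z + (b - a) = a * (z - 1) + b by ring,
    show (c : ℂ) * z + (d - c) = c * (z - 1) + d by ring, h1, h2]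
  ring

theorem s11P_all (g : SL(2, ℤ)) : s11P (g 0 0) (g 0 1) (g 1 0) (g 1 1) := by
  have hdet : ∀ x : SL(2, ℤ), x 0 0 * x 1 1 - x 0 1 * x 1 0 = 1 := fun x => by
    rw [← Matrix.det_fin_two, x.det_coe]
  have : g ∈ Subgroup.closure {ModularGroup.S, ModularGroup.T} := by
    simp [SpecialLinearGroup.SL2Z_generators]
  have key : ∀ (x y : SL(2, ℤ)) (i j : Fin 2),
      (x * y) i j = x i 0 * y 0 j + x i 1 * y 1 j := fun x y i j => by
    rw [Matrix.SpecialLinearGroup.coe_mul, Matrix.mul_apply, Fin.sum_univ_two]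
  have hS : ModularGroup.S 0 0 = 0 ∧ ModularGroup.S 0 1 = -1 ∧ ModularGroup.S 1 0 = 1 ∧
    ModularGroup.S 1 1 = 0 := by simp [ModularGroup.S]
  have hT : ModularGroup.T 0 0 = 1 ∧ ModularGroup.T 0 1 = 1 ∧ ModularGroup.T 1 0 = 0 ∧
    ModularGroup.T 1 1 = 1 := by simp [ModularGroup.T]
  have hSi : ModularGroup.S⁻¹ 0 0 = 0 ∧ ModularGroup.S⁻¹ 0 1 = 1 ∧ ModularGroup.S⁻¹ 1 0 = -1 ∧
    ModularGroup.S⁻¹ 1 1 = 0 := by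
      rw [Matrix.SpecialLinearGroup.coe_inv, ModularGroup.coe_S, Matrix.adjugate_fin_two_of]
      simp
  have hTi : ModularGroup.T⁻¹ 0 0 = 1 ∧ ModularGroup.T⁻¹ 0 1 = -1 ∧ ModularGroup.T⁻¹ 1 0 = 0 ∧
    ModularGroup.T⁻¹ 1 1 = 1 := by
      rw [Matrix.SpecialLinearGroup.coe_inv, ModularGroup.coe_T, Matrix.adjugate_fin_two_of]
      simp
  obtain ⟨s1, s2, s3, s4⟩ := hS
  obtain ⟨t1, t2, t3, t4⟩ := hT
  obtain ⟨u1, u2, u3, u4⟩ := hSi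
  obtain ⟨v1, v2, v3, v4⟩ := hTi
  induction this using Subgroup.closure_induction_right with
  | one =>
    intro z hz
    simp
  | mul_right x hx y hy ih =>
    rcases hy with rfl | rfl
    · have := s11P_S (hdet x) ih
      rw [key, key, key, key, s1, s2, s3, s4]
      convert this using 1 <;> ring
    · have := s11P_T (hdet x) ih
      rw [key, key, key, key, t1, t2, t3, t4]
      convert this using 1 <;> ring
  | mul_inv_cancel x hx y hy ih =>
    rcases hy with rfl | rfl
    · have := s11P_neg (s11P_S (hdet x) ih)
      rw [key, key, key, key, u1, u2, u3, u4]
      convert this using 1 <;> ring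
    · have := s11P_Tinv (hdet x) ih
      rw [key, key, key, key, v1, v2, v3, v4]
      convert this using 1 <;> ring

theorem s11E_mat {a b c d : ℤ} (hd : a * d - b * c = 1) (ha : 3 ∣ a) (hd3 : 3 ∣ d)
    {z : ℂ} (hz : 0 < z.im) :
    s11E ((a * z + b) / (c * z + d)) = (c * z + d) ^ 4 * s11E z := by
  have h := s11P_all ⟨!![a, b; c, d], by rw [Matrix.det_fin_two_of, hd]⟩ z hz
  have h1 : (a : ZMod 3) = 0 := (ZMod.intCast_zmod_eq_zero_iff_dvd _ 3).2 ha
  have h2 : (d : ZMod 3) = 0 := (ZMod.intCast_zmod_eq_zero_iff_dvd _ 3).2 hd3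
  simpa [h1, h2] using h

end s11B1

section s11B2
open UpperHalfPlane hiding I
open ModularForm Complex MatrixGroups CongruenceSubgroup Function

theorem s11E_int (n : ℤ) {z : ℂ} (hz : 0 < z.im) : s11E (z + n) = s11w (n : ZMod 3) * s11E z := by
  have h := s11P_all ⟨!![1, n; 0, 1], by rw [Matrix.det_fin_two_of]; ring⟩ z hz
  simpa using h

/-- the points `(z + 24 j) / 29` -/
noncomputable def s11g (z : ℂ) (j : ZMod 29) : ℂ := s11E ((z + 24 * (j.val : ℂ)) / 29)

theorem s11_im29 {z : ℂ} (hz : 0 < z.im) (m : ℤ) : 0 < ((z + 24 * (m : ℂ)) / 29).im := by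
  have : ((z + 24 * (m : ℂ)) / 29).im = z.im / 29 := by
    rw [show (z + 24 * (m : ℂ)) / 29 = ((1 / 29 : ℝ) : ℂ) * z + ((24 * m / 29 : ℝ) : ℂ) by
      push_cast; ring]
    rw [add_im, Complex.im_ofReal_mul, ofReal_im]
    ring
  rw [this]
  positivity

theorem s11g_int {z : ℂ} (hz : 0 < z.im) (m : ℤ) :
    s11E ((z + 24 * (m : ℂ)) / 29) = s11g z (m : ZMod 29) := by
  have h1 : (((m : ZMod 29).val : ℤ)) = m % 29 := by
    rw [ZMod.val_intCast]; rfl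
  have h2 : (m : ℂ) = ((m : ZMod 29).val : ℂ) + 29 * ((m / 29 : ℤ) : ℂ) := by
    have h3 : m = ((m : ZMod 29).val : ℤ) + 29 * (m / 29) := by rw [h1]; omega
    have := congrArg (Int.cast : ℤ → ℂ) h3
    push_cast at this
    exact this
  have h4 : (z + 24 * (m : ℂ)) / 29 =
      (z + 24 * ((m : ZMod 29).val : ℂ)) / 29 + ((24 * (m / 29) : ℤ) : ℂ) := by
    rw [h2]; push_cast; ring
  have h5 := s11_im29 hz ((m : ZMod 29).val : ℤ)
  rw [Int.cast_natCast] at h5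
  rw [h4, s11E_int _ h5, s11g]
  have : ((24 * (m / 29) : ℤ) : ZMod 3) = 0 := by
    rw [Int.cast_mul, show ((24 : ℤ) : ZMod 3) = 0 by decide, zero_mul]
  rw [this, AddChar.map_zero_eq_one, one_mul]

/-- the level one form -/
noncomputable def s11H (z : ℂ) : ℂ :=
  s11E z ^ 29 * ((s11E (29 * z))⁻¹ + 29 ^ 4 * ∑ j : ZMod 29, (s11g z j)⁻¹)

theorem s11H_T {z : ℂ} (hz : 0 < z.im) : s11H (z + 1) = s11H z := by
  have h1 : s11E (29 * (z + 1)) = s11w 2 * s11E (29 * z) := by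
    have := s11E_int 29 (z := 29 * z) (by simpa using hz)
    rw [show ((29 : ℤ) : ZMod 3) = 2 by decide] at this
    rw [← this]
    congr 1
    push_cast
    ring
  have h2 : s11w 1 ^ 29 = s11w 2 := by
    rw [← AddChar.map_nsmul_eq_pow]
    congr 1
  have h3 : ∀ j : ZMod 29, s11g (z + 1) j = s11w 2 * s11g z (j - 6) := by
    intro j
    have e := s11g_int hz ((j.val : ℤ) - 6)
    have e2 := s11E_int 5 (s11_im29 hz ((j.val : ℤ) - 6))
    rw [show ((5 : ℤ) : ZMod 3) = 2 by decide, e] at e2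
    have e3 : (((j.val : ℤ) - 6 : ℤ) : ZMod 29) = j - 6 := by
      push_cast
      rw [ZMod.natCast_zmod_val]
    rw [e3] at e2
    rw [← e2, s11g]
    congr 1
    push_cast
    ring
  have h4 : ∑ j : ZMod 29, (s11g z (j - 6))⁻¹ = ∑ j : ZMod 29, (s11g z j)⁻¹ :=
    Equiv.sum_comp (Equiv.subRight (6 : ZMod 29)) (fun j => (s11g z j)⁻¹)
  have h5 : s11w 2 ≠ 0 := by
    rw [← h2, ← AddChar.map_nsmul_eq_pow]
    exact (AddChar.val_isUnit s11w _).ne_zero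
  rw [s11H, s11H, h1, s11E_T hz, mul_pow, h2]
  simp only [h3, mul_inv]
  rw [← Finset.mul_sum, h4]
  field_simp

theorem s11g_S {z : ℂ} (hz : 0 < z.im) (j : ZMod 29) (hj : j ≠ 0) :
    s11g (-1 / z) j = z ^ 4 * s11g z (-(25 * j)⁻¹) := by
  have h25 : (25 : ZMod 29) ≠ 0 := by decide
  have h576 : (576 : ZMod 29) = 25 := by decide
  have : Fact (Nat.Prime 29) := ⟨by norm_num⟩
  have hz0 : z ≠ 0 := by rintro rfl; simp at hz
  set k : ZMod 29 := -(25 * j)⁻¹ with hk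
  have h1 : (29 : ℤ) ∣ 1 + 576 * j.val * k.val := by
    refine (ZMod.intCast_zmod_eq_zero_iff_dvd _ 29).1 ?_
    push_cast
    rw [ZMod.natCast_zmod_val, ZMod.natCast_zmod_val, hk, h576]
    have : (25 * j : ZMod 29) ≠ 0 := mul_ne_zero h25 hj
    rw [mul_neg, mul_inv_cancel₀ this]
    ring
  obtain ⟨b, hb⟩ := h1
  have h2 := s11E_mat (a := 24 * j.val) (b := -b) (c := 29) (d := -24 * k.val)
    (by linear_combination -hb) (Dvd.intro (8 * (j.val : ℤ)) (by ring)) (Dvd.intro (-8 * (k.val : ℤ)) (by ring))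
    (s11_im29 hz (k.val : ℤ))
  have hbc : (1 : ℂ) + 576 * j.val * k.val = 29 * b := by exact_mod_cast congrArg (Int.cast : ℤ → ℂ) hb
  rw [s11g, s11g]
  push_cast at h2
  have e1 : (29 : ℂ) * ((z + 24 * (k.val : ℂ)) / 29) + -24 * (k.val : ℂ) = z := by ring
  rw [e1] at h2
  rw [← h2]
  congr 1
  field_simp
  linear_combination -hbc

theorem s11H_S {z : ℂ} (hz : 0 < z.im) : s11H (-1 / z) = z ^ 112 * s11H z := by
  have h25 : (25 : ZMod 29) ≠ 0 := by decide
  have h576 : (576 : ZMod 29) = 25 := by decide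
  have : Fact (Nat.Prime 29) := ⟨by norm_num⟩
  have hz0 : z ≠ 0 := by rintro rfl; simp at hz
  have hz29 : 0 < (z / 29).im := by
    have := s11_im29 hz 0
    simpa using this
  have h1 : s11E (29 * (-1 / z)) = (z / 29) ^ 4 * s11g z 0 := by
    rw [show 29 * (-1 / z) = -1 / (z / 29) by field_simp, s11E_S hz29, s11g]
    simp
  have h2 : s11g (-1 / z) 0 = (29 * z) ^ 4 * s11E (29 * z) := by
    rw [← s11E_S (by simpa using hz), s11g]
    congr 1
    simp
    field_simp
  have hs : ∀ w : ℂ, ∑ j : ZMod 29, (s11g w j)⁻¹ =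
      (s11g w 0)⁻¹ + ∑ j ∈ Finset.univ.erase (0 : ZMod 29), (s11g w j)⁻¹ := by
    intro w
    exact (Finset.add_sum_erase _ (fun j => (s11g w j)⁻¹) (Finset.mem_univ _)).symm
  have h3 : ∑ j ∈ Finset.univ.erase (0 : ZMod 29), (s11g (-1 / z) j)⁻¹ =
      (z ^ 4)⁻¹ * ∑ j ∈ Finset.univ.erase (0 : ZMod 29), (s11g z j)⁻¹ := by
    rw [Finset.mul_sum]
    have hmem : ∀ j ∈ Finset.univ.erase (0 : ZMod 29),
        -(25 * j)⁻¹ ∈ Finset.univ.erase (0 : ZMod 29) := by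
      intro j hj
      have := Finset.ne_of_mem_erase hj
      simp [this, h25]
    have hinv : ∀ j ∈ Finset.univ.erase (0 : ZMod 29), -(25 * -(25 * j)⁻¹)⁻¹ = j := by
      intro j hj
      have := Finset.ne_of_mem_erase hj
      field_simp
    refine Finset.sum_nbij' (fun j => -(25 * j)⁻¹) (fun j => -(25 * j)⁻¹) hmem hmem hinv hinv ?_
    intro j hj
    rw [s11g_S hz j (Finset.ne_of_mem_erase hj), mul_inv]
  rw [s11H, s11H, hs, hs, h1, h2, h3, s11E_S hz]
  field_simp
  ring

end s11B2

section s11B3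
open UpperHalfPlane hiding I
open ModularForm Complex PowerSeries MatrixGroups CongruenceSubgroup Function

/-- the additive character on `ZMod 29` -/
noncomputable def s11psi : AddChar (ZMod 29) ℂ := ZMod.stdAddChar

theorem s11psi_int (m : ℤ) : s11psi (m : ZMod 29) = exp (2 * Real.pi * I * m / 29) := by
  have := ZMod.stdAddChar_coe (N := 29) m
  rw [s11psi, this]
  norm_num

theorem s11_proj (F : PowerSeries ℂ) (Q : ℂ) (hQ : Q ≠ 0) (v : ZMod 29 → ℂ)
    (h : ∀ j, s11Ev F (Q * s11psi (24 * j)) (v j)) :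
    s11Ev (PowerSeries.mk fun m => coeff (29 * m + 10) F) (Q ^ 29)
      ((29 * Q ^ 10)⁻¹ * ∑ j, s11psi (-8 * j) * v j) := by
  have h1 : HasSum (fun n => ∑ j, s11psi (-8 * j) * (coeff n F * (Q * s11psi (24 * j)) ^ n))
      (∑ j, s11psi (-8 * j) * v j) := hasSum_sum fun j _ => (h j).mul_left _
  have h2 : ∀ n : ℕ, ∑ j, s11psi (-8 * j) * (coeff n F * (Q * s11psi (24 * j)) ^ n) =
      coeff n F * Q ^ n * (if (24 * n - 8 : ZMod 29) = 0 then 29 else 0) := by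
    intro n
    have e := AddChar.sum_mulShift (R := ZMod 29) (R' := ℂ) (ψ := s11psi) (24 * n - 8)
      (ZMod.isPrimitive_stdAddChar 29)
    rw [ZMod.card] at e
    push_cast at e
    rw [← e, Finset.mul_sum]
    refine Finset.sum_congr rfl fun j _ => ?_
    rw [mul_pow, ← AddChar.map_nsmul_eq_pow,
      show j * (24 * (n : ZMod 29) - 8) = -8 * j + n • (24 * j) by rw [nsmul_eq_mul]; ring,
      AddChar.map_add_eq_mul]
    ring
  simp only [h2] at h1
  have hinj : Function.Injective (fun m : ℕ => 29 * m + 10) := fun a b hab => by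
    simp only at hab; omega
  have h1' := h1
  rw [← hinj.hasSum_iff] at h1
  · have h3 := h1.mul_left (29 * Q ^ 10)⁻¹
    unfold s11Ev
    refine Eq.mpr (congrArg (fun f => HasSum f _) (funext fun m => ?_)) h3
    have : (24 * ((29 * m + 10 : ℕ) : ZMod 29) - 8) = 0 := by
      push_cast
      rw [show (29 : ZMod 29) = 0 by rfl, zero_mul, zero_add]
      decide
    simp only [Function.comp]
    rw [if_pos this, coeff_mk, pow_add, ← pow_mul]
    field_simp
  · intro n hn
    rw [if_neg, mul_zero]
    intro h0
    apply hn
    have h4 : (n : ZMod 29) = (10 : ℕ) := by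
      generalize (n : ZMod 29) = x at h0 ⊢
      revert x
      decide
    rw [ZMod.natCast_eq_natCast_iff] at h4
    refine ⟨n / 29, ?_⟩
    simp only [Nat.ModEq] at h4
    show 29 * (n / 29) + 10 = n
    omega

/-- the integral series of the form -/
noncomputable def s11F (R : Type) [CommRing R] : PowerSeries R :=
  pentagonalSeries R ^ 232 * (expand 29 (by norm_num) (s11part R)) ^ 8
    + C (29 ^ 5) * (X ^ 10 * pentagonalSeries R ^ 232 *
      (PowerSeries.mk fun m => coeff (29 * m + 10) (s11part R ^ 8)))

theorem s11F_map (R : Type) [CommRing R] :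
    PowerSeries.map (Int.castRingHom R) (s11F ℤ) = s11F R := by
  have e : PowerSeries.map (Int.castRingHom R)
      (PowerSeries.mk fun m => coeff (29 * m + 10) (s11part ℤ ^ 8)) =
      PowerSeries.mk fun m => coeff (29 * m + 10) (s11part R ^ 8) := by
    ext n
    rw [coeff_map, coeff_mk, coeff_mk, ← coeff_map, map_pow, s11_map_part]
  have e2 : PowerSeries.map (Int.castRingHom R) (expand 29 (by norm_num) (s11part ℤ)) =
      expand 29 (by norm_num) (s11part R) := by
    rw [PowerSeries.map_expand, s11_map_part]
  have e3 : PowerSeries.map (Int.castRingHom R) (C (29 ^ 5)) = C (29 ^ 5) := by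
    rw [PowerSeries.map_C]
    congr 1
    norm_num
  rw [s11F, s11F, map_add, map_mul, map_mul, map_mul, map_mul, e3, e]
  generalize (C (29 ^ 5) : PowerSeries R) = c
  rw [map_pow, map_pow, map_pow, s11_map_pent, e2, PowerSeries.map_X]

theorem s11H_ev' {z : ℂ} (hz : 0 < z.im) : s11Ev (s11F ℂ) (Periodic.qParam 1 z) (s11H z) := by
  set q := Periodic.qParam 1 z with hq
  have hqe : q = exp (2 * Real.pi * I * z) := by simp [hq, Periodic.qParam]
  have hqn : ‖q‖ < 1 := s11_norm_q ⟨z, hz⟩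
  set Q := exp (2 * Real.pi * I * z / 29) with hQ
  have hQ0 : Q ≠ 0 := exp_ne_zero _
  have hQ29 : Q ^ 29 = q := by
    rw [hQ, hqe, ← exp_nat_mul]; congr 1; push_cast; ring
  have hQn : ‖Q‖ < 1 := by
    rw [← hQ29, norm_pow] at hqn
    exact (pow_lt_one_iff_of_nonneg (norm_nonneg _) (by norm_num)).1 hqn
  have hpsi : ∀ j : ZMod 29, Q * s11psi (24 * j) = exp (2 * Real.pi * I * ((z + 24 * (j.val : ℂ)) / 29)) := by
    intro j
    have := s11psi_int (24 * (j.val : ℤ))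
    push_cast at this
    rw [ZMod.natCast_zmod_val] at this
    rw [this, hQ, ← exp_add]
    congr 1
    ring
  have hψn : ∀ j : ZMod 29, ‖Q * s11psi (24 * j)‖ < 1 := by
    intro j
    rw [norm_mul, AddChar.norm_apply, mul_one]
    exact hQn
  have hproj := s11_proj (s11part ℂ ^ 8) Q hQ0
    (fun j => ((s11phi (Q * s11psi (24 * j)))⁻¹) ^ 8)
    (fun j => s11Ev_pow (s11Ev_part (hψn j)) 8)
  rw [hQ29] at hproj
  have hq29 : ‖q ^ 29‖ < 1 := by
    rw [norm_pow]; exact pow_lt_one₀ (norm_nonneg _) hqn (by norm_num)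
  have hA := s11Ev_mul (s11Ev_pow (s11Ev_pent hqn) 232)
    (s11Ev_pow (s11Ev_expand 29 (by norm_num) (s11Ev_part hq29)) 8)
  have hB := s11Ev_mul (s11Ev_C (29 ^ 5) q) (s11Ev_mul (s11Ev_mul (s11Ev_pow (s11Ev_X q) 10)
    (s11Ev_pow (s11Ev_pent hqn) 232)) hproj)
  have hAB : s11Ev (s11F ℂ) q _ := s11Ev_add hA hB
  refine Eq.mpr (congrArg (s11Ev (s11F ℂ) q) ?_) hAB
  have hE : s11E z ^ 29 = exp (2 * Real.pi * I * z / 3) ^ 29 * s11phi q ^ 232 := by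
    rw [s11E_eq hz, ← hqe, mul_pow, ← pow_mul]
  have hE29 : (s11E (29 * z))⁻¹ =
      (exp (2 * Real.pi * I * z / 3) ^ 29)⁻¹ * ((s11phi (q ^ 29))⁻¹) ^ 8 := by
    rw [s11E_eq (by simpa using hz), mul_inv, inv_pow]
    congr 2
    · rw [← exp_nat_mul]; congr 1; push_cast; ring
    · rw [hqe, ← exp_nat_mul]; congr 3; push_cast; ring
  have hg : ∀ j : ZMod 29, (s11g z j)⁻¹ = (exp (2 * Real.pi * I * z / 3) ^ 29)⁻¹ * Q ^ 280 *
      (s11psi (-8 * j) * ((s11phi (Q * s11psi (24 * j)))⁻¹) ^ 8) := by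
    intro j
    have him := s11_im29 hz (j.val : ℤ)
    rw [Int.cast_natCast] at him
    rw [s11g, s11E_eq him, ← hpsi, mul_inv, inv_pow, ← mul_assoc]
    congr 1
    have := s11psi_int (-8 * (j.val : ℤ))
    push_cast at this
    rw [ZMod.natCast_zmod_val] at this
    rw [this, hQ, ← exp_nat_mul, ← exp_nat_mul, ← exp_neg, ← exp_neg, ← exp_add, ← exp_add]
    congr 1
    push_cast
    ring
  rw [s11H, hE, hE29]
  simp only [hg]
  rw [← Finset.mul_sum]
  have hexp : exp (2 * Real.pi * I * z / 3) ≠ 0 := exp_ne_zero _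
  have hqQ : q ^ 10 = Q ^ 280 * Q ^ 10 := by rw [← hQ29]; ring
  rw [hqQ]
  generalize ∑ j : ZMod 29, (s11psi (-8 * j) * ((s11phi (Q * s11psi (24 * j)))⁻¹) ^ 8) = T
  field_simp

theorem s11H_ev (τ : ℍ) : s11Ev (s11F ℂ) (Periodic.qParam 1 τ) (s11H τ) := s11H_ev' τ.2

/-- the form as a function on the upper half plane -/
noncomputable def s11Hf : ℍ → ℂ := fun τ => s11H τ

theorem s11Hf_S : s11Hf ∣[(112 : ℤ)] ModularGroup.S = s11Hf := by
  ext z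
  have hz0 : (z : ℂ) ≠ 0 := ne_zero z
  have h := s11H_S (z := (z : ℂ)) z.2
  rw [SL_slash_apply, UpperHalfPlane.modular_S_smul]
  have h2 : s11Hf (UpperHalfPlane.mk (-(z : ℂ))⁻¹ z.im_inv_neg_coe_pos) = s11H (-1 / (z : ℂ)) := by
    unfold s11Hf
    congr 1
    show (-(z : ℂ))⁻¹ = _
    field_simp
  have h3 : denom (ModularGroup.S : SL(2, ℤ)) z = (z : ℂ) := by
    rw [ModularGroup.denom_apply]
    simp [ModularGroup.S]
  rw [h2, h3, h]
  show _ = s11H z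
  rw [zpow_neg, mul_comm, ← mul_assoc]
  rw [show ((z : ℂ) ^ (112 : ℤ)) = (z : ℂ) ^ (112 : ℕ) from zpow_natCast _ 112,
    inv_mul_cancel₀ (pow_ne_zero _ hz0), one_mul]

theorem s11Hf_T : s11Hf ∣[(112 : ℤ)] ModularGroup.T = s11Hf := by
  ext z
  have h := s11H_T (z := (z : ℂ)) z.2
  rw [SL_slash_apply, UpperHalfPlane.modular_T_smul]
  have h3 : denom (ModularGroup.T : SL(2, ℤ)) z = 1 := by
    rw [ModularGroup.denom_apply]
    simp [ModularGroup.T]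
  rw [h3, one_zpow, mul_one]
  show s11H _ = s11H z
  rw [← h]
  congr 1
  rw [coe_vadd]
  push_cast
  ring

theorem s11Hf_slash (A : SL(2, ℤ)) : s11Hf ∣[(112 : ℤ)] A = s11Hf :=
  SlashInvariantForm.slash_action_generators_SL2Z s11Hf_S s11Hf_T A

theorem s11E_diff {z : ℂ} (hz : 0 < z.im) : DifferentiableAt ℂ s11E z :=
  (differentiableAt_eta_of_mem_upperHalfPlaneSet hz).pow 8

theorem s11H_diff {z : ℂ} (hz : 0 < z.im) : DifferentiableAt ℂ s11H z := by
  have h29 : 0 < (29 * z).im := by simpa using hz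
  unfold s11H
  refine ((s11E_diff hz).pow 29).mul (DifferentiableAt.add ?_ (DifferentiableAt.const_mul ?_ _))
  · refine DifferentiableAt.inv ?_ (s11E_ne h29)
    exact DifferentiableAt.comp z (f := fun z => 29 * z) (s11E_diff h29) (by fun_prop)
  · refine DifferentiableAt.fun_sum fun j _ => ?_
    have him := s11_im29 hz (j.val : ℤ)
    rw [Int.cast_natCast] at him
    refine DifferentiableAt.inv ?_ (s11E_ne him)
    exact DifferentiableAt.comp z (f := fun z => (z + 24 * (j.val : ℂ)) / 29)
      (s11E_diff him) (by fun_prop)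

/-- the level one modular form of weight 112 -/
noncomputable def s11HForm : ModularForm 𝒮ℒ 112 where
  toFun := s11Hf
  slash_action_eq' A hA := by
    obtain ⟨A, rfl⟩ := hA
    exact s11Hf_slash A
  holo' := by
    rw [UpperHalfPlane.mdifferentiable_iff]
    refine DifferentiableOn.congr (f := s11H)
      (fun z hz => (s11H_diff hz).differentiableWithinAt) fun z hz => ?_
    simp [s11Hf, ofComplex_apply_of_im_pos hz]
  bdd_at_cusps' hc := by
    rw [Subgroup.IsArithmetic.isCusp_iff_isCusp_SL2Z] at hc
    rw [OnePoint.isBoundedAt_iff_forall_SL2Z hc]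
    intro γ _
    rw [s11Hf_slash]
    exact UpperHalfPlane.isBoundedAtImInfty_of_hasSum_qExpansion one_pos
      (c := fun m => coeff m (s11F ℂ)) (by simpa [s11Ev, s11Hf] using s11H_ev)

theorem s11_exists_a : ∃ a : ℕ → ZMod 2,
    pentagonalSeries (ZMod 2) ^ 232 * (expand 29 (by norm_num) (s11part (ZMod 2))) ^ 8
      + X ^ 10 * pentagonalSeries (ZMod 2) ^ 232 *
        (PowerSeries.mk fun m => coeff (29 * m + 10) (s11part (ZMod 2) ^ 8))
      = ∑ i ∈ Finset.range 10, C (a i) * (X * pentagonalSeries (ZMod 2) ^ 24) ^ i := by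
  obtain ⟨a, ha⟩ := s11_C 9 112 (by norm_num) s11HForm (s11F ℤ) (by
    rw [s11F_map]
    exact s11_qExp_eq _ _ s11H_ev)
  refine ⟨a, ?_⟩
  rw [s11F_map, s11F, show (29 ^ 5 : ZMod 2) = 1 by decide, map_one, one_mul] at ha
  exact ha

end s11B3

theorem stmt_11 (n : ℕ) :
    (∀ B ∈ ({3, 6, 10, 12, 13, 14, 15, 18, 20, 23, 24, 25, 26, 28} : Finset ℕ),
      numRegularPartitions 232 (841 * n + 29 * B - 35) ≡
        numMultipartitions 21 (29 * n + B) [MOD 2]) := by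
  intro B hB
  obtain ⟨a, ha⟩ := s11_exists_a
  exact s11_final a ha (fun n ho hs => s11_hD n ho hs) n B hB
end

section
/- For every natural number n and every B in {28, 94, 182, 204, 226}, the number of 11-regular partitions b_11(242n + B) is even. -/
open PowerSeries Finset

lemma even_ncard_of_inv {α : Type*} (S : Set α) (g : α → α) (hm : ∀ a ∈ S, g a ∈ S)
    (hg : ∀ a ∈ S, g (g a) = a) (hne : ∀ a ∈ S, g a ≠ a) : ((S.ncard : ℕ) : ZMod 2) = 0 := by
  by_cases hS : S.Finite
  · rw [Set.ncard_eq_toFinset_card S hS]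
    have := Finset.sum_involution (s := hS.toFinset) (f := fun _ => (1 : ZMod 2))
      (fun a _ => g a) (fun _ _ => by decide) (fun a ha _ => hne a (by simpa using ha))
      (fun a ha => by simpa using hm a (by simpa using ha)) (fun a ha => hg a (by simpa using ha))
    simpa using this
  · rw [Set.Infinite.ncard hS]; simp

lemma ncard_split {α : Type*} (P Q : α → Prop) (hS : {a | P a}.Finite) :
    {a | P a}.ncard = {a | P a ∧ Q a}.ncard + {a | P a ∧ ¬ Q a}.ncard := by
  rw [← Set.ncard_union_eq ?_ (hS.subset fun a h => h.1) (hS.subset fun a h => h.1)]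
  · congr 1; ext a; simp only [Set.mem_ofPred_eq, Set.mem_union]; tauto
  · rw [Set.disjoint_left]; rintro a ⟨_, h⟩ ⟨_, h'⟩; exact h' h

lemma fin_form (d m : ℤ) (hd : 1 ≤ d) : {p : ℤ × ℤ | p.1 ^ 2 + d * p.2 ^ 2 = m}.Finite := by
  apply ((Set.finite_Icc (-m) m).prod (Set.finite_Icc (-m) m)).subset
  rintro ⟨x, y⟩ h
  simp only [Set.mem_ofPred_eq] at h
  simp only [Set.mem_prod, Set.mem_Icc]
  have h1 : 0 ≤ (d - 1) * y ^ 2 := mul_nonneg (by linarith) (sq_nonneg _)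
  have h2 : x ^ 2 + y ^ 2 ≤ m := by linarith
  have hx := Int.le_self_sq x
  have hx' := Int.le_self_sq (-x)
  have hy := Int.le_self_sq y
  have hy' := Int.le_self_sq (-y)
  have := sq_nonneg x
  have := sq_nonneg y
  rw [neg_sq] at hx' hy'
  exact ⟨⟨by linarith, by linarith⟩, by linarith, by linarith⟩

lemma theta_coeff (c : ℕ) (hc : 1 < c) (A : (ZMod 2)⟦X⟧)
    (hA : ∀ n, coeff n A = if IsSquare (c * n + 1) then 1 else 0) (d : ℕ) (hd : d ≠ 0) (n : ℕ) :
    coeff n (A * expand d hd A) =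
      (({p : ℕ × ℕ | p.1 ^ 2 % c = 1 ∧ p.2 ^ 2 % c = 1 ∧
        p.1 ^ 2 + d * p.2 ^ 2 = c * n + 1 + d}.ncard : ℕ) : ZMod 2) := by
  classical
  rw [coeff_mul]
  have h1 : ∀ p ∈ antidiagonal n, coeff p.1 A * coeff p.2 (expand d hd A) =
      if (IsSquare (c * p.1 + 1) ∧ d ∣ p.2 ∧ IsSquare (c * (p.2 / d) + 1)) then 1 else 0 := by
    intro p _
    rw [coeff_expand, hA, hA]
    by_cases h1 : IsSquare (c * p.1 + 1) <;> by_cases h2 : d ∣ p.2 <;>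
      by_cases h3 : IsSquare (c * (p.2 / d) + 1) <;> simp [h1, h2, h3]
  rw [Finset.sum_congr rfl h1, Finset.sum_boole, ← Set.ncard_coe_finset]
  congr 1
  symm
  have key : ∀ x : ℕ, x ^ 2 % c = 1 → c * (x ^ 2 / c) + 1 = x ^ 2 := by
    intro x hx
    have := Nat.div_add_mod (x ^ 2) c
    omega
  have hdp : 0 < d := Nat.pos_of_ne_zero hd
  refine Set.ncard_congr (fun p _ => (p.1 ^ 2 / c, d * (p.2 ^ 2 / c))) ?_ ?_ ?_
  · rintro ⟨x, y⟩ ⟨hx, hy, h⟩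
    dsimp only at *
    have kx := key x hx
    have ky := key y hy
    simp only [coe_filter, HasAntidiagonal.mem_antidiagonal, Set.mem_ofPred_eq]
    refine ⟨?_, ⟨x, by rw [kx, sq]⟩, dvd_mul_right _ _, ⟨y, by
      rw [Nat.mul_div_cancel_left _ hdp, ky, sq]⟩⟩
    apply Nat.eq_of_mul_eq_mul_left (show 0 < c by omega)
    rw [← kx, ← ky] at h
    nlinarith
  · rintro ⟨x, y⟩ ⟨x', y'⟩ ⟨hx, hy, h⟩ ⟨hx', hy', h'⟩ he
    dsimp only at *
    simp only [Prod.mk.injEq] at he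
    have e2 := Nat.eq_of_mul_eq_mul_left hdp he.2
    have kx := key x hx
    have ky := key y hy
    rw [he.1, key x' hx'] at kx
    rw [e2, key y' hy'] at ky
    rw [Prod.mk.injEq]
    exact ⟨(Nat.pow_left_injective (by norm_num : 2 ≠ 0) kx).symm,
      (Nat.pow_left_injective (by norm_num : 2 ≠ 0) ky).symm⟩
  · rintro ⟨i, j⟩ h
    simp only [coe_filter, HasAntidiagonal.mem_antidiagonal, Set.mem_ofPred_eq] at h
    obtain ⟨hn, ⟨x, hx⟩, ⟨k, rfl⟩, ⟨y, hy⟩⟩ := h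
    rw [Nat.mul_div_cancel_left _ hdp] at hy
    rw [← sq] at hx hy
    have e1 : ∀ t, (c * t + 1) % c = 1 := fun t => by
      rw [Nat.mul_add_mod, Nat.mod_eq_of_lt hc]
    have e2 : ∀ t, (c * t + 1) / c = t := fun t => by
      rw [Nat.mul_add_div (by omega), Nat.div_eq_of_lt hc, add_zero]
    refine ⟨(x, y), ⟨?_, ?_, ?_⟩, ?_⟩
    · dsimp only; rw [← hx, e1]
    · dsimp only; rw [← hy, e1]
    · dsimp only; rw [← hx, ← hy, ← hn]; ring
    · dsimp only; rw [← hx, ← hy, e2, e2]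

lemma sq_count (m : ℕ) (hm : m ≠ 0) :
    {p : ℤ × ℤ | p.1 ^ 2 = m ∧ 0 < p.1 ∧ p.2 = 0}.ncard = if IsSquare m then 1 else 0 := by
  split_ifs with h
  · obtain ⟨r, rfl⟩ := h
    rw [Set.ncard_eq_one]
    refine ⟨((r : ℤ), 0), ?_⟩
    ext ⟨x, y⟩
    simp only [Set.mem_ofPred_eq, Set.mem_singleton_iff, Prod.mk.injEq]
    have hr : (0 : ℤ) < r := by
      have : r ≠ 0 := by rintro rfl; simp at hm
      positivity
    constructor
    · rintro ⟨h1, h2, h3⟩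
      refine ⟨?_, h3⟩
      push_cast at h1
      nlinarith
    · rintro ⟨rfl, rfl⟩
      exact ⟨by push_cast; ring, hr, rfl⟩
  · convert Set.ncard_empty (ℤ × ℤ)
    ext ⟨x, y⟩
    simp only [Set.mem_ofPred_eq, Set.mem_empty_iff_false, iff_false]
    rintro ⟨h1, h2, h3⟩
    apply h
    refine ⟨x.natAbs, ?_⟩
    zify
    rw [← h1, ← sq, sq_abs]

/-- the flip involution -/
def flipPair (p : ℤ × ℤ) : ℤ × ℤ := if 0 < p.1 - p.2 then (p.1, -p.2) else (-p.1, p.2)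

lemma theta3_count (m : ℕ) (hm : m % 8 = 1) :
    (({p : ℕ × ℕ | p.1 ^ 2 % 24 = 1 ∧ p.2 ^ 2 % 24 = 1 ∧
        p.1 ^ 2 + 2 * p.2 ^ 2 = 3 * m}.ncard : ℕ) : ZMod 2) = if IsSquare m then 1 else 0 := by
  set S : ℤ × ℤ → Prop := fun p => p.1 ^ 2 + 2 * p.2 ^ 2 = m ∧ 0 < p.1 + p.2 with hSdef
  have hfin : {p | S p}.Finite := (fin_form 2 m (by norm_num)).subset fun p h => h.1
  have par : ∀ x y : ℤ, x ^ 2 + 2 * y ^ 2 = m → x % 2 = 1 ∧ y % 2 = 0 := by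
    intro x y h
    have h8 : (x ^ 2 + 2 * y ^ 2) % 8 = 1 := by rw [h]; omega
    have hx : x % 8 = 0 ∨ x % 8 = 1 ∨ x % 8 = 2 ∨ x % 8 = 3 ∨ x % 8 = 4 ∨ x % 8 = 5 ∨ x % 8 = 6 ∨
      x % 8 = 7 := by omega
    have hy : y % 8 = 0 ∨ y % 8 = 1 ∨ y % 8 = 2 ∨ y % 8 = 3 ∨ y % 8 = 4 ∨ y % 8 = 5 ∨ y % 8 = 6 ∨
      y % 8 = 7 := by omega
    rcases hx with hx | hx | hx | hx | hx | hx | hx | hx <;>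
    rcases hy with hy | hy | hy | hy | hy | hy | hy | hy <;>
    simp [Int.add_emod, Int.mul_emod, pow_two, hx, hy] at h8 ⊢ <;> omega
  have h1 : {p : ℕ × ℕ | p.1 ^ 2 % 24 = 1 ∧ p.2 ^ 2 % 24 = 1 ∧
        p.1 ^ 2 + 2 * p.2 ^ 2 = 3 * m}.ncard = {p | S p ∧ ¬ (p.1 + p.2) % 3 = 0}.ncard := by
    symm
    refine Set.ncard_congr (fun p _ => ((p.1 - 2 * p.2).natAbs, (p.1 + p.2).natAbs)) ?_ ?_ ?_
    · rintro ⟨x, y⟩ ⟨⟨h, hp⟩, h3⟩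
      dsimp only at *
      obtain ⟨px, py⟩ := par x y h
      have key : ∀ z : ℤ, z % 2 = 1 → z % 3 ≠ 0 → z.natAbs ^ 2 % 24 = 1 := by
        intro z hz hz3
        zify
        rw [sq_abs]
        have : z % 24 = 1 ∨ z % 24 = 5 ∨ z % 24 = 7 ∨ z % 24 = 11 ∨ z % 24 = 13 ∨ z % 24 = 17 ∨
          z % 24 = 19 ∨ z % 24 = 23 := by omega
        rcases this with h | h | h | h | h | h | h | h <;> simp [pow_two, Int.mul_emod, h]
      refine ⟨key _ (by omega) (by omega), key _ (by omega) (by omega), ?_⟩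
      zify
      rw [sq_abs, sq_abs, ← h]
      ring
    · rintro ⟨x, y⟩ ⟨x', y'⟩ ⟨⟨h, hp⟩, h3⟩ ⟨⟨h', hp'⟩, h3'⟩ he
      dsimp only at *
      simp only [Prod.mk.injEq] at he ⊢
      omega
    · rintro ⟨a, b⟩ ⟨ha, hb, h⟩
      dsimp only at *
      have ha3 : a % 3 ≠ 0 := by
        intro h0
        obtain ⟨k, rfl⟩ := Nat.dvd_of_mod_eq_zero h0
        have : (3 * k) ^ 2 = 3 * (3 * k ^ 2) := by ring
        omega
      have hb3 : b % 3 ≠ 0 := by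
        intro h0
        obtain ⟨k, rfl⟩ := Nat.dvd_of_mod_eq_zero h0
        have : (3 * k) ^ 2 = 3 * (3 * k ^ 2) := by ring
        omega
      have hb0 : 0 < b := by omega
      have : ∃ A : ℤ, A.natAbs = a ∧ (A - b) % 3 = 0 := by
        by_cases hab : a % 3 = b % 3
        · exact ⟨a, by omega, by omega⟩
        · exact ⟨-a, by omega, by omega⟩
      obtain ⟨A, hA, hAb⟩ := this
      obtain ⟨y, hy⟩ := Int.dvd_of_emod_eq_zero hAb
      refine ⟨((b : ℤ) + y, -y), ⟨⟨?_, ?_⟩, ?_⟩, ?_⟩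
      · dsimp only
        have h' : (A : ℤ) ^ 2 + 2 * (b : ℤ) ^ 2 = 3 * m := by
          rw [← Int.natAbs_sq A, hA]; exact_mod_cast h
        have : A = b + 3 * y := by linarith
        subst this
        nlinarith
      · dsimp only; omega
      · dsimp only; omega
      · dsimp only
        rw [Prod.mk.injEq]; omega
  have h2 : (({p | S p ∧ (p.1 + p.2) % 3 = 0}.ncard : ℕ) : ZMod 2) = 0 := by
    apply even_ncard_of_inv _ (fun p => (p.1 + p.2 - (2 * ((p.1 + p.2) / 3) - p.2),
      2 * ((p.1 + p.2) / 3) - p.2))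
    · rintro ⟨x, y⟩ ⟨⟨h, hp⟩, h3⟩
      dsimp only at *
      obtain ⟨t, ht⟩ := Int.dvd_of_emod_eq_zero h3
      have e : (x + y) / 3 = t := by omega
      have hx : x = 3 * t - y := by linarith
      rw [e]
      refine ⟨⟨?_, ?_⟩, ?_⟩
      · dsimp only; rw [← h, hx]; ring
      · dsimp only; omega
      · dsimp only; omega
    · rintro ⟨x, y⟩ ⟨⟨h, hp⟩, h3⟩
      dsimp only at *
      rw [Prod.mk.injEq]; omega
    · rintro ⟨x, y⟩ ⟨⟨h, hp⟩, h3⟩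
      dsimp only at *
      obtain ⟨px, py⟩ := par x y h
      rw [Ne, Prod.mk.injEq]; omega
  have h3 : (({p | S p ∧ ¬ p.2 = 0}.ncard : ℕ) : ZMod 2) = 0 := by
    apply even_ncard_of_inv _ flipPair
    · rintro ⟨x, y⟩ ⟨⟨h, hp⟩, h3⟩
      dsimp only at *
      obtain ⟨px, py⟩ := par x y h
      unfold flipPair
      dsimp only
      split_ifs
      · exact ⟨⟨by dsimp only; rw [← h]; ring, by dsimp only; omega⟩, by dsimp only; omega⟩
      · exact ⟨⟨by dsimp only; rw [← h]; ring, by dsimp only; omega⟩, by dsimp only; omega⟩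
    · rintro ⟨x, y⟩ ⟨⟨h, hp⟩, h3⟩
      unfold flipPair
      dsimp only at *
      split_ifs <;> simp_all <;> omega
    · rintro ⟨x, y⟩ ⟨⟨h, hp⟩, h3⟩
      dsimp only at *
      obtain ⟨px, py⟩ := par x y h
      unfold flipPair
      dsimp only
      split_ifs <;> rw [Ne, Prod.mk.injEq] <;> omega
  have h4 : {p | S p ∧ p.2 = 0} = {p : ℤ × ℤ | p.1 ^ 2 = m ∧ 0 < p.1 ∧ p.2 = 0} := by
    ext ⟨x, y⟩
    simp only [hSdef, Set.mem_ofPred_eq]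
    constructor
    · rintro ⟨⟨h, hp⟩, rfl⟩; exact ⟨by linarith, by linarith, rfl⟩
    · rintro ⟨h, hp, rfl⟩; exact ⟨⟨by linarith, by linarith⟩, rfl⟩
  have s1 := ncard_split S (fun p => (p.1 + p.2) % 3 = 0) hfin
  have s2 := ncard_split S (fun p => p.2 = 0) hfin
  rw [h4, sq_count m (by omega)] at s2
  rw [h1]
  rw [s1] at s2
  have := congrArg (Nat.cast : ℕ → ZMod 2) s2
  push_cast at this
  rw [h2, h3, zero_add, add_zero] at this
  simpa using this

set_option maxHeartbeats 2000000 in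
lemma main_count (n : ℕ) (hn : n % 2 = 0) :
    (({p : ℕ × ℕ | p.1 ^ 2 % 24 = 1 ∧ p.2 ^ 2 % 24 = 1 ∧
        p.1 ^ 2 + 11 * p.2 ^ 2 = 12 * (2 * n + 1)}.ncard : ℕ) : ZMod 2) +
    (({p : ℕ × ℕ | p.1 ^ 2 % 8 = 1 ∧ p.2 ^ 2 % 8 = 1 ∧
        p.1 ^ 2 + 11 * p.2 ^ 2 = 4 * (2 * n + 1)}.ncard : ℕ) : ZMod 2) =
      if IsSquare (2 * n + 1) then 1 else 0 := by
  obtain ⟨m, hm⟩ : ∃ m, m = 2 * n + 1 := ⟨_, rfl⟩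
  rw [← hm]
  have hm4 : m % 4 = 1 := by omega
  clear hm hn
  set S : ℤ × ℤ → Prop := fun p => p.1 ^ 2 + 11 * p.2 ^ 2 = 4 * m ∧ 0 < p.1 + p.2 ∧
    (p.1 + p.2) % 4 = 2 with hSdef
  have hfin : {p | S p}.Finite := (fin_form 11 (4 * m) (by norm_num)).subset fun p h => h.1
  have h1 : {p : ℕ × ℕ | p.1 ^ 2 % 24 = 1 ∧ p.2 ^ 2 % 24 = 1 ∧
        p.1 ^ 2 + 11 * p.2 ^ 2 = 12 * m}.ncard = {p | S p ∧ ¬ (p.1 + p.2) % 3 = 0}.ncard := by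
    symm
    refine Set.ncard_congr (fun p _ => (((p.1 - 11 * p.2) / 2).natAbs,
      ((p.1 + p.2) / 2).natAbs)) ?_ ?_ ?_
    · rintro ⟨x, y⟩ ⟨⟨h, hp, h4⟩, h3⟩
      dsimp only at *
      have key : ∀ z : ℤ, z % 2 = 1 → z % 3 ≠ 0 → z.natAbs ^ 2 % 24 = 1 := by
        intro z hz hz3
        zify
        rw [sq_abs]
        have : z % 24 = 1 ∨ z % 24 = 5 ∨ z % 24 = 7 ∨ z % 24 = 11 ∨ z % 24 = 13 ∨ z % 24 = 17 ∨
          z % 24 = 19 ∨ z % 24 = 23 := by omega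
        rcases this with h | h | h | h | h | h | h | h <;> simp [pow_two, Int.mul_emod, h]
      obtain ⟨s, hs⟩ : ∃ s, x + y = 2 * s := ⟨(x + y) / 2, by omega⟩
      have e1 : (x + y) / 2 = s := by omega
      have e2 : (x - 11 * y) / 2 = s - 6 * y := by omega
      rw [e1, e2]
      refine ⟨key _ (by omega) (by omega), key _ (by omega) (by omega), ?_⟩
      zify
      rw [sq_abs, sq_abs]
      have hx : x = 2 * s - y := by linarith
      subst hx
      linear_combination 3 * h
    · rintro ⟨x, y⟩ ⟨x', y'⟩ ⟨⟨h, hp, h4⟩, h3⟩ ⟨⟨h', hp', h4'⟩, h3'⟩ he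
      dsimp only at *
      simp only [Prod.mk.injEq] at he ⊢
      omega
    · rintro ⟨a, b⟩ ⟨ha, hb, h⟩
      dsimp only at *
      have g3 : ∀ a : ℕ, a ^ 2 % 24 = 1 → a % 3 ≠ 0 ∧ a % 2 = 1 := by
        intro a ha
        constructor
        · intro h0
          obtain ⟨k, rfl⟩ := Nat.dvd_of_mod_eq_zero h0
          have : (3 * k) ^ 2 = 3 * (3 * k ^ 2) := by ring
          omega
        · by_contra h0
          obtain ⟨k, rfl⟩ := Nat.dvd_of_mod_eq_zero (show a % 2 = 0 by omega)
          have : (2 * k) ^ 2 = 2 * (2 * k ^ 2) := by ring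
          omega
      obtain ⟨ha3, ha2⟩ := g3 a ha
      obtain ⟨hb3, hb2⟩ := g3 b hb
      have : ∃ A : ℤ, A.natAbs = a ∧ (A - b) % 3 = 0 := by
        by_cases hab : a % 3 = b % 3
        · exact ⟨a, by omega, by omega⟩
        · refine ⟨-a, by omega, ?_⟩
          have : (a + b) % 3 = 0 := by
            have h1 : a % 3 = 1 ∨ a % 3 = 2 := by omega
            have h2 : b % 3 = 1 ∨ b % 3 = 2 := by omega
            rw [Nat.add_mod]
            rcases h1 with h1 | h1 <;> rcases h2 with h2 | h2 <;> simp [h1, h2] at hab ⊢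
          clear h ha hb; omega
      obtain ⟨A, hA, hAb⟩ := this
      obtain ⟨y, hy⟩ : ∃ y, A - b = 6 * y := ⟨(A - b) / 6, by omega⟩
      refine ⟨(2 * (b : ℤ) + y, -y), ⟨⟨?_, ?_, ?_⟩, ?_⟩, ?_⟩
      · dsimp only
        have h' : (A : ℤ) ^ 2 + 11 * (b : ℤ) ^ 2 = 12 * m := by
          rw [← Int.natAbs_sq A, hA]; exact_mod_cast h
        have : A = b + 6 * y := by linarith
        subst this
        nlinarith
      · dsimp only; omega
      · dsimp only; omega
      · dsimp only; omega
      · dsimp only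
        rw [Prod.mk.injEq]; omega
  have h1' : {p : ℕ × ℕ | p.1 ^ 2 % 8 = 1 ∧ p.2 ^ 2 % 8 = 1 ∧
        p.1 ^ 2 + 11 * p.2 ^ 2 = 4 * m}.ncard = {p | S p ∧ ¬ p.2 % 2 = 0}.ncard := by
    symm
    refine Set.ncard_congr (fun p _ => (p.1.natAbs, p.2.natAbs)) ?_ ?_ ?_
    · rintro ⟨x, y⟩ ⟨⟨h, hp, h4⟩, h3⟩
      dsimp only at *
      have key : ∀ z : ℤ, z % 2 = 1 → z.natAbs ^ 2 % 8 = 1 := by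
        intro z hz
        zify
        rw [sq_abs]
        have : z % 8 = 1 ∨ z % 8 = 3 ∨ z % 8 = 5 ∨ z % 8 = 7 := by omega
        rcases this with h | h | h | h <;> simp [pow_two, Int.mul_emod, h]
      refine ⟨key _ (by omega), key _ (by omega), ?_⟩
      zify
      rw [sq_abs, sq_abs, ← h]
    · rintro ⟨x, y⟩ ⟨x', y'⟩ ⟨⟨h, hp, h4⟩, h3⟩ ⟨⟨h', hp', h4'⟩, h3'⟩ he
      dsimp only at *
      simp only [Prod.mk.injEq] at he ⊢
      omega
    · rintro ⟨a, b⟩ ⟨ha, hb, h⟩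
      dsimp only at *
      have g3 : ∀ a : ℕ, a ^ 2 % 8 = 1 → a % 2 = 1 := by
        intro a ha
        by_contra h0
        obtain ⟨k, rfl⟩ := Nat.dvd_of_mod_eq_zero (show a % 2 = 0 by omega)
        have : (2 * k) ^ 2 = 2 * (2 * k ^ 2) := by ring
        omega
      have ha2 := g3 a ha
      have hb2 := g3 b hb
      have : ∃ x y : ℤ, x.natAbs = a ∧ y.natAbs = b ∧ 0 < x + y ∧ (x + y) % 4 = 2 := by
        by_cases hab : a % 4 = b % 4
        · exact ⟨a, b, by omega, by omega, by omega, by omega⟩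
        · by_cases hlt : a < b
          · exact ⟨-a, b, by omega, by omega, by omega, by omega⟩
          · exact ⟨a, -b, by omega, by omega, by omega, by omega⟩
      obtain ⟨x, y, hx, hy, hp, h4⟩ := this
      refine ⟨(x, y), ⟨⟨?_, hp, h4⟩, ?_⟩, ?_⟩
      · dsimp only
        rw [← Int.natAbs_sq x, ← Int.natAbs_sq y, hx, hy]; exact_mod_cast h
      · dsimp only; omega
      · dsimp only; rw [hx, hy]
  have h2 : (({p | S p ∧ (p.1 + p.2) % 3 = 0}.ncard : ℕ) : ZMod 2) = 0 := by
    apply even_ncard_of_inv _ (fun p => (p.1 + p.2 - ((p.1 + p.2) / 6 - p.2),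
      (p.1 + p.2) / 6 - p.2))
    · rintro ⟨x, y⟩ ⟨⟨h, hp, h4⟩, h3⟩
      dsimp only at *
      obtain ⟨t, ht⟩ : ∃ t, x + y = 6 * t := ⟨(x + y) / 6, by omega⟩
      have e : (x + y) / 6 = t := by omega
      have hx : x = 6 * t - y := by linarith
      rw [e]
      refine ⟨⟨?_, ?_, ?_⟩, ?_⟩
      · dsimp only; rw [← h, hx]; ring
      · dsimp only; omega
      · dsimp only; omega
      · dsimp only; omega
    · rintro ⟨x, y⟩ ⟨⟨h, hp, h4⟩, h3⟩
      dsimp only at *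
      rw [Prod.mk.injEq]; omega
    · rintro ⟨x, y⟩ ⟨⟨h, hp, h4⟩, h3⟩
      dsimp only at *
      rw [Ne, Prod.mk.injEq]; omega
  have h3 : {p | S p ∧ p.2 % 2 = 0}.ncard =
      {p : ℤ × ℤ | p.1 ^ 2 + 11 * p.2 ^ 2 = m ∧ 0 < p.1 + p.2}.ncard := by
    symm
    refine Set.ncard_congr (fun p _ => (2 * p.1, 2 * p.2)) ?_ ?_ ?_
    · rintro ⟨x, y⟩ ⟨h, hp⟩
      dsimp only at *
      have hodd : (x + y) % 2 = 1 := by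
        have h8 : (x ^ 2 + 11 * y ^ 2) % 2 = 1 := by rw [h]; omega
        have hx : x % 2 = 0 ∨ x % 2 = 1 := by omega
        have hy : y % 2 = 0 ∨ y % 2 = 1 := by omega
        rcases hx with hx | hx <;> rcases hy with hy | hy <;>
          simp [Int.add_emod, Int.mul_emod, pow_two, hx, hy] at h8 ⊢
      exact ⟨⟨by dsimp only; rw [← h]; ring, by dsimp only; omega, by dsimp only; omega⟩,
        by dsimp only; omega⟩
    · rintro ⟨x, y⟩ ⟨x', y'⟩ _ _ he
      simp only [Prod.mk.injEq] at he ⊢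
      omega
    · rintro ⟨x, y⟩ ⟨⟨h, hp, h4⟩, h3⟩
      dsimp only at *
      obtain ⟨u, rfl⟩ : ∃ u, x = 2 * u := ⟨x / 2, by omega⟩
      obtain ⟨v, rfl⟩ : ∃ v, y = 2 * v := ⟨y / 2, by omega⟩
      exact ⟨(u, v), ⟨by dsimp only; nlinarith, by dsimp only; omega⟩, rfl⟩
  set T : ℤ × ℤ → Prop := fun p => p.1 ^ 2 + 11 * p.2 ^ 2 = m ∧ 0 < p.1 + p.2 with hTdef
  have hTfin : {p | T p}.Finite := (fin_form 11 m (by norm_num)).subset fun p h => h.1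
  have par : ∀ x y : ℤ, x ^ 2 + 11 * y ^ 2 = m → x % 2 = 1 ∧ y % 2 = 0 := by
    intro x y h
    have h8 : (x ^ 2 + 11 * y ^ 2) % 4 = 1 := by rw [h]; omega
    have hx : x % 4 = 0 ∨ x % 4 = 1 ∨ x % 4 = 2 ∨ x % 4 = 3 := by omega
    have hy : y % 4 = 0 ∨ y % 4 = 1 ∨ y % 4 = 2 ∨ y % 4 = 3 := by omega
    rcases hx with hx | hx | hx | hx <;>
    rcases hy with hy | hy | hy | hy <;>
    simp [Int.add_emod, Int.mul_emod, pow_two, hx, hy] at h8 ⊢ <;> omega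
  have h5 : (({p | T p ∧ ¬ p.2 = 0}.ncard : ℕ) : ZMod 2) = 0 := by
    apply even_ncard_of_inv _ flipPair
    · rintro ⟨x, y⟩ ⟨⟨h, hp⟩, h3⟩
      dsimp only at *
      obtain ⟨px, py⟩ := par x y h
      unfold flipPair
      dsimp only
      split_ifs
      · exact ⟨⟨by dsimp only; rw [← h]; ring, by dsimp only; omega⟩, by dsimp only; omega⟩
      · exact ⟨⟨by dsimp only; rw [← h]; ring, by dsimp only; omega⟩, by dsimp only; omega⟩
    · rintro ⟨x, y⟩ ⟨⟨h, hp⟩, h3⟩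
      unfold flipPair
      dsimp only at *
      split_ifs <;> simp_all <;> omega
    · rintro ⟨x, y⟩ ⟨⟨h, hp⟩, h3⟩
      dsimp only at *
      obtain ⟨px, py⟩ := par x y h
      unfold flipPair
      dsimp only
      split_ifs <;> rw [Ne, Prod.mk.injEq] <;> omega
  have h4 : {p | T p ∧ p.2 = 0} = {p : ℤ × ℤ | p.1 ^ 2 = m ∧ 0 < p.1 ∧ p.2 = 0} := by
    ext ⟨x, y⟩
    simp only [hTdef, Set.mem_ofPred_eq]
    constructor
    · rintro ⟨⟨h, hp⟩, rfl⟩; exact ⟨by linarith, by linarith, rfl⟩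
    · rintro ⟨h, hp, rfl⟩; exact ⟨⟨by linarith, by linarith⟩, rfl⟩
  have s1 := ncard_split S (fun p => (p.1 + p.2) % 3 = 0) hfin
  have s2 := ncard_split S (fun p => p.2 % 2 = 0) hfin
  have s3 := ncard_split T (fun p => p.2 = 0) hTfin
  rw [h4, sq_count m (by omega)] at s3
  rw [h1, h1']
  rw [s1, h3, s3] at s2
  have := congrArg (Nat.cast : ℕ → ZMod 2) s2
  push_cast at this
  rw [h2, h5, zero_add, add_zero] at this
  rw [this, add_assoc, CharTwo.add_self_eq_zero, add_zero]

/-- arithmetic-progression section of a power series -/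
noncomputable def sect (p r : ℕ) (B : (ZMod 2)⟦X⟧) : (ZMod 2)⟦X⟧ :=
  PowerSeries.mk fun k => coeff (p * k + r) B

lemma coeff_sect (p r k : ℕ) (B : (ZMod 2)⟦X⟧) : coeff k (sect p r B) = coeff (p * k + r) B := by
  simp [sect]

lemma coeff_expand_mul_sect (p : ℕ) (hp : p ≠ 0) (r : ℕ) (hr : r < p) (A B : (ZMod 2)⟦X⟧) (k : ℕ) :
    coeff (p * k + r) (expand p hp A * B) = coeff k (A * sect p r B) := by
  have hp0 : 0 < p := Nat.pos_of_ne_zero hp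
  rw [coeff_mul, coeff_mul]
  symm
  apply Finset.sum_of_injOn (fun q => (p * q.1, p * q.2 + r))
  · rintro ⟨a, b⟩ _ ⟨c, d⟩ _ h
    simp only [Prod.mk.injEq, add_left_inj] at h
    rw [Prod.mk.injEq]
    exact ⟨Nat.eq_of_mul_eq_mul_left hp0 h.1, Nat.eq_of_mul_eq_mul_left hp0 h.2⟩
  · rintro ⟨a, b⟩ h
    simp only [mem_coe, HasAntidiagonal.mem_antidiagonal] at h ⊢
    rw [← h]; ring
  · rintro ⟨a, b⟩ h h'
    simp only [HasAntidiagonal.mem_antidiagonal] at h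
    dsimp only
    rw [coeff_expand]
    split_ifs with hd
    · exfalso
      apply h'
      obtain ⟨c, rfl⟩ := hd
      have hck : c ≤ k := by
        by_contra hlt
        have : p * (k + 1) ≤ p * c := Nat.mul_le_mul_left _ (by omega)
        rw [mul_add] at this
        omega
      obtain ⟨e, rfl⟩ := Nat.exists_eq_add_of_le hck
      refine ⟨(c, e), by simp, ?_⟩
      simp only [Prod.mk.injEq, true_and]
      rw [mul_add] at h
      omega
    · simp
  · rintro ⟨a, b⟩ _
    dsimp only
    rw [coeff_expand_mul, coeff_sect]

lemma sq_expand (A : (ZMod 2)⟦X⟧) : A ^ 2 = expand 2 two_ne_zero A := by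
  have h := MvPowerSeries.map_frobenius_expand (R := ZMod 2) (σ := Unit) 2 two_ne_zero (f := A)
  rw [← h, ZMod.frobenius_zmod, MvPowerSeries.map_id]
  rfl

/-- Euler function mod 2 -/
noncomputable def FF : (ZMod 2)⟦X⟧ := pentagonalSeries (ZMod 2)

lemma coeff_FF (n : ℕ) : coeff n FF = if IsSquare (24 * n + 1) then 1 else 0 := by
  have key : n ∈ Set.range pentagonal ↔ IsSquare (24 * n + 1) := by
    constructor
    · rintro ⟨k, rfl⟩
      have := two_mul_natCast_pentagonal k
      refine ⟨(6 * k - 1).natAbs, ?_⟩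
      zify
      rw [← sq, sq_abs]
      linear_combination 12 * this
    · rintro ⟨x, hx⟩
      have hx' : (24 * (n : ℤ) + 1) = x * x := by exact_mod_cast hx
      have h6 : x % 6 = 1 ∨ x % 6 = 5 := by
        have h : (x * x) % 6 = 1 := by omega
        have : x % 6 = 0 ∨ x % 6 = 1 ∨ x % 6 = 2 ∨ x % 6 = 3 ∨ x % 6 = 4 ∨ x % 6 = 5 := by omega
        rcases this with h' | h' | h' | h' | h' | h' <;> simp [Nat.mul_mod, h'] at h ⊢
      have : ∃ k : ℤ, (6 * k - 1) ^ 2 = (x : ℤ) * x := by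
        rcases h6 with h | h
        · obtain ⟨t, ht⟩ : ∃ t : ℤ, (x : ℤ) = 6 * t + 1 := ⟨x / 6, by omega⟩
          exact ⟨-t, by rw [ht]; ring⟩
        · obtain ⟨t, ht⟩ : ∃ t : ℤ, (x : ℤ) = 6 * t - 1 := ⟨(x + 1) / 6, by omega⟩
          exact ⟨t, by rw [ht]; ring⟩
      obtain ⟨k, hk⟩ := this
      refine ⟨k, ?_⟩
      have := two_mul_natCast_pentagonal k
      zify
      nlinarith
  have h0 := coeff_pentagonalSeries_eq_zero_iff (R := ZMod 2) (n := n)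
  have h2 : ∀ z : ZMod 2, z ≠ 0 → z = 1 := by decide
  unfold FF
  split_ifs with h
  · apply h2
    rw [Ne, h0]
    exact fun h' => h' (key.2 h)
  · exact h0.2 fun h' => h (key.1 h')

noncomputable def GG : (ZMod 2)⟦X⟧ := FF ^ 3

lemma coeff_GG (n : ℕ) : coeff n GG = if IsSquare (8 * n + 1) then 1 else 0 := by
  have : GG = FF * expand 2 two_ne_zero FF := by rw [← sq_expand, GG]; ring
  rw [this, theta_coeff 24 (by norm_num) FF coeff_FF 2 two_ne_zero n,
    ← theta3_count (8 * n + 1) (by omega)]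
  congr 4
  ext p
  have : 24 * n + 1 + 2 = 3 * (8 * n + 1) := by ring
  rw [this]

noncomputable def F11 : (ZMod 2)⟦X⟧ := expand 11 (by norm_num) FF

lemma F11_def : F11 = expand 11 (by norm_num) FF := rfl

lemma key_coeff (n : ℕ) (hn : n % 2 = 0) :
    coeff n (FF * F11) + coeff n (X * (FF * F11) ^ 3) = if IsSquare (2 * n + 1) then 1 else 0 := by
  rw [← main_count n hn]
  have e1 : (FF * F11) ^ 3 = GG * expand 11 (by norm_num) GG := by
    rw [GG, map_pow, F11]; ring
  rw [e1, F11, theta_coeff 24 (by norm_num) FF coeff_FF 11 (by norm_num) n]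
  congr 1
  · congr 4
    ext p
    have : 24 * n + 1 + 11 = 12 * (2 * n + 1) := by ring
    rw [this]
  · rcases n with _ | n
    · rw [coeff_zero_X_mul]
      symm
      convert Nat.cast_zero
      convert Set.ncard_empty (ℕ × ℕ)
      ext ⟨x, y⟩
      simp only [Set.mem_ofPred_eq, Set.mem_empty_iff_false, iff_false]
      rintro ⟨h1, h2, h3⟩
      omega
    · rw [coeff_succ_X_mul, theta_coeff 8 (by norm_num) GG coeff_GG 11 (by norm_num) n]
      congr 4
      ext p
      have : 8 * n + 1 + 11 = 4 * (2 * (n + 1) + 1) := by ring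
      rw [this]

lemma sect_identity : sect 2 0 (FF * F11) + X * (FF * F11 * sect 2 1 (FF * F11)) = GG ^ 2 := by
  ext m
  have h := key_coeff (2 * m) (by omega)
  have e1 : coeff m (GG ^ 2) = if IsSquare (2 * (2 * m) + 1) then 1 else 0 := by
    rw [sq_expand, coeff_expand]
    by_cases hm : 2 ∣ m
    · obtain ⟨k, rfl⟩ := hm
      rw [if_pos (dvd_mul_right _ _), coeff_GG]
      have : 8 * (2 * k / 2) + 1 = 2 * (2 * (2 * k)) + 1 := by omega
      rw [this]
    · rw [if_neg hm, if_neg]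
      rintro ⟨x, hx⟩
      have h5 : x * x % 8 = 5 := by omega
      have : x % 8 = 0 ∨ x % 8 = 1 ∨ x % 8 = 2 ∨ x % 8 = 3 ∨ x % 8 = 4 ∨ x % 8 = 5 ∨ x % 8 = 6 ∨
        x % 8 = 7 := by omega
      rcases this with h' | h' | h' | h' | h' | h' | h' | h' <;> simp [Nat.mul_mod, h'] at h5
  rw [e1, ← h, map_add, coeff_sect, add_zero]
  congr 1
  rcases m with _ | m
  · simp
  · have : 2 * (m + 1) = (2 * m + 1) + 1 := by ring
    rw [this, coeff_succ_X_mul, coeff_succ_X_mul, pow_succ, sq_expand,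
      coeff_expand_mul_sect 2 two_ne_zero 1 (by norm_num)]

noncomputable def BB : (ZMod 2)⟦X⟧ :=
  PowerSeries.mk fun n => ((numRegularPartitions 11 n : ℕ) : ZMod 2)

open scoped PowerSeries.WithPiTopology in
lemma BB_mul : BB * FF = F11 := by
  let _ : TopologicalSpace (ZMod 2) := ⊥
  have _ : DiscreteTopology (ZMod 2) := ⟨rfl⟩
  have hB : BB = PowerSeries.mk fun n ↦ ((Nat.Partition.countRestricted n 11).card : ZMod 2) := by
    unfold BB
    congr 1
    ext n
    rw [← Nat.Partition.card_restricted_eq_card_countRestricted n (by norm_num), numRegularPartitions,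
      Nat.Partition.restricted, Nat.card_eq_fintype_card, Fintype.card_subtype]
  have h1 := Nat.Partition.hasProd_powerSeriesMk_card_countRestricted (ZMod 2) (m := 11) (by norm_num)
  have h2 := PowerSeries.WithPiTopology.hasProd_one_sub_X_pow (ZMod 2)
  have h3 := h1.mul h2
  rw [← hB] at h3
  have h4 : HasProd (fun i : ℕ => (∑ j ∈ range 11, (X : (ZMod 2)⟦X⟧) ^ ((i + 1) * j)) *
    (1 - X ^ (i + 1))) F11 := by
    have : ∀ i : ℕ, (∑ j ∈ range 11, (X : (ZMod 2)⟦X⟧) ^ ((i + 1) * j)) *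
        (1 - X ^ (i + 1)) = expand 11 (by norm_num) (1 - X ^ (i + 1)) := by
      intro i
      simp_rw [pow_mul]
      rw [geom_sum_mul_neg, map_sub, map_one, map_pow, expand_X, ← pow_mul, ← pow_mul, mul_comm]
    simp_rw [this]
    rw [HasProd, PowerSeries.WithPiTopology.tendsto_iff_coeff_tendsto] at h2 ⊢
    intro d
    simp_rw [← map_prod, F11_def, coeff_expand]
    split_ifs
    · exact h2 _
    · exact tendsto_const_nhds
  exact h3.unique h4

lemma FF_ne : FF ≠ 0 := by
  intro h
  have := coeff_FF 0
  rw [h] at this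
  simp at this

lemma BB_even : sect 2 0 BB = FF ^ 5 + X * (F11 * sect 2 1 (FF * F11)) := by
  apply mul_left_cancel₀ FF_ne
  have h1 : FF * sect 2 0 BB = sect 2 0 (FF * F11) := by
    ext m
    rw [← coeff_expand_mul_sect 2 two_ne_zero 0 (by norm_num), ← sq_expand, coeff_sect, ← BB_mul]
    congr 1
    ring
  have h2 := sect_identity
  have h3 : (FF * X * (F11 * sect 2 1 (FF * F11))) + (FF * X * (F11 * sect 2 1 (FF * F11))) = 0 := by
    ext m
    rw [map_add, CharTwo.add_self_eq_zero, map_zero]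
  rw [h1]
  have h4 : GG ^ 2 = FF ^ 6 := by rw [GG]; ring
  rw [h4] at h2
  linear_combination h2 - h3

lemma sect_FF : sect 11 5 FF = F11 := by
  ext s
  rw [coeff_sect, F11, coeff_expand, coeff_FF]
  by_cases hs : 11 ∣ s
  · obtain ⟨t, rfl⟩ := hs
    rw [if_pos (dvd_mul_right _ _), coeff_FF, Nat.mul_div_cancel_left _ (by norm_num)]
    congr 1
    rw [eq_iff_iff]
    constructor
    · rintro ⟨x, hx⟩
      have hd : 11 ∣ x * x := by omega
      have hd' : 11 ∣ x := by
        rcases (Nat.Prime.dvd_mul (by norm_num : Nat.Prime 11)).1 hd with h | h <;> exact h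
      obtain ⟨y, rfl⟩ := hd'
      exact ⟨y, by nlinarith⟩
    · rintro ⟨x, hx⟩
      exact ⟨11 * x, by nlinarith⟩
  · rw [if_neg hs, if_neg]
    rintro ⟨x, hx⟩
    have hd : 11 ∣ x * x := by omega
    have hd' : 11 ∣ x := by
      rcases (Nat.Prime.dvd_mul (by norm_num : Nat.Prime 11)).1 hd with h | h <;> exact h
    obtain ⟨y, rfl⟩ := hd'
    have : 11 * y * (11 * y) = 121 * (y * y) := by ring
    omega

lemma sect_sect : sect 11 2 (sect 2 1 (FF * F11)) = sect 2 0 (FF * F11) := by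
  ext k
  rw [coeff_sect, coeff_sect, coeff_sect]
  have : 2 * (11 * k + 2) + 1 = 11 * (2 * k) + 5 := by ring
  rw [this, mul_comm FF F11]
  nth_rw 1 [F11]
  rw [coeff_expand_mul_sect 11 (by norm_num) 5 (by norm_num), sect_FF, add_zero, mul_comm FF F11]

lemma coeff_second (k : ℕ) : coeff (11 * k + 3) (X * (F11 * sect 2 1 (FF * F11))) =
    coeff (2 * k) (F11 * GG) := by
  rw [coeff_succ_X_mul]
  nth_rw 1 [F11]
  rw [coeff_expand_mul_sect 11 (by norm_num) 2 (by norm_num), sect_sect,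
    ← coeff_expand_mul_sect 2 two_ne_zero 0 (by norm_num), ← sq_expand, add_zero, GG]
  congr 1
  ring

lemma second_zero (k : ℕ) (hk : k % 11 = 1 ∨ k % 11 = 4 ∨ k % 11 = 8 ∨ k % 11 = 9 ∨ k % 11 = 10) :
    coeff (2 * k) (F11 * GG) = 0 := by
  have h := Nat.div_add_mod (2 * k) 11
  rw [← h, F11, coeff_expand_mul_sect 11 (by norm_num) _ (Nat.mod_lt _ (by norm_num))]
  have : sect 11 (2 * k % 11) GG = 0 := by
    ext c
    rw [coeff_sect, coeff_GG, if_neg, map_zero]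
    rintro ⟨x, hx⟩
    have hx' : x * x % 11 = 6 ∨ x * x % 11 = 10 ∨ x * x % 11 = 8 ∨ x * x % 11 = 2 ∨
      x * x % 11 = 7 := by omega
    have : x % 11 = 0 ∨ x % 11 = 1 ∨ x % 11 = 2 ∨ x % 11 = 3 ∨ x % 11 = 4 ∨ x % 11 = 5 ∨
      x % 11 = 6 ∨ x % 11 = 7 ∨ x % 11 = 8 ∨ x % 11 = 9 ∨ x % 11 = 10 := by omega
    rcases this with h' | h' | h' | h' | h' | h' | h' | h' | h' | h' | h' <;>
      simp [Nat.mul_mod, h'] at hx'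
  rw [this, mul_zero, map_zero]

lemma first_zero (k : ℕ) (hk : k % 11 ≠ 2) : coeff (11 * k + 3) (FF ^ 5) = 0 := by
  have e : FF ^ 5 = FF * expand 4 (by norm_num) FF := by
    have : FF ^ 4 = expand 4 (by norm_num) FF := by
      have h := expand_mul (R := ZMod 2) 2 two_ne_zero 2 two_ne_zero FF
      rw [← sq_expand, ← sq_expand, ← pow_mul] at h
      exact h.symm
    rw [← this]; ring
  rw [e, theta_coeff 24 (by norm_num) FF coeff_FF 4 (by norm_num)]
  convert Nat.cast_zero
  convert Set.ncard_empty (ℕ × ℕ)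
  ext ⟨x, y⟩
  simp only [Set.mem_ofPred_eq, Set.mem_empty_iff_false, iff_false]
  rintro ⟨-, -, h⟩
  have h11 : (x ^ 2 + 4 * y ^ 2) % 11 = 0 := by omega
  have hx : x % 11 = 0 ∨ x % 11 = 1 ∨ x % 11 = 2 ∨ x % 11 = 3 ∨ x % 11 = 4 ∨ x % 11 = 5 ∨
      x % 11 = 6 ∨ x % 11 = 7 ∨ x % 11 = 8 ∨ x % 11 = 9 ∨ x % 11 = 10 := by omega
  have hy : y % 11 = 0 ∨ y % 11 = 1 ∨ y % 11 = 2 ∨ y % 11 = 3 ∨ y % 11 = 4 ∨ y % 11 = 5 ∨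
      y % 11 = 6 ∨ y % 11 = 7 ∨ y % 11 = 8 ∨ y % 11 = 9 ∨ y % 11 = 10 := by omega
  have hxy : x % 11 = 0 ∧ y % 11 = 0 := by
    rcases hx with hx | hx | hx | hx | hx | hx | hx | hx | hx | hx | hx <;>
    rcases hy with hy | hy | hy | hy | hy | hy | hy | hy | hy | hy | hy <;>
    simp [Nat.add_mod, Nat.mul_mod, pow_two, hx, hy] at h11 ⊢
  obtain ⟨u, rfl⟩ := Nat.dvd_of_mod_eq_zero hxy.1
  obtain ⟨v, rfl⟩ := Nat.dvd_of_mod_eq_zero hxy.2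
  have : (11 * u) ^ 2 + 4 * (11 * v) ^ 2 = 121 * (u ^ 2 + 4 * v ^ 2) := by ring
  omega

theorem stmt_12 (n : ℕ) :
    ∀ B ∈ ({28, 94, 182, 204, 226} : Finset ℕ),
      Even (numRegularPartitions 11 (242 * n + B)) := by
  intro B hB
  have hB' : B = 28 ∨ B = 94 ∨ B = 182 ∨ B = 204 ∨ B = 226 := by simpa using hB
  obtain ⟨k, hk, hkm⟩ : ∃ k, 242 * n + B = 2 * (11 * k + 3) + 0 ∧
      (k % 11 = 1 ∨ k % 11 = 4 ∨ k % 11 = 8 ∨ k % 11 = 9 ∨ k % 11 = 10) :=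
    ⟨(242 * n + B - 6) / 22, by omega, by omega⟩
  have h := congrArg (coeff (11 * k + 3)) BB_even
  rw [map_add, coeff_second, second_zero k hkm, first_zero k (by omega), coeff_sect, ← hk, BB,
    coeff_mk, add_zero] at h
  exact (ZMod.natCast_eq_zero_iff_even).1 h
end
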